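/- arXiv:1711.02504 — 3 statements merged into one kernel-verified Lean document; each statement's English description precedes it below -/
import Mathlib

section
/- Let (p_n) be a sequence of integers with p_n ≥ 2 for all n and p_n → ∞, let (κ_n) be a sequence in (0,∞), and for each n let θ_{n0} be a unit vector in ℝ^{p_n}. For each n let X_{n1},…,X_{nn} be i.i.d. with distribution FvML_{p_n}(θ_{n0},κ_n), and define X̄_n := (1/n) Σ_{i=1}^{n} X_{ni}, the Watson statistic W_n := n(p_n−1) X̄_n'(I − θ_{n0}θ_{n0}')X̄_n / (1 − (1/n) Σ_{i=1}^{n} (X_{ni}'θ_{n0})²), W̃_n := (W_n − (p_n−1))/√(2(p_n−1)), and Z_n := √n (X̄_n'θ_{n0} − e₁(p_n,κ_n))/√(ẽ₂(p_n,κ_n)). Then the law of the pair (W̃_n, Z_n) ∈ ℝ² under the n-fold product of FvML_{p_n}(θ_{n0},κ_n) converges weakly, as n → ∞, to the standard bivariate normal distribution (the product of two standard Gaussian measures on ℝ). -/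
open MeasureTheory Metric intervalIntegral Filter ProbabilityTheory
open scoped RealInnerProductSpace

/-- The surface-area measure on the unit sphere of `ℝ^p`. -/
noncomputable def sphereSurface (p : ℕ) :
    Measure (sphere (0 : EuclideanSpace ℝ (Fin p)) 1) :=
  (volume : Measure (EuclideanSpace ℝ (Fin p))).toSphere

/-- The Fisher–von Mises–Langevin distribution `FvML_p(θ,κ)`: the probability measure on
the unit sphere with density `x ↦ exp(κ x'θ) / ∫ exp(κ y'θ) dσ(y)` with respect to the
surface-area measure `σ`. -/
noncomputable def fvml (p : ℕ) (θ : EuclideanSpace ℝ (Fin p)) (κ : ℝ) :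
    Measure (sphere (0 : EuclideanSpace ℝ (Fin p)) 1) :=
  (sphereSurface p).withDensity fun x =>
    ENNReal.ofReal (Real.exp (κ * ⟪(x : EuclideanSpace ℝ (Fin p)), θ⟫) /
      ∫ y : sphere (0 : EuclideanSpace ℝ (Fin p)) 1,
        Real.exp (κ * ⟪(y : EuclideanSpace ℝ (Fin p)), θ⟫) ∂(sphereSurface p))

/-- `mInt p κ ℓ = ∫_{-1}^1 u^ℓ (1-u²)^{(p-3)/2} exp(κ u) du`. -/
noncomputable def mInt (p : ℕ) (κ : ℝ) (ℓ : ℕ) : ℝ :=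
  ∫ u in (-1 : ℝ)..1, u ^ ℓ * (1 - u ^ 2) ^ (((p : ℝ) - 3) / 2) * Real.exp (κ * u)

/-- `e₁(p,κ) = E[U]` under `FvML_p(θ,κ)`. -/
noncomputable def e1 (p : ℕ) (κ : ℝ) : ℝ := mInt p κ 1 / mInt p κ 0

/-- `e₂(p,κ) = E[U²]` under `FvML_p(θ,κ)`. -/
noncomputable def e2 (p : ℕ) (κ : ℝ) : ℝ := mInt p κ 2 / mInt p κ 0

/-- `ẽ₂(p,κ) = Var[U]` under `FvML_p(θ,κ)`. -/
noncomputable def etilde2 (p : ℕ) (κ : ℝ) : ℝ := e2 p κ - (e1 p κ) ^ 2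

/-- Moments of a continuous log-concave density on `[0, L]` satisfy `M_{k+1} M_0 ≤ (k+1) M_k M_1`. -/
lemma integral_pow_succ_mul_le_of_logConcave {f : ℝ → ℝ} {L : ℝ} (hL : 0 ≤ L)
    (hf : Continuous f) (hf0 : ∀ x, 0 ≤ f x)
    (hlc : ∀ x y s, y ≤ x → 0 ≤ s → f (x + s) * f y ≤ f x * f (y + s)) (k : ℕ) :
    (∫ x in (0 : ℝ)..L, x ^ (k + 1) * f x) * (∫ x in (0 : ℝ)..L, f x) ≤
      (k + 1) * (∫ x in (0 : ℝ)..L, x ^ k * f x) * ∫ x in (0 : ℝ)..L, x * f x := by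
  set T : ℝ → ℝ := fun x => ∫ t in x..L, f t with hT
  have hTd : ∀ x, HasDerivAt T (-f x) x := fun x =>
    integral_hasDerivAt_left (hf.intervalIntegrable _ _)
      hf.stronglyMeasurable.stronglyMeasurableAtFilter hf.continuousAt
  have hTc : Continuous T := continuous_iff_continuousAt.2 fun x => (hTd x).continuousAt
  have hparts : ∀ j : ℕ, ∫ x in (0 : ℝ)..L, x ^ (j + 1) * f x =
      (j + 1) * ∫ x in (0 : ℝ)..L, x ^ j * T x := by
    intro j
    have h := integral_mul_deriv_eq_deriv_mul (a := 0) (b := L)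
      (u := fun x : ℝ => x ^ (j + 1)) (u' := fun x => ((j + 1 : ℕ) : ℝ) * x ^ j)
      (v := T) (v' := fun x => -f x)
      (fun x _ => by simpa using hasDerivAt_pow (j + 1) x) (fun x _ => hTd x)
      ((by fun_prop : Continuous fun x : ℝ => ((j + 1 : ℕ) : ℝ) * x ^ j).intervalIntegrable _ _)
      (hf.neg.intervalIntegrable _ _)
    have hTL : T L = 0 := by simp [hT]
    simp only [mul_neg, intervalIntegral.integral_neg, hTL, mul_zero, ne_eq, Nat.succ_ne_zero,
      not_false_eq_true, zero_pow, zero_mul, sub_zero, zero_sub, neg_inj, mul_assoc,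
      intervalIntegral.integral_const_mul] at h
    rw [h]; push_cast; ring
  have hcmp : ∀ x y, y ≤ x → x ≤ L → T x * f y ≤ f x * T y := by
    intro x y hyx hxL
    have h1 : T x = ∫ s in (0 : ℝ)..(L - x), f (x + s) := by
      rw [intervalIntegral.integral_comp_add_left]; simp [hT]
    have h2 : ∫ s in (0 : ℝ)..(L - x), f (y + s) ≤ T y := by
      rw [intervalIntegral.integral_comp_add_left, hT]
      exact integral_mono_interval (by simp) (by linarith) (by linarith)
        (ae_of_all _ hf0) (hf.intervalIntegrable _ _)
    calc T x * f y = ∫ s in (0 : ℝ)..(L - x), f (x + s) * f y := by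
          rw [h1, intervalIntegral.integral_mul_const]
      _ ≤ ∫ s in (0 : ℝ)..(L - x), f x * f (y + s) :=
          integral_mono_on (by linarith) (Continuous.intervalIntegrable (by fun_prop) _ _)
            (Continuous.intervalIntegrable (by fun_prop) _ _) fun s hs => hlc x y s hyx hs.1
      _ ≤ f x * T y := by
          rw [intervalIntegral.integral_const_mul]
          exact mul_le_mul_of_nonneg_left h2 (hf0 x)
  have hpos : 0 ≤ ∫ x in (0 : ℝ)..L, ∫ y in (0 : ℝ)..L,
      (x ^ k - y ^ k) * (f x * T y - T x * f y) := by
    refine integral_nonneg hL fun x hx => integral_nonneg hL fun y hy => ?_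
    rcases le_total y x with h | h
    · exact mul_nonneg (sub_nonneg.2 (pow_le_pow_left₀ hy.1 h k))
        (sub_nonneg.2 (hcmp x y h hx.2))
    · refine mul_nonneg_of_nonpos_of_nonpos (sub_nonpos.2 (pow_le_pow_left₀ hx.1 h k)) ?_
      have := hcmp y x h hy.2
      linarith
  have hexp : ∫ x in (0 : ℝ)..L, ∫ y in (0 : ℝ)..L,
      (x ^ k - y ^ k) * (f x * T y - T x * f y) =
      2 * ((∫ x in (0 : ℝ)..L, x ^ k * f x) * (∫ x in (0 : ℝ)..L, T x) -
        (∫ x in (0 : ℝ)..L, x ^ k * T x) * ∫ x in (0 : ℝ)..L, f x) := by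
    have hin : ∀ x, ∫ y in (0 : ℝ)..L, (x ^ k - y ^ k) * (f x * T y - T x * f y) =
        x ^ k * f x * (∫ y in (0 : ℝ)..L, T y) - x ^ k * T x * (∫ y in (0 : ℝ)..L, f y)
        - f x * (∫ y in (0 : ℝ)..L, y ^ k * T y) + T x * ∫ y in (0 : ℝ)..L, y ^ k * f y := by
      intro x
      simp only [← intervalIntegral.integral_const_mul]
      rw [← intervalIntegral.integral_sub, ← intervalIntegral.integral_sub, ← intervalIntegral.integral_add]
      · congr 1; ext y; ring
      all_goals exact Continuous.intervalIntegrable (by fun_prop) _ _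
    simp only [hin]
    rw [intervalIntegral.integral_add, intervalIntegral.integral_sub, intervalIntegral.integral_sub]
    · simp only [intervalIntegral.integral_mul_const]; ring
    all_goals exact Continuous.intervalIntegrable (by fun_prop) _ _
  have h0 := hparts 0
  simp only [zero_add, pow_one, Nat.cast_zero, pow_zero, one_mul] at h0
  rw [hparts k, h0]
  have hk : (0 : ℝ) ≤ k + 1 := by positivity
  rw [hexp] at hpos
  nlinarith

/-- A reverse Hölder inequality for log-concave densities on `[0, L]`. -/
lemma integral_pow_four_mul_le_of_logConcave {f : ℝ → ℝ} {L : ℝ} (hL : 0 ≤ L)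
    (hf : Continuous f) (hf0 : ∀ x, 0 ≤ f x)
    (hlc : ∀ x y s, y ≤ x → 0 ≤ s → f (x + s) * f y ≤ f x * f (y + s))
    (hpos : 0 < ∫ x in (0 : ℝ)..L, f x) :
    (∫ x in (0 : ℝ)..L, x ^ 4 * f x) * (∫ x in (0 : ℝ)..L, f x) ≤
      12 * (∫ x in (0 : ℝ)..L, x ^ 2 * f x) ^ 2 := by
  have h3 := integral_pow_succ_mul_le_of_logConcave hL hf hf0 hlc 3
  have h2 := integral_pow_succ_mul_le_of_logConcave hL hf hf0 hlc 2
  norm_num at h3 h2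
  have nn : ∀ k : ℕ, 0 ≤ ∫ x in (0 : ℝ)..L, x ^ k * f x := fun k =>
    integral_nonneg hL fun x hx => mul_nonneg (pow_nonneg hx.1 k) (hf0 x)
  have n1 := nn 1
  have n2 := nn 2
  simp only [pow_one] at n1
  set M0 := ∫ x in (0 : ℝ)..L, f x
  set M1 := ∫ x in (0 : ℝ)..L, x * f x with hM1
  set M2 := ∫ x in (0 : ℝ)..L, x ^ 2 * f x with hM2
  set M3 := ∫ x in (0 : ℝ)..L, x ^ 3 * f x
  set M4 := ∫ x in (0 : ℝ)..L, x ^ 4 * f x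
  have hcs : M1 ^ 2 ≤ M0 * M2 := by
    have h : 0 ≤ ∫ x in (0 : ℝ)..L, (x * M0 - M1) ^ 2 * f x :=
      integral_nonneg hL fun x _ => mul_nonneg (sq_nonneg _) (hf0 x)
    have e : ∫ x in (0 : ℝ)..L, (x * M0 - M1) ^ 2 * f x =
        M0 ^ 2 * M2 - 2 * M0 * M1 * M1 + M1 ^ 2 * M0 := by
      rw [hM2]
      conv_rhs => rw [show 2 * M0 * M1 * M1 = (2 * M0 * M1) * ∫ x in (0 : ℝ)..L, x * f x from rfl]
      simp only [← intervalIntegral.integral_const_mul, show M1 ^ 2 * M0 = ∫ x in (0 : ℝ)..L,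
        M1 ^ 2 * f x from (intervalIntegral.integral_const_mul _ _).symm]
      rw [← intervalIntegral.integral_sub, ← intervalIntegral.integral_add]
      · congr 1; ext x; ring
      all_goals exact Continuous.intervalIntegrable (by fun_prop) _ _
    rw [e] at h
    have : 0 ≤ M0 * (M0 * M2 - M1 ^ 2) := by nlinarith
    linarith [nonneg_of_mul_nonneg_right this hpos]
  have h5 : M4 * M0 * M0 ≤ 12 * M2 ^ 2 * M0 := by
    calc M4 * M0 * M0 ≤ (3 + 1) * M3 * M1 * M0 := mul_le_mul_of_nonneg_right (by linarith) hpos.le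
      _ = 4 * M1 * (M3 * M0) := by ring
      _ ≤ 4 * M1 * ((2 + 1) * M2 * M1) := mul_le_mul_of_nonneg_left (by linarith) (by positivity)
      _ = 12 * M2 * M1 ^ 2 := by ring
      _ ≤ 12 * M2 * (M0 * M2) := mul_le_mul_of_nonneg_left hcs (by positivity)
      _ = 12 * M2 ^ 2 * M0 := by ring
  exact le_of_mul_le_mul_right h5 hpos

/-- The kurtosis of a continuous log-concave density on `[a, b]` is bounded by a universal
constant. -/
lemma integral_sub_pow_four_mul_le_of_logConcave {w : ℝ → ℝ} {a b e : ℝ} (hab : a ≤ b)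
    (hw : Continuous w) (hw0 : ∀ x, 0 ≤ w x)
    (hlc : ∀ x y s, y ≤ x → 0 ≤ s → w (x + s) * w y ≤ w x * w (y + s))
    (hpos : 0 < ∫ x in a..b, w x)
    (he : ∫ x in a..b, (x - e) * w x = 0) :
    (∫ x in a..b, (x - e) ^ 4 * w x) * (∫ x in a..b, w x) ≤
      1760 * (∫ x in a..b, (x - e) ^ 2 * w x) ^ 2 := by
  have ii : ∀ {g : ℝ → ℝ} (_ : Continuous g) (s t : ℝ), IntervalIntegrable g volume s t :=
    fun hg s t => hg.intervalIntegrable s t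
  set M := ∫ x in a..b, w x with hM
  obtain ⟨c, hc, hcM⟩ : ∃ c ∈ Set.Icc a b, ∫ x in a..c, w x = M / 2 := by
    have hcont : ContinuousOn (fun c => ∫ x in a..c, w x) (Set.Icc a b) :=
      (intervalIntegral.continuous_primitive (fun s t => ii hw s t) a).continuousOn
    have := intermediate_value_Icc hab hcont
    simp only [integral_same] at this
    obtain ⟨c, hc, h⟩ := this (show M / 2 ∈ _ from ⟨by positivity, by linarith⟩)
    exact ⟨c, hc, h⟩
  have hcM' : ∫ x in c..b, w x = M / 2 := by
    have := integral_add_adjacent_intervals (ii hw a c) (ii hw c b)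
    linarith
  have hR : (∫ x in c..b, (x - c) ^ 4 * w x) * (M / 2) ≤
      12 * (∫ x in c..b, (x - c) ^ 2 * w x) ^ 2 := by
    have key : ∀ k : ℕ, ∫ x in c..b, (x - c) ^ k * w x =
        ∫ x in (0 : ℝ)..(b - c), x ^ k * w (c + x) := by
      intro k
      have := intervalIntegral.integral_comp_add_left (a := 0) (b := b - c)
        (fun x => (x - c) ^ k * w x) c
      simpa using this.symm
    have k0 := key 0
    simp only [pow_zero, one_mul] at k0
    have := integral_pow_four_mul_le_of_logConcave (f := fun x => w (c + x)) (L := b - c)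
      (by linarith [hc.2]) (by fun_prop) (fun x => hw0 _)
      (fun x y s hyx hs => by
        simpa [add_assoc] using hlc (c + x) (c + y) s (by linarith) hs)
      (by rw [← k0, hcM']; positivity)
    rwa [← key, ← key, ← k0, hcM'] at this
  have hL : (∫ x in a..c, (x - c) ^ 4 * w x) * (M / 2) ≤
      12 * (∫ x in a..c, (x - c) ^ 2 * w x) ^ 2 := by
    have key : ∀ k : ℕ, Even k → ∫ x in a..c, (x - c) ^ k * w x =
        ∫ x in (0 : ℝ)..(c - a), x ^ k * w (c - x) := by
      intro k hk
      have := intervalIntegral.integral_comp_sub_left (a := 0) (b := c - a)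
        (fun x => (x - c) ^ k * w x) c
      simpa [hk.neg_pow] using this.symm
    have k0 := key 0 (by simp)
    simp only [pow_zero, one_mul] at k0
    have := integral_pow_four_mul_le_of_logConcave (f := fun x => w (c - x)) (L := c - a)
      (by linarith [hc.1]) (by fun_prop) (fun x => hw0 _)
      (fun x y s hyx hs => by
        have := hlc (c - y - s) (c - x - s) s (by linarith) hs
        rw [show c - y - s + s = c - y by ring, show c - x - s + s = c - x by ring] at this
        rw [show c - (x + s) = c - x - s by ring, show c - (y + s) = c - y - s by ring]
        linarith)
      (by rw [← k0, hcM]; positivity)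
    rwa [← key 4 (by decide), ← key 2 (by decide), ← k0, hcM] at this
  have hT : ∀ k : ℕ, ∫ x in a..b, (x - c) ^ k * w x =
      (∫ x in a..c, (x - c) ^ k * w x) + ∫ x in c..b, (x - c) ^ k * w x := fun k =>
    (integral_add_adjacent_intervals (ii (by fun_prop) a c) (ii (by fun_prop) c b)).symm
  have hLn : 0 ≤ ∫ x in a..c, (x - c) ^ 2 * w x :=
    integral_nonneg hc.1 fun x _ => mul_nonneg (sq_nonneg _) (hw0 x)
  have hRn : 0 ≤ ∫ x in c..b, (x - c) ^ 2 * w x :=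
    integral_nonneg hc.2 fun x _ => mul_nonneg (sq_nonneg _) (hw0 x)
  set S := ∫ x in a..b, (x - e) ^ 2 * w x with hS
  have hS0 : 0 ≤ S := integral_nonneg hab fun x _ => mul_nonneg (sq_nonneg _) (hw0 x)
  have hT2 : ∫ x in a..b, (x - c) ^ 2 * w x = S + (c - e) ^ 2 * M := by
    have e1 : ∫ x in a..b, (x - c) ^ 2 * w x =
        S - (2 * (c - e)) * (∫ x in a..b, (x - e) * w x) + (c - e) ^ 2 * M := by
      rw [hS, hM, ← intervalIntegral.integral_const_mul, ← intervalIntegral.integral_const_mul,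
        ← intervalIntegral.integral_sub, ← intervalIntegral.integral_add]
      · congr 1; ext x; ring
      all_goals exact ii (by fun_prop) _ _
    rw [e1, he]; ring
  have hmed : (c - e) ^ 2 * M ≤ 2 * S := by
    have hSs : S = (∫ x in a..c, (x - e) ^ 2 * w x) + ∫ x in c..b, (x - e) ^ 2 * w x :=
      (integral_add_adjacent_intervals (ii (by fun_prop) a c) (ii (by fun_prop) c b)).symm
    have p1 : 0 ≤ ∫ x in a..c, (x - e) ^ 2 * w x :=
      integral_nonneg hc.1 fun x _ => mul_nonneg (sq_nonneg _) (hw0 x)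
    have p2 : 0 ≤ ∫ x in c..b, (x - e) ^ 2 * w x :=
      integral_nonneg hc.2 fun x _ => mul_nonneg (sq_nonneg _) (hw0 x)
    rcases le_total e c with h | h
    · have : ∫ x in c..b, (c - e) ^ 2 * w x ≤ ∫ x in c..b, (x - e) ^ 2 * w x :=
        integral_mono_on hc.2 (ii (by fun_prop) _ _) (ii (by fun_prop) _ _) fun x hx =>
          mul_le_mul_of_nonneg_right (by nlinarith [hx.1]) (hw0 x)
      rw [intervalIntegral.integral_const_mul, hcM'] at this
      linarith
    · have : ∫ x in a..c, (c - e) ^ 2 * w x ≤ ∫ x in a..c, (x - e) ^ 2 * w x :=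
        integral_mono_on hc.1 (ii (by fun_prop) _ _) (ii (by fun_prop) _ _) fun x hx =>
          mul_le_mul_of_nonneg_right (by nlinarith [hx.2]) (hw0 x)
      rw [intervalIntegral.integral_const_mul, hcM] at this
      linarith
  have hT4 : (∫ x in a..b, (x - c) ^ 4 * w x) * M ≤ 216 * S ^ 2 := by
    have h2 := hT 2
    rw [hT2] at h2
    rw [hT 4]
    nlinarith [mul_nonneg hLn hRn]
  have hfin : ∫ x in a..b, (x - e) ^ 4 * w x ≤
      8 * (∫ x in a..b, (x - c) ^ 4 * w x) + 8 * (c - e) ^ 4 * M := by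
    rw [hM, ← intervalIntegral.integral_const_mul, ← intervalIntegral.integral_const_mul,
      ← intervalIntegral.integral_add (ii (by fun_prop) _ _) (ii (by fun_prop) _ _)]
    refine integral_mono_on hab (ii (by fun_prop) _ _) (ii (by fun_prop) _ _) fun x _ => ?_
    have h1 : (x - e) ^ 4 ≤ 8 * (x - c) ^ 4 + 8 * (c - e) ^ 4 := by
      have : x - e = (x - c) + (c - e) := by ring
      rw [this]
      generalize x - c = y; generalize c - e = z
      nlinarith [sq_nonneg (y ^ 2 - z ^ 2), sq_nonneg (y - z), sq_nonneg ((y - z) * (y + z)),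
        sq_nonneg ((y - z) * y), sq_nonneg ((y - z) * z), sq_nonneg ((y-z)^2)]
    nlinarith [mul_le_mul_of_nonneg_right h1 (hw0 x)]
  have hq : (c - e) ^ 4 * M * M ≤ 4 * S ^ 2 := by
    have : 0 ≤ (c - e) ^ 2 * M := by positivity
    nlinarith
  nlinarith [mul_le_mul_of_nonneg_right hfin hpos.le]

/-- The (unnormalised) density of `⟪x, θ⟫` under `FvML_p(θ,κ)`, extended by zero outside `[-1, 1]`. -/
noncomputable def fvmlWeight (p : ℕ) (κ u : ℝ) : ℝ :=
  (max (1 - u ^ 2) 0) ^ (((p : ℝ) - 3) / 2) * Real.exp (κ * u)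

lemma fvmlWeight_nonneg (p : ℕ) (κ u : ℝ) : 0 ≤ fvmlWeight p κ u := by
  unfold fvmlWeight; positivity

lemma fvmlWeight_pos (p : ℕ) (κ : ℝ) {u : ℝ} (hu : u ∈ Set.Ioo (-1 : ℝ) 1) :
    0 < fvmlWeight p κ u := by
  have : 0 < 1 - u ^ 2 := by nlinarith [hu.1, hu.2]
  unfold fvmlWeight
  rw [max_eq_left this.le]; positivity

lemma continuous_fvmlWeight {p : ℕ} (hp : 4 ≤ p) (κ : ℝ) : Continuous (fvmlWeight p κ) := by
  have h4 : (4 : ℝ) ≤ p := by exact_mod_cast hp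
  unfold fvmlWeight
  exact ((by fun_prop : Continuous fun u : ℝ => max (1 - u ^ 2) 0).rpow_const
    (fun _ => Or.inr (by linarith))).mul (by fun_prop)

lemma fvmlWeight_logConcave {p : ℕ} (hp : 4 ≤ p) (κ x y s : ℝ) (hyx : y ≤ x) (hs : 0 ≤ s) :
    fvmlWeight p κ (x + s) * fvmlWeight p κ y ≤ fvmlWeight p κ x * fvmlWeight p κ (y + s) := by
  have h4 : (4 : ℝ) ≤ p := by exact_mod_cast hp
  have hbase : max (1 - (x + s) ^ 2) 0 * max (1 - y ^ 2) 0 ≤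
      max (1 - x ^ 2) 0 * max (1 - (y + s) ^ 2) 0 := by
    by_cases h1 : 1 ≤ x + s
    · rw [max_eq_right (a := 1 - (x + s) ^ 2) (by nlinarith)]; simp; positivity
    by_cases h2 : y ≤ -1
    · rw [max_eq_right (a := 1 - y ^ 2) (by nlinarith)]; simp; positivity
    push Not at h1 h2
    rw [max_eq_left (a := 1 - (x + s) ^ 2) (by nlinarith), max_eq_left (a := 1 - y ^ 2) (by nlinarith),
      max_eq_left (a := 1 - x ^ 2) (by nlinarith), max_eq_left (a := 1 - (y + s) ^ 2) (by nlinarith)]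
    have key : 0 ≤ 2 + x * (y + s) + y * (x + s) := by
      have a1 : -1 ≤ x * (y + s) := by
        have : |x| * |y + s| ≤ 1 := mul_le_one₀ (abs_le.2 ⟨by linarith, by linarith⟩)
          (abs_nonneg _) (abs_le.2 ⟨by linarith, by linarith⟩)
        rw [← abs_mul] at this
        exact (abs_le.1 this).1
      have a2 : -1 ≤ y * (x + s) := by
        have : |y| * |x + s| ≤ 1 := mul_le_one₀ (abs_le.2 ⟨by linarith, by linarith⟩)
          (abs_nonneg _) (abs_le.2 ⟨by linarith, by linarith⟩)
        rw [← abs_mul] at this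
        exact (abs_le.1 this).1
      linarith
    nlinarith [mul_nonneg (mul_nonneg hs (sub_nonneg.2 hyx)) key]
  have hpow := Real.rpow_le_rpow (by positivity) hbase
    (show (0 : ℝ) ≤ ((p : ℝ) - 3) / 2 by linarith)
  rw [Real.mul_rpow (by positivity) (by positivity),
    Real.mul_rpow (by positivity) (by positivity)] at hpow
  unfold fvmlWeight
  have he : Real.exp (κ * (x + s)) * Real.exp (κ * y) =
      Real.exp (κ * x) * Real.exp (κ * (y + s)) := by
    rw [← Real.exp_add, ← Real.exp_add]; ring_nf
  calc _ = ((max (1 - (x + s) ^ 2) 0) ^ (((p : ℝ) - 3) / 2) *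
        (max (1 - y ^ 2) 0) ^ (((p : ℝ) - 3) / 2)) *
        (Real.exp (κ * (x + s)) * Real.exp (κ * y)) := by ring
    _ ≤ ((max (1 - x ^ 2) 0) ^ (((p : ℝ) - 3) / 2) *
        (max (1 - (y + s) ^ 2) 0) ^ (((p : ℝ) - 3) / 2)) *
        (Real.exp (κ * (x + s)) * Real.exp (κ * y)) :=
          mul_le_mul_of_nonneg_right hpow (by positivity)
    _ = _ := by rw [he]; ring

lemma mInt_eq_integral_fvmlWeight (p : ℕ) (κ : ℝ) (l : ℕ) :
    mInt p κ l = ∫ u in (-1 : ℝ)..1, u ^ l * fvmlWeight p κ u := by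
  unfold mInt fvmlWeight
  refine integral_congr fun u hu => ?_
  rw [Set.uIcc_of_le (by norm_num)] at hu
  rw [max_eq_left (by nlinarith [hu.1, hu.2])]; ring

lemma mInt_zero_pos {p : ℕ} (hp : 4 ≤ p) (κ : ℝ) : 0 < mInt p κ 0 := by
  rw [mInt_eq_integral_fvmlWeight]
  simp only [pow_zero, one_mul]
  exact intervalIntegral_pos_of_pos_on ((continuous_fvmlWeight hp κ).intervalIntegrable _ _)
    (fun u hu => fvmlWeight_pos p κ hu) (by norm_num)

lemma integral_sub_e1_mul_fvmlWeight {p : ℕ} (hp : 4 ≤ p) (κ : ℝ) :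
    ∫ u in (-1 : ℝ)..1, (u - e1 p κ) * fvmlWeight p κ u = 0 := by
  have hc := continuous_fvmlWeight hp κ
  have h0 := mInt_zero_pos hp κ
  have : ∫ u in (-1 : ℝ)..1, (u - e1 p κ) * fvmlWeight p κ u =
      mInt p κ 1 - e1 p κ * mInt p κ 0 := by
    rw [mInt_eq_integral_fvmlWeight, mInt_eq_integral_fvmlWeight,
      ← intervalIntegral.integral_const_mul, ← intervalIntegral.integral_sub]
    · congr 1; ext u; ring
    all_goals exact Continuous.intervalIntegrable (by fun_prop) _ _
  rw [this, e1, div_mul_cancel₀ _ h0.ne', sub_self]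

lemma integral_sub_e1_sq_mul_fvmlWeight {p : ℕ} (hp : 4 ≤ p) (κ : ℝ) :
    ∫ u in (-1 : ℝ)..1, (u - e1 p κ) ^ 2 * fvmlWeight p κ u = etilde2 p κ * mInt p κ 0 := by
  have hc := continuous_fvmlWeight hp κ
  have h0 := mInt_zero_pos hp κ
  have : ∫ u in (-1 : ℝ)..1, (u - e1 p κ) ^ 2 * fvmlWeight p κ u =
      mInt p κ 2 - (2 * e1 p κ) * mInt p κ 1 + e1 p κ ^ 2 * mInt p κ 0 := by
    simp only [mInt_eq_integral_fvmlWeight]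
    rw [← intervalIntegral.integral_const_mul, ← intervalIntegral.integral_const_mul,
      ← intervalIntegral.integral_sub, ← intervalIntegral.integral_add]
    · congr 1; ext u; ring
    all_goals exact Continuous.intervalIntegrable (by fun_prop) _ _
  rw [this, etilde2, e2, e1]
  field_simp; ring

lemma etilde2_pos {p : ℕ} (hp : 4 ≤ p) (κ : ℝ) : 0 < etilde2 p κ := by
  have hc := continuous_fvmlWeight hp κ
  have h0 := mInt_zero_pos hp κ
  have h := integral_sub_e1_sq_mul_fvmlWeight hp κ
  have hpos : 0 < ∫ u in (-1 : ℝ)..1, (u - e1 p κ) ^ 2 * fvmlWeight p κ u := by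
    obtain ⟨c, hc1, hce⟩ : ∃ c ∈ Set.Ioo (-1 : ℝ) 1, c ≠ e1 p κ := by
      by_cases h : e1 p κ = 0
      · exact ⟨1 / 2, by norm_num, by rw [h]; norm_num⟩
      · exact ⟨0, by norm_num, fun h' => h h'.symm⟩
    refine integral_pos (by norm_num) (by fun_prop) (fun u _ =>
      mul_nonneg (sq_nonneg _) (fvmlWeight_nonneg _ _ _)) ⟨c, Set.Ioo_subset_Icc_self hc1, ?_⟩
    exact mul_pos (by have := sub_ne_zero.2 hce; positivity) (fvmlWeight_pos _ _ hc1)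
  rw [h] at hpos
  exact pos_of_mul_pos_left hpos h0.le

lemma integral_sub_e1_pow_four_mul_fvmlWeight_le {p : ℕ} (hp : 4 ≤ p) (κ : ℝ) :
    ∫ u in (-1 : ℝ)..1, (u - e1 p κ) ^ 4 * fvmlWeight p κ u ≤
      1760 * etilde2 p κ ^ 2 * mInt p κ 0 := by
  have h0 := mInt_zero_pos hp κ
  have hM : mInt p κ 0 = ∫ u in (-1 : ℝ)..1, fvmlWeight p κ u := by
    simp [mInt_eq_integral_fvmlWeight]
  have := integral_sub_pow_four_mul_le_of_logConcave (by norm_num) (continuous_fvmlWeight hp κ)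
    (fvmlWeight_nonneg p κ) (fvmlWeight_logConcave hp κ) (hM ▸ h0)
    (integral_sub_e1_mul_fvmlWeight hp κ)
  rw [← hM, integral_sub_e1_sq_mul_fvmlWeight hp κ] at this
  refine le_of_mul_le_mul_right (this.trans_eq ?_) h0
  ring

/-- Stein-type identity obtained by integrating the derivative of `(1 - u²)^a exp (κ u)`. -/
lemma integral_deriv_one_sub_sq_rpow_mul_exp {a : ℝ} (ha : 1 < a) (κ : ℝ) :
    2 * a * ∫ u in (-1 : ℝ)..1, u * (1 - u ^ 2) ^ (a - 1) * Real.exp (κ * u) =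
      κ * ∫ u in (-1 : ℝ)..1, (1 - u ^ 2) ^ a * Real.exp (κ * u) := by
  have c1 : Continuous fun u : ℝ => (1 - u ^ 2) ^ (a - 1) :=
    Continuous.rpow_const (by fun_prop) fun _ => Or.inr (by linarith)
  have c2 : Continuous fun u : ℝ => (1 - u ^ 2) ^ a :=
    Continuous.rpow_const (by fun_prop) fun _ => Or.inr (by linarith)
  have hd : ∀ u ∈ Set.uIcc (-1 : ℝ) 1, HasDerivAt (fun u : ℝ => (1 - u ^ 2) ^ a * Real.exp (κ * u))
      (κ * ((1 - u ^ 2) ^ a * Real.exp (κ * u)) -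
        2 * a * (u * (1 - u ^ 2) ^ (a - 1) * Real.exp (κ * u))) u := by
    intro u _
    have h1 : HasDerivAt (fun u : ℝ => 1 - u ^ 2) (-(2 * u)) u := by
      simpa using (hasDerivAt_pow 2 u).const_sub 1
    have h2 := h1.rpow_const (p := a) (Or.inr ha.le)
    have h3 : HasDerivAt (fun u : ℝ => Real.exp (κ * u)) (Real.exp (κ * u) * κ) u := by
      simpa using ((hasDerivAt_id u).const_mul κ).exp
    exact (h2.mul h3).congr_deriv (by ring)
  have := integral_eq_sub_of_hasDerivAt hd (Continuous.intervalIntegrable (by fun_prop) _ _)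
  rw [intervalIntegral.integral_sub (Continuous.intervalIntegrable (by fun_prop) _ _)
      (Continuous.intervalIntegrable (by fun_prop) _ _), intervalIntegral.integral_const_mul,
      intervalIntegral.integral_const_mul] at this
  norm_num [Real.zero_rpow (by linarith : a ≠ 0)] at this
  linarith

/-- Under the weight, `u` and `1 - u²` are negatively correlated. -/
lemma integral_mul_one_sub_sq_mul_fvmlWeight_le {p : ℕ} (hp : 4 ≤ p) {κ : ℝ} (hκ : 0 ≤ κ) :
    (∫ u in (-1 : ℝ)..1, u * (1 - u ^ 2) * fvmlWeight p κ u) * mInt p κ 0 ≤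
      (∫ u in (-1 : ℝ)..1, u * fvmlWeight p κ u) *
        ∫ u in (-1 : ℝ)..1, (1 - u ^ 2) * fvmlWeight p κ u := by
  have hc := continuous_fvmlWeight hp κ
  set w := fvmlWeight p κ with hw
  have hM : mInt p κ 0 = ∫ u in (-1 : ℝ)..1, w u := by simp [mInt_eq_integral_fvmlWeight, hw]
  set J : (ℝ → ℝ → ℝ) → ℝ := fun F => ∫ x in (-1 : ℝ)..1, ∫ y in (-1 : ℝ)..1, F x y with hJ
  set F : ℝ → ℝ → ℝ := fun x y => (x - y) ^ 2 * (x + y) * (w x * w y) with hF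
  have hexp : J F = 2 * ((∫ u in (-1 : ℝ)..1, u * w u) * (∫ u in (-1 : ℝ)..1, (1 - u ^ 2) * w u) -
      (∫ u in (-1 : ℝ)..1, u * (1 - u ^ 2) * w u) * ∫ u in (-1 : ℝ)..1, w u) := by
    have hin : ∀ x, ∫ y in (-1 : ℝ)..1, F x y =
        x * w x * (∫ y in (-1 : ℝ)..1, (1 - y ^ 2) * w y)
        - x * (1 - x ^ 2) * w x * (∫ y in (-1 : ℝ)..1, w y)
        - w x * (∫ y in (-1 : ℝ)..1, y * (1 - y ^ 2) * w y)
        + (1 - x ^ 2) * w x * ∫ y in (-1 : ℝ)..1, y * w y := by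
      intro x
      simp only [← intervalIntegral.integral_const_mul]
      rw [← intervalIntegral.integral_sub, ← intervalIntegral.integral_sub,
        ← intervalIntegral.integral_add]
      · congr 1; ext y; simp only [hF]; ring
      all_goals exact Continuous.intervalIntegrable (by fun_prop) _ _
    simp only [hJ, hin]
    rw [intervalIntegral.integral_add, intervalIntegral.integral_sub,
      intervalIntegral.integral_sub]
    · simp only [intervalIntegral.integral_mul_const]; ring
    all_goals exact Continuous.intervalIntegrable (by fun_prop) _ _
  have hrefl : J F = J fun x y => F (-x) (-y) := by
    simp only [hJ]
    have hi : ∀ x, ∫ y in (-1 : ℝ)..1, F (-x) (-y) = ∫ y in (-1 : ℝ)..1, F (-x) y := fun x => by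
      rw [intervalIntegral.integral_comp_neg (fun y => F (-x) y)]; simp
    simp only [hi]
    rw [intervalIntegral.integral_comp_neg (fun x => ∫ y in (-1 : ℝ)..1, F x y)]; simp
  have hFc : Continuous fun z : ℝ × ℝ => F z.1 z.2 := by fun_prop
  have hsum : J F + J (fun x y => F (-x) (-y)) = J fun x y => F x y + F (-x) (-y) := by
    simp only [hJ]
    have hF2 : Continuous fun z : ℝ × ℝ => F (-z.1) (-z.2) := by fun_prop
    rw [← intervalIntegral.integral_add
      ((continuous_parametric_intervalIntegral_of_continuous' hFc _ _).intervalIntegrable _ _)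
      ((continuous_parametric_intervalIntegral_of_continuous' hF2 _ _).intervalIntegrable _ _)]
    congr 1; ext x
    rw [← intervalIntegral.integral_add (Continuous.intervalIntegrable (by fun_prop) _ _)
      (Continuous.intervalIntegrable (by fun_prop) _ _)]
  have hnn : 0 ≤ J fun x y => F x y + F (-x) (-y) := by
    simp only [hJ]
    refine integral_nonneg (by norm_num) fun x _ => integral_nonneg (by norm_num) fun y _ => ?_
    set h := fun u : ℝ => (max (1 - u ^ 2) 0) ^ (((p : ℝ) - 3) / 2)
    have hh : ∀ u, 0 ≤ h u := fun u => by positivity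
    have hwx : ∀ u, w u = h u * Real.exp (κ * u) := fun u => rfl
    have hneg : ∀ u, h (-u) = h u := fun u => by simp [h]
    have : F x y + F (-x) (-y) = (x - y) ^ 2 * (h x * h y) *
        ((x + y) * (Real.exp (κ * (x + y)) - Real.exp (κ * -(x + y)))) := by
      have e1 : Real.exp (κ * (x + y)) = Real.exp (κ * x) * Real.exp (κ * y) := by
        rw [← Real.exp_add]; ring_nf
      have e2 : Real.exp (κ * -(x + y)) = Real.exp (κ * -x) * Real.exp (κ * -y) := by
        rw [← Real.exp_add]; ring_nf
      simp only [hF, hwx, hneg, e1, e2]; ring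
    rw [this]
    refine mul_nonneg (mul_nonneg (sq_nonneg _) (mul_nonneg (hh x) (hh y))) ?_
    generalize x + y = z
    rcases le_total 0 z with hz | hz
    · exact mul_nonneg hz (sub_nonneg.2 (Real.exp_le_exp.2 (by nlinarith)))
    · exact mul_nonneg_of_nonpos_of_nonpos hz (sub_nonpos.2 (Real.exp_le_exp.2 (by nlinarith)))
  rw [hM]
  linarith

lemma integral_one_sub_sq_sq_mul_fvmlWeight_le {p : ℕ} (hp : 4 ≤ p) {κ : ℝ} (hκ : 0 < κ) :
    (∫ u in (-1 : ℝ)..1, (1 - u ^ 2) ^ 2 * fvmlWeight p κ u) * mInt p κ 0 ≤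
      3 * (∫ u in (-1 : ℝ)..1, (1 - u ^ 2) * fvmlWeight p κ u) ^ 2 := by
  have h4 : (4 : ℝ) ≤ p := by exact_mod_cast hp
  have h0 := mInt_zero_pos hp κ
  have hcov := integral_mul_one_sub_sq_mul_fvmlWeight_le hp hκ.le
  have key : ∀ (j k : ℕ), ∫ u in (-1 : ℝ)..1, u ^ j * (1 - u ^ 2) ^ k * fvmlWeight p κ u =
      ∫ u in (-1 : ℝ)..1, u ^ j * (1 - u ^ 2) ^ (((p : ℝ) - 3) / 2 + k) * Real.exp (κ * u) := by
    intro j k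
    refine integral_congr fun u hu => ?_
    rw [Set.uIcc_of_le (by norm_num)] at hu
    have hu0 : 0 ≤ 1 - u ^ 2 := by nlinarith [hu.1, hu.2]
    simp only [fvmlWeight]
    rw [max_eq_left hu0, Real.rpow_add_natCast' hu0 (by
      have : (0 : ℝ) ≤ k := by positivity
      linarith)]
    ring
  have s1 := integral_deriv_one_sub_sq_rpow_mul_exp (a := ((p : ℝ) - 3) / 2 + 1) (by linarith) κ
  have s2 := integral_deriv_one_sub_sq_rpow_mul_exp (a := ((p : ℝ) - 3) / 2 + 2) (by linarith) κ
  have k10 := key 1 0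
  have k01 := key 0 1
  have k11 := key 1 1
  have k02 := key 0 2
  norm_num at k10 k01 k11 k02
  rw [add_sub_cancel_right, ← k10, ← k01] at s1
  rw [show ((p : ℝ) - 3) / 2 + 2 - 1 = ((p : ℝ) - 3) / 2 + 1 by ring, ← k11, ← k02] at s2
  have hVn : 0 ≤ ∫ u in (-1 : ℝ)..1, (1 - u ^ 2) * fvmlWeight p κ u :=
    integral_nonneg (by norm_num) fun u hu =>
      mul_nonneg (by nlinarith [hu.1, hu.2]) (fvmlWeight_nonneg _ _ _)
  set A := ∫ u in (-1 : ℝ)..1, u * fvmlWeight p κ u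
  set V := ∫ u in (-1 : ℝ)..1, (1 - u ^ 2) * fvmlWeight p κ u
  set B := ∫ u in (-1 : ℝ)..1, u * (1 - u ^ 2) * fvmlWeight p κ u
  set Q := ∫ u in (-1 : ℝ)..1, (1 - u ^ 2) ^ 2 * fvmlWeight p κ u
  have hA : 0 ≤ A := by
    have : 0 ≤ ((p : ℝ) - 1) * A := by
      have : ((p : ℝ) - 1) * A = κ * V := by linarith
      rw [this]; positivity
    exact nonneg_of_mul_nonneg_right this (by linarith)
  have : κ * (Q * mInt p κ 0) ≤ κ * (3 * V ^ 2) := by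
    calc κ * (Q * mInt p κ 0) = ((p : ℝ) + 1) * (B * mInt p κ 0) := by
          rw [← mul_assoc, ← s2]; ring
      _ ≤ ((p : ℝ) + 1) * (A * V) := mul_le_mul_of_nonneg_left hcov (by linarith)
      _ ≤ (3 * ((p : ℝ) - 1)) * (A * V) :=
          mul_le_mul_of_nonneg_right (by linarith) (mul_nonneg hA hVn)
      _ = 3 * (κ * V) * V := by rw [← s1]; ring
      _ = κ * (3 * V ^ 2) := by ring
  exact le_of_mul_le_mul_left this hκ

/-- Polar integration of a function of the direction against a radial weight. -/
lemma exists_lintegral_direction_mul_radial {E : Type*} [NormedAddCommGroup E] [NormedSpace ℝ E]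
    [FiniteDimensional ℝ E] [Nontrivial E] [MeasurableSpace E] [BorelSpace E] (μ : Measure E)
    [μ.IsAddHaarMeasure] {g : ℝ → ENNReal} (hg : Measurable g) :
    ∃ C : ENNReal, ∀ H : E → ENNReal, Measurable H →
      ∫⁻ x, H (‖x‖⁻¹ • x) * g ‖x‖ ∂μ = C * ∫⁻ s : sphere (0 : E) 1, H s ∂μ.toSphere := by
  refine ⟨∫⁻ r : Set.Ioi (0 : ℝ), g r ∂(Measure.volumeIoiPow (Module.finrank ℝ E - 1)),
    fun H hH => ?_⟩
  have h1 : ∫⁻ x, H (‖x‖⁻¹ • x) * g ‖x‖ ∂μ =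
      ∫⁻ x : ({(0 : E)}ᶜ : Set E), H (‖(x : E)‖⁻¹ • (x : E)) * g ‖(x : E)‖ ∂(μ.comap (↑)) := by
    rw [lintegral_subtype_comap (measurableSet_singleton _).compl
      fun x => H (‖x‖⁻¹ • x) * g ‖x‖, restrict_compl_singleton]
  have h2 := μ.measurePreserving_homeomorphUnitSphereProd.lintegral_comp_emb
    (homeomorphUnitSphereProd E).measurableEmbedding
    (fun z => H (z.1 : E) * g (z.2 : ℝ))
  simp only [homeomorphUnitSphereProd_apply_fst_coe,
    homeomorphUnitSphereProd_apply_snd_coe] at h2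
  rw [h1, h2, lintegral_prod_mul (f := fun s : sphere (0 : E) 1 => H (s : E))
    (g := fun r : Set.Ioi (0 : ℝ) => g (r : ℝ)) (by fun_prop) (by fun_prop), mul_comm]

/-- The substitution `t = r u / √(1 - u²)`. -/
lemma lintegral_eq_lintegral_Ioo_tan {r : ℝ} (hr : 0 < r) (k : ℝ → ENNReal) :
    ∫⁻ t, k t = ∫⁻ u in Set.Ioo (-1 : ℝ) 1,
      ENNReal.ofReal (r / Real.sqrt (1 - u ^ 2) ^ 3) * k (r * u / Real.sqrt (1 - u ^ 2)) := by
  set f : ℝ → ℝ := fun u => r * u / Real.sqrt (1 - u ^ 2) with hf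
  have hpos : ∀ u ∈ Set.Ioo (-1 : ℝ) 1, 0 < 1 - u ^ 2 := fun u hu => by nlinarith [hu.1, hu.2]
  have hder : ∀ u ∈ Set.Ioo (-1 : ℝ) 1,
      HasDerivWithinAt f (r / Real.sqrt (1 - u ^ 2) ^ 3) (Set.Ioo (-1) 1) u := by
    intro u hu
    have h0 := hpos u hu
    have hs : 0 < Real.sqrt (1 - u ^ 2) := Real.sqrt_pos.2 h0
    have h1 : HasDerivAt (fun u : ℝ => 1 - u ^ 2) (-(2 * u)) u := by
      simpa using ((hasDerivAt_pow 2 u).const_sub 1)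
    have h2 := ((hasDerivAt_id u).const_mul r).div (h1.sqrt h0.ne') hs.ne'
    have hsq := Real.sq_sqrt h0.le
    have hval : (r * 1 * √(1 - u ^ 2) - r * id u * (-(2 * u) / (2 * √(1 - u ^ 2)))) /
        √(1 - u ^ 2) ^ 2 = r / √(1 - u ^ 2) ^ 3 := by
      simp only [id]
      field_simp
      linear_combination hsq
    rw [hval] at h2
    exact h2.hasDerivWithinAt
  have hinv : ∀ u ∈ Set.Ioo (-1 : ℝ) 1, f u / Real.sqrt (r ^ 2 + f u ^ 2) = u := by
    intro u hu
    have h0 := hpos u hu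
    have hs : 0 < Real.sqrt (1 - u ^ 2) := Real.sqrt_pos.2 h0
    have : r ^ 2 + f u ^ 2 = (r / Real.sqrt (1 - u ^ 2)) ^ 2 := by
      simp only [hf]; field_simp; rw [Real.sq_sqrt h0.le]; ring
    rw [this, Real.sqrt_sq (by positivity)]
    simp only [hf]; field_simp
  have hinj : Set.InjOn f (Set.Ioo (-1) 1) := by
    intro a ha b hb hab
    rw [← hinv a ha, ← hinv b hb, hab]
  have himg : f '' Set.Ioo (-1) 1 = Set.univ := by
    refine Set.eq_univ_of_forall fun t => ?_
    have hR : 0 < Real.sqrt (r ^ 2 + t ^ 2) := Real.sqrt_pos.2 (by positivity)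
    have hRsq : Real.sqrt (r ^ 2 + t ^ 2) ^ 2 = r ^ 2 + t ^ 2 := Real.sq_sqrt (by positivity)
    have habs : |t| < Real.sqrt (r ^ 2 + t ^ 2) := by
      rw [← Real.sqrt_sq_eq_abs]; exact Real.sqrt_lt_sqrt (sq_nonneg _) (by nlinarith)
    refine ⟨t / Real.sqrt (r ^ 2 + t ^ 2), ⟨?_, ?_⟩, ?_⟩
    · rw [lt_div_iff₀ hR]; linarith [neg_abs_le t]
    · rw [div_lt_one hR]; linarith [le_abs_self t]
    · have : 1 - (t / Real.sqrt (r ^ 2 + t ^ 2)) ^ 2 = (r / Real.sqrt (r ^ 2 + t ^ 2)) ^ 2 := by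
        field_simp; rw [hRsq]; ring
      simp only [hf]
      rw [this, Real.sqrt_sq (by positivity)]; field_simp
  rw [← setLIntegral_univ, ← himg,
    lintegral_image_eq_lintegral_abs_deriv_mul measurableSet_Ioo hder hinj]
  refine setLIntegral_congr_fun measurableSet_Ioo fun u hu => ?_
  have hs : 0 < Real.sqrt (1 - u ^ 2) := Real.sqrt_pos.2 (hpos u hu)
  rw [abs_of_pos (by positivity)]

/-- Mixed cylindrical and spherical coordinates on `ℝ × F`. -/
lemma lintegral_prod_eq_lintegral_latitude {F : Type*} [NormedAddCommGroup F]
    [InnerProductSpace ℝ F] [FiniteDimensional ℝ F] [Nontrivial F] [MeasurableSpace F]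
    [BorelSpace F] {φ : ℝ × F → ENNReal} (hφ : Measurable φ) :
    ∫⁻ z, φ z ∂(volume.prod volume) = ∫⁻ u in Set.Ioo (-1 : ℝ) 1,
      ENNReal.ofReal ((1 - u ^ 2) ^ (((Module.finrank ℝ F : ℝ) - 2) / 2)) *
        ∫⁻ z : F, ENNReal.ofReal ‖z‖ * φ (‖z‖ * u, Real.sqrt (1 - u ^ 2) • z) := by
  have h1 : ∫⁻ z, φ z ∂(volume.prod volume) = ∫⁻ y : F, ∫⁻ t : ℝ, φ (t, y) :=
    lintegral_prod_symm _ hφ.aemeasurable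
  have h2 : ∫⁻ y : F, ∫⁻ t : ℝ, φ (t, y) = ∫⁻ y : F, ∫⁻ u in Set.Ioo (-1 : ℝ) 1,
      ENNReal.ofReal (‖y‖ / Real.sqrt (1 - u ^ 2) ^ 3) *
        φ (‖y‖ * u / Real.sqrt (1 - u ^ 2), y) := by
    refine lintegral_congr_ae ?_
    have : ∀ᵐ y : F, y ≠ 0 := by simp [ae_iff]
    filter_upwards [this] with y hy
    exact lintegral_eq_lintegral_Ioo_tan (norm_pos_iff.2 hy) fun t => φ (t, y)
  rw [h1, h2, lintegral_lintegral_swap (by fun_prop)]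
  refine setLIntegral_congr_fun measurableSet_Ioo fun u hu => ?_
  have h0 : 0 < 1 - u ^ 2 := by nlinarith [hu.1, hu.2]
  set v := Real.sqrt (1 - u ^ 2) with hv
  have hv0 : 0 < v := Real.sqrt_pos.2 h0
  have hscale : ∀ ψ : F → ENNReal, Measurable ψ → ∫⁻ y, ψ y =
      ENNReal.ofReal (v ^ Module.finrank ℝ F) * ∫⁻ z, ψ (v • z) := by
    intro ψ hψ
    have := Measure.map_addHaar_smul (volume : Measure F) hv0.ne'
    rw [← lintegral_map (μ := (volume : Measure F)) (g := fun z : F => v • z) hψ (by fun_prop),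
      this, lintegral_smul_measure, smul_eq_mul, ← mul_assoc, ← ENNReal.ofReal_mul (by positivity),
      abs_of_pos (by positivity), mul_inv_cancel₀ (by positivity)]
    simp
  rw [hscale _ (by fun_prop)]
  have hvp : (1 - u ^ 2) ^ (((Module.finrank ℝ F : ℝ) - 2) / 2) =
      v ^ Module.finrank ℝ F / v ^ 2 := by
    have hvv : 1 - u ^ 2 = v ^ (2 : ℝ) := by
      rw [Real.rpow_two, hv, Real.sq_sqrt h0.le]
    rw [hvv, ← Real.rpow_mul hv0.le, ← Real.rpow_natCast, ← Real.rpow_natCast,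
      ← Real.rpow_sub hv0]
    congr 1; push_cast; ring
  rw [hvp, ENNReal.ofReal_div_of_pos (by positivity), ENNReal.div_eq_inv_mul,
    mul_comm (ENNReal.ofReal (v ^ 2))⁻¹, mul_assoc, ← lintegral_const_mul (ENNReal.ofReal (v ^ 2))⁻¹ (by fun_prop)]
  congr 1
  refine lintegral_congr fun z => ?_
  rw [norm_smul, Real.norm_of_nonneg hv0.le, ← mul_assoc, ← ENNReal.ofReal_inv_of_pos (by positivity),
    ← ENNReal.ofReal_mul (by positivity)]
  congr 3 <;> field_simp

lemma exists_withDensity_exp_eq_smul_stdGaussian (F : Type*) [NormedAddCommGroup F]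
    [InnerProductSpace ℝ F] [FiniteDimensional ℝ F] [MeasurableSpace F] [BorelSpace F] :
    ∃ c : ENNReal, c ≠ ⊤ ∧ (volume : Measure F).withDensity
      (fun z => ENNReal.ofReal (Real.exp (-‖z‖ ^ 2 / 2))) = c • stdGaussian F := by
  set ν := (volume : Measure F).withDensity
    (fun z => ENNReal.ofReal (Real.exp (-‖z‖ ^ 2 / 2))) with hν
  have hint : Integrable (fun z : F => Real.exp (-‖z‖ ^ 2 / 2)) := by
    have := (GaussianFourier.integrable_cexp_neg_mul_sq_norm_add (V := F) (b := 1 / 2) (by norm_num)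
      0 0).norm
    refine this.congr (ae_of_all _ fun z => ?_)
    simp only [Complex.norm_exp]
    congr 1
    simp [← Complex.ofReal_pow]
    ring
  have hfin : IsFiniteMeasure ν := isFiniteMeasure_withDensity_ofReal hint.2
  set c : ℝ := (2 * Real.pi) ^ ((Module.finrank ℝ F : ℝ) / 2) with hc
  have hc0 : 0 ≤ c := by positivity
  refine ⟨ENNReal.ofReal c, ENNReal.ofReal_ne_top, ?_⟩
  have : IsFiniteMeasure (ENNReal.ofReal c • stdGaussian F) :=
    Measure.smul_finite _ ENNReal.ofReal_ne_top
  refine Measure.ext_of_charFun ?_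
  ext t
  rw [charFun_apply, charFun_apply, MeasureTheory.integral_smul_measure,
    ← charFun_apply (μ := stdGaussian F), charFun_stdGaussian,
    hν, integral_withDensity_eq_integral_toReal_smul (by fun_prop) (by simp)]
  have h := GaussianFourier.integral_cexp_neg_mul_sq_norm_add (V := F) (b := 1 / 2) (by norm_num)
    Complex.I t
  have h2 : ∀ z : F, (ENNReal.ofReal (Real.exp (-‖z‖ ^ 2 / 2))).toReal •
      Complex.exp (⟪z, t⟫ * Complex.I) =
      Complex.exp (-(1 / 2) * ‖z‖ ^ 2 + Complex.I * ⟪t, z⟫) := by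
    intro z
    rw [ENNReal.toReal_ofReal (Real.exp_pos _).le, Complex.exp_add, Complex.real_smul,
      Complex.ofReal_exp, real_inner_comm, mul_comm Complex.I]
    congr 2
    push_cast; ring
  simp only [h2]
  rw [h, ENNReal.toReal_ofReal hc0, Complex.real_smul, hc,
    Complex.ofReal_cpow (by positivity)]
  congr 2
  · push_cast; ring
  · push_cast; ring
  · rw [Complex.I_sq]; ring

/-- The direction of the point of the unit sphere with latitude `u` (relative to the pole `θ`)
whose tangential component is in the direction `ι y`. -/
noncomputable def latitudePoint {E F : Type*} [NormedAddCommGroup E] [InnerProductSpace ℝ E]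
    [NormedAddCommGroup F] [InnerProductSpace ℝ F] (θ : E) (ι : F →ₗᵢ[ℝ] E) (z : ℝ × F) : E :=
  z.1 • θ + √(1 - z.1 ^ 2) • ι (‖z.2‖⁻¹ • z.2)

section latitude

variable {E F : Type*} [NormedAddCommGroup E] [InnerProductSpace ℝ E]
  [NormedAddCommGroup F] [InnerProductSpace ℝ F]

lemma inner_latitudePoint_pole {θ : E} (hθ : ‖θ‖ = 1) {ι : F →ₗᵢ[ℝ] E}
    (hι : ∀ y, ⟪ι y, θ⟫ = 0) (z : ℝ × F) : ⟪latitudePoint θ ι z, θ⟫ = z.1 := by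
  simp [latitudePoint, inner_add_left, inner_smul_left, hι, hθ]

variable [FiniteDimensional ℝ E] [MeasurableSpace E] [BorelSpace E]
  [FiniteDimensional ℝ F] [MeasurableSpace F] [BorelSpace F]

@[fun_prop]
lemma measurable_latitudePoint (θ : E) (ι : F →ₗᵢ[ℝ] E) : Measurable (latitudePoint θ ι) := by
  unfold latitudePoint
  have := ι.continuous.measurable
  fun_prop

lemma exists_lintegral_eq_lintegral_pole {θ : E} (hθ : ‖θ‖ = 1) {ι : F →ₗᵢ[ℝ] E}
    (hι : ∀ y, ⟪ι y, θ⟫ = 0) (hdim : Module.finrank ℝ E = Module.finrank ℝ F + 1) :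
    ∃ c : ENNReal, c ≠ ⊤ ∧ ∀ φ : E → ENNReal, Measurable φ →
      ∫⁻ x, φ x = c * ∫⁻ z : ℝ × F, φ (z.1 • θ + ι z.2) ∂(volume.prod volume) := by
  have hιm := ι.continuous.measurable
  set L : ℝ × F →ₗ[ℝ] E :=
    (LinearMap.toSpanSingleton ℝ E θ).coprod ι.toLinearMap with hL
  have hLapp : ∀ z, L z = z.1 • θ + ι z.2 := fun z => by simp [hL]
  have hinj : Function.Injective L := by
    refine (injective_iff_map_eq_zero L).2 fun z hz => ?_
    rw [hLapp] at hz
    have h1 : z.1 = 0 := by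
      have := congrArg (fun x => ⟪x, θ⟫) hz
      simpa [inner_add_left, inner_smul_left, hι, real_inner_self_eq_norm_sq, hθ] using this
    have h2 : z.2 = 0 := by
      rw [h1, zero_smul, zero_add] at hz
      exact (map_eq_zero_iff ι ι.injective).1 hz
    exact Prod.ext h1 h2
  set e := L.linearEquivOfInjective hinj (by simp [hdim, add_comm]) with he
  have heapp : ∀ z, e z = z.1 • θ + ι z.2 := fun z => by rw [← hLapp]; rfl
  have hem : Measurable e := e.toContinuousLinearEquiv.continuous.measurable
  set ρ := ((volume : Measure ℝ).prod (volume : Measure F)).map e with hρ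
  have : ρ.IsAddHaarMeasure := inferInstance
  refine ⟨Measure.addHaarScalarFactor volume ρ, ENNReal.coe_ne_top, fun φ hφ => ?_⟩
  have h := congrArg (fun μ : Measure E => ∫⁻ x, φ x ∂μ)
    (Measure.isAddLeftInvariant_eq_smul (volume : Measure E) ρ)
  have h2 : ∫⁻ x, φ x ∂ρ = ∫⁻ z : ℝ × F, φ (z.1 • θ + ι z.2) ∂(volume.prod volume) := by
    rw [hρ, lintegral_map hφ hem]; simp only [heapp]
  rw [h, lintegral_smul_measure, h2, ENNReal.smul_def, smul_eq_mul]

lemma exists_lintegral_toSphere_eq_lintegral_latitude {θ : E} (hθ : ‖θ‖ = 1) {ι : F →ₗᵢ[ℝ] E}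
    (hι : ∀ y, ⟪ι y, θ⟫ = 0) (hdim : Module.finrank ℝ E = Module.finrank ℝ F + 1)
    (hF : 2 ≤ Module.finrank ℝ F) :
    ∃ C D : ENNReal, C ≠ 0 ∧ C ≠ ⊤ ∧ ∀ H : E → ENNReal, Measurable H →
      C * ∫⁻ s : sphere (0 : E) 1, H s ∂(volume : Measure E).toSphere =
        D * ∫⁻ u in Set.Ioo (-1 : ℝ) 1,
          ENNReal.ofReal ((1 - u ^ 2) ^ (((Module.finrank ℝ F : ℝ) - 2) / 2)) *
            ∫⁻ y, H (latitudePoint θ ι (u, y)) ∂(stdGaussian F) := by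
  have : Nontrivial F := Module.nontrivial_of_finrank_pos (R := ℝ) (by omega)
  have : Nontrivial E := Module.nontrivial_of_finrank_pos (R := ℝ) (by omega)
  have hιm := ι.continuous.measurable
  set g : ℝ → ENNReal := fun r => ENNReal.ofReal (Real.exp (-r ^ 2 / 2) / r) with hg
  have hgm : Measurable g := by fun_prop
  obtain ⟨C, hC⟩ := exists_lintegral_direction_mul_radial (volume : Measure E) hgm
  obtain ⟨c, hc, hcφ⟩ := exists_lintegral_eq_lintegral_pole hθ hι hdim
  obtain ⟨d, hd, hdγ⟩ := exists_withDensity_exp_eq_smul_stdGaussian F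
  have key : ∀ H : E → ENNReal, Measurable H →
      C * ∫⁻ s : sphere (0 : E) 1, H s ∂(volume : Measure E).toSphere =
        (c * d) * ∫⁻ u in Set.Ioo (-1 : ℝ) 1,
          ENNReal.ofReal ((1 - u ^ 2) ^ (((Module.finrank ℝ F : ℝ) - 2) / 2)) *
            ∫⁻ y, H (latitudePoint θ ι (u, y)) ∂(stdGaussian F) := by
    intro H hH
    rw [← hC H hH, hcφ _ (by fun_prop), lintegral_prod_eq_lintegral_latitude (by fun_prop),
      mul_assoc, ← lintegral_const_mul' d _ hd]
    congr 1
    refine setLIntegral_congr_fun measurableSet_Ioo fun u hu => ?_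
    have h0 : 0 < 1 - u ^ 2 := by nlinarith [hu.1, hu.2]
    have h1 : d * ∫⁻ y, H (latitudePoint θ ι (u, y)) ∂(stdGaussian F) =
        ∫⁻ z : F, ENNReal.ofReal (Real.exp (-‖z‖ ^ 2 / 2)) * H (latitudePoint θ ι (u, z)) := by
      rw [← smul_eq_mul, ← lintegral_smul_measure, ← hdγ,
        lintegral_withDensity_eq_lintegral_mul _ (by fun_prop) (by fun_prop)]
      rfl
    simp only
    rw [mul_left_comm, h1]
    congr 1
    refine lintegral_congr_ae ?_
    have : ∀ᵐ z : F, z ≠ 0 := by simp [ae_iff]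
    filter_upwards [this] with z hz
    have hz0 : 0 < ‖z‖ := norm_pos_iff.2 hz
    set x : E := (‖z‖ * u) • θ + ι (√(1 - u ^ 2) • z) with hx
    have hxn : ‖x‖ = ‖z‖ := by
      have : ‖x‖ ^ 2 = ‖z‖ ^ 2 := by
        rw [hx, norm_add_sq_real, norm_smul, hθ, ι.norm_map, norm_smul, inner_smul_left,
          real_inner_comm, hι]
        simp only [mul_one, mul_zero, add_zero, mul_pow, Real.norm_eq_abs, sq_abs,
          Real.sq_sqrt h0.le]
        ring
      exact (pow_left_inj₀ (norm_nonneg _) (norm_nonneg _) two_ne_zero).1 this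
    have hxl : ‖z‖⁻¹ • x = latitudePoint θ ι (u, z) := by
      rw [hx, latitudePoint, smul_add, smul_smul, ← map_smul ι, smul_comm, map_smul]
      congr 2
      field_simp
    rw [hxn, hxl, mul_left_comm, ← ENNReal.ofReal_mul hz0.le, mul_comm]
    congr 2
    field_simp
  refine ⟨C, c * d, ?_, ?_, key⟩
  · rintro rfl
    have h := hC (fun _ => 1) measurable_const
    simp only [one_mul, zero_mul] at h
    rw [lintegral_eq_zero_iff (by fun_prop)] at h
    have h2 : ∀ᵐ x : E, x ≠ 0 := by simp [ae_iff]
    have h3 : ∀ᵐ x : E, False := by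
      filter_upwards [h, h2] with x hx hx0
      have : 0 < ‖x‖ := norm_pos_iff.2 hx0
      simp only [hg, Pi.zero_apply, ENNReal.ofReal_eq_zero] at hx
      exact absurd hx (not_le.2 (by positivity))
    simp at h3
    exact NeZero.ne (volume : Measure E) h3
  · intro hCtop
    have h := key (fun _ => 1) measurable_const
    have h2 : ∫⁻ u in Set.Ioo (-1 : ℝ) 1,
          ENNReal.ofReal ((1 - u ^ 2) ^ (((Module.finrank ℝ F : ℝ) - 2) / 2)) *
            ∫⁻ y, 1 ∂(stdGaussian F) ≤ ∫⁻ u in Set.Ioo (-1 : ℝ) 1, 1 := by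
      refine setLIntegral_mono measurable_const fun u hu => ?_
      simp only [lintegral_const, measure_univ, mul_one, ENNReal.ofReal_le_one]
      have h0 : 0 < 1 - u ^ 2 := by nlinarith [hu.1, hu.2]
      refine Real.rpow_le_one h0.le (by nlinarith) ?_
      have : (2 : ℝ) ≤ Module.finrank ℝ F := by exact_mod_cast hF
      linarith
    have h3 : (c * d) * ∫⁻ u in Set.Ioo (-1 : ℝ) 1,
          ENNReal.ofReal ((1 - u ^ 2) ^ (((Module.finrank ℝ F : ℝ) - 2) / 2)) *
            ∫⁻ y, 1 ∂(stdGaussian F) ≠ ⊤ :=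
      ENNReal.mul_ne_top (ENNReal.mul_ne_top hc hd) (ne_top_of_le_ne_top (by simp) h2)
    rw [← h, hCtop] at h3
    refine h3 (ENNReal.top_mul ?_)
    rw [lintegral_one]
    exact (Measure.measure_univ_ne_zero).2 (Measure.toSphere_ne_zero _)

end latitude

/-- The law of the latitude `⟪X, θ⟫` when `X` follows `FvML_p(θ, κ)`. -/
noncomputable def fvmlLatitude (p : ℕ) (κ : ℝ) : Measure ℝ :=
  (volume.restrict (Set.Ioo (-1) 1)).withDensity
    fun u => ENNReal.ofReal (fvmlWeight p κ u / mInt p κ 0)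

lemma measurable_fvmlWeight (p : ℕ) (κ : ℝ) : Measurable (fvmlWeight p κ) := by
  unfold fvmlWeight; fun_prop

lemma isProbabilityMeasure_fvmlLatitude {p : ℕ} (hp : 4 ≤ p) (κ : ℝ) :
    IsProbabilityMeasure (fvmlLatitude p κ) := by
  have hw := measurable_fvmlWeight p κ
  have hm := mInt_zero_pos hp κ
  have hint : IntervalIntegrable (fvmlWeight p κ) volume (-1) 1 :=
    (continuous_fvmlWeight hp κ).intervalIntegrable _ _
  refine ⟨?_⟩
  rw [fvmlLatitude, withDensity_apply _ MeasurableSet.univ, Measure.restrict_univ,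
    ← ofReal_integral_eq_lintegral_ofReal, MeasureTheory.integral_div, ← integral_Ioc_eq_integral_Ioo,
    ← intervalIntegral.integral_of_le (by norm_num)]
  · have := mInt_eq_integral_fvmlWeight p κ 0
    simp only [pow_zero, one_mul] at this
    rw [← this, div_self hm.ne', ENNReal.ofReal_one]
  · have := (intervalIntegrable_iff_integrableOn_Ioo_of_le (by norm_num)).1 hint
    exact this.div_const _
  · exact ae_of_all _ fun u => div_nonneg (fvmlWeight_nonneg _ _ _) hm.le

lemma integral_fvmlLatitude {p : ℕ} (hp : 4 ≤ p) (κ : ℝ) (f : ℝ → ℝ) :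
    ∫ u, f u ∂(fvmlLatitude p κ) =
      (∫ u in (-1 : ℝ)..1, f u * fvmlWeight p κ u) / mInt p κ 0 := by
  have hw := measurable_fvmlWeight p κ
  have hm := mInt_zero_pos hp κ
  rw [fvmlLatitude, integral_withDensity_eq_integral_toReal_smul (by fun_prop) (by simp),
    intervalIntegral.integral_of_le (by norm_num), integral_Ioc_eq_integral_Ioo,
    ← MeasureTheory.integral_div]
  refine MeasureTheory.integral_congr_ae (ae_of_all _ fun u => ?_)
  simp only
  rw [ENNReal.toReal_ofReal (div_nonneg (fvmlWeight_nonneg _ _ _) hm.le), smul_eq_mul]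
  ring

lemma ae_fvmlLatitude_mem (p : ℕ) (κ : ℝ) : ∀ᵐ u ∂(fvmlLatitude p κ), u ∈ Set.Ioo (-1 : ℝ) 1 :=
  (withDensity_absolutelyContinuous _ _).ae_le (ae_restrict_mem measurableSet_Ioo)

lemma isProbabilityMeasure_fvml {p : ℕ} (hp : 1 ≤ p) (θ : EuclideanSpace ℝ (Fin p)) (κ : ℝ) :
    IsProbabilityMeasure (fvml p θ κ) := by
  have : Nontrivial (EuclideanSpace ℝ (Fin p)) :=
    Module.nontrivial_of_finrank_pos (R := ℝ) (by simpa using (by omega : 0 < p))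
  have hcont : Continuous fun x : sphere (0 : EuclideanSpace ℝ (Fin p)) 1 =>
      Real.exp (κ * ⟪(x : EuclideanSpace ℝ (Fin p)), θ⟫) := by fun_prop
  have hne : sphereSurface p ≠ 0 := by
    unfold sphereSurface; exact Measure.toSphere_ne_zero _
  have hfin : IsFiniteMeasure (sphereSurface p) := by unfold sphereSurface; infer_instance
  have hint : Integrable (fun x : sphere (0 : EuclideanSpace ℝ (Fin p)) 1 =>
      Real.exp (κ * ⟪(x : EuclideanSpace ℝ (Fin p)), θ⟫)) (sphereSurface p) :=
    hcont.integrable_of_hasCompactSupport (HasCompactSupport.of_compactSpace _)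
  have : NeZero (sphereSurface p) := ⟨hne⟩
  have hpos : 0 < ∫ x : sphere (0 : EuclideanSpace ℝ (Fin p)) 1,
      Real.exp (κ * ⟪(x : EuclideanSpace ℝ (Fin p)), θ⟫) ∂(sphereSurface p) :=
    integral_exp_pos hint
  refine ⟨?_⟩
  rw [fvml, withDensity_apply _ MeasurableSet.univ, Measure.restrict_univ,
    ← ofReal_integral_eq_lintegral_ofReal (hint.div_const _)
      (ae_of_all _ fun x => (div_pos (Real.exp_pos _) hpos).le),
    MeasureTheory.integral_div, div_self hpos.ne', ENNReal.ofReal_one]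

lemma fvml_map_coe_eq {p m : ℕ} (hp : 4 ≤ p) (hm : p = m + 1) {κ : ℝ}
    {θ : EuclideanSpace ℝ (Fin p)} (hθ : ‖θ‖ = 1)
    {ι : EuclideanSpace ℝ (Fin m) →ₗᵢ[ℝ] EuclideanSpace ℝ (Fin p)} (hι : ∀ y, ⟪ι y, θ⟫ = 0) :
    (fvml p θ κ).map
        ((↑) : sphere (0 : EuclideanSpace ℝ (Fin p)) 1 → EuclideanSpace ℝ (Fin p)) =
      ((fvmlLatitude p κ).prod (stdGaussian (EuclideanSpace ℝ (Fin m)))).map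
        (latitudePoint θ ι) := by
  have hP := isProbabilityMeasure_fvml (by omega : 1 ≤ p) θ κ
  have hQ := isProbabilityMeasure_fvmlLatitude hp κ
  have hw := measurable_fvmlWeight p κ
  have hm0 := mInt_zero_pos hp κ
  obtain ⟨C, D, hC0, hCt, hCD⟩ := exists_lintegral_toSphere_eq_lintegral_latitude hθ hι
    (by simp [hm]) (by simp; omega)
  set μ := (fvml p θ κ).map
    ((↑) : sphere (0 : EuclideanSpace ℝ (Fin p)) 1 → EuclideanSpace ℝ (Fin p)) with hμ
  set ν := ((fvmlLatitude p κ).prod (stdGaussian (EuclideanSpace ℝ (Fin m)))).map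
        (latitudePoint θ ι) with hν
  have hμP : IsProbabilityMeasure μ := Measure.isProbabilityMeasure_map (by fun_prop)
  have hνP : IsProbabilityMeasure ν := Measure.isProbabilityMeasure_map (by fun_prop)
  set Z := ∫ y : sphere (0 : EuclideanSpace ℝ (Fin p)) 1,
        Real.exp (κ * ⟪(y : EuclideanSpace ℝ (Fin p)), θ⟫) ∂(sphereSurface p) with hZ
  have hZ0 : 0 ≤ Z := MeasureTheory.integral_nonneg fun y => (Real.exp_pos _).le
  set B : ENNReal := D * ENNReal.ofReal (mInt p κ 0 / Z) with hB
  have key : ∀ H : EuclideanSpace ℝ (Fin p) → ENNReal, Measurable H →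
      C * ∫⁻ x, H x ∂μ = B * ∫⁻ x, H x ∂ν := by
    intro H hH
    have h1 : ∫⁻ x, H x ∂μ = ∫⁻ s : sphere (0 : EuclideanSpace ℝ (Fin p)) 1,
        (fun x => ENNReal.ofReal (Real.exp (κ * ⟪x, θ⟫) / Z) * H x) s
          ∂(volume : Measure (EuclideanSpace ℝ (Fin p))).toSphere := by
      rw [hμ, lintegral_map hH (by fun_prop), fvml, lintegral_withDensity_eq_lintegral_mul _
        (by fun_prop) (by fun_prop)]
      rfl
    have h2 : ∫⁻ x, H x ∂ν = ∫⁻ u in Set.Ioo (-1 : ℝ) 1,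
        ENNReal.ofReal (fvmlWeight p κ u / mInt p κ 0) *
          ∫⁻ y, H (latitudePoint θ ι (u, y)) ∂(stdGaussian (EuclideanSpace ℝ (Fin m))) := by
      rw [hν, lintegral_map hH (by fun_prop), lintegral_prod _ (by fun_prop), fvmlLatitude,
        lintegral_withDensity_eq_lintegral_mul _ (by fun_prop)
          (Measurable.lintegral_prod_right' (f := fun z => H (latitudePoint θ ι z)) (by fun_prop))]
      rfl
    rw [h1, hCD (fun x => ENNReal.ofReal (Real.exp (κ * ⟪x, θ⟫) / Z) * H x) (by fun_prop), h2, hB, mul_assoc, ← lintegral_const_mul' _ _ ENNReal.ofReal_ne_top]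
    congr 1
    refine setLIntegral_congr_fun measurableSet_Ioo fun u hu => ?_
    have h0 : 0 < 1 - u ^ 2 := by nlinarith [hu.1, hu.2]
    simp only [inner_latitudePoint_pole hθ hι]
    rw [lintegral_const_mul' _ _ ENNReal.ofReal_ne_top, ← mul_assoc, ← mul_assoc,
      ← ENNReal.ofReal_mul (by positivity), ← ENNReal.ofReal_mul (by positivity)]
    congr 2
    rw [fvmlWeight, max_eq_left h0.le]
    have : ((p : ℝ) - 3) / 2 = ((Module.finrank ℝ (EuclideanSpace ℝ (Fin m)) : ℝ) - 2) / 2 := by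
      simp [hm]; ring
    rw [this]
    field_simp
  have hCB : C = B := by
    have := key (fun _ => 1) measurable_const
    simpa using this
  ext s hs
  have := key (s.indicator 1) (measurable_one.indicator hs)
  rw [lintegral_indicator_one hs, lintegral_indicator_one hs, ← hCB] at this
  exact (ENNReal.mul_right_inj hC0 hCt).1 this

lemma exists_linearIsometry_orthogonal {p m : ℕ} (hm : p = m + 1)
    {θ : EuclideanSpace ℝ (Fin p)} (hθ : ‖θ‖ = 1) :
    ∃ ι : EuclideanSpace ℝ (Fin m) →ₗᵢ[ℝ] EuclideanSpace ℝ (Fin p), ∀ y, ⟪ι y, θ⟫ = 0 := by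
  have : Fact (Module.finrank ℝ (EuclideanSpace ℝ (Fin p)) = m + 1) := ⟨by simp [hm]⟩
  have hθ0 : θ ≠ 0 := by rintro rfl; simp at hθ
  set b := OrthonormalBasis.fromOrthogonalSpanSingleton (𝕜 := ℝ) m hθ0
  refine ⟨(Submodule.subtypeₗᵢ _).comp b.repr.symm.toLinearIsometry, fun y => ?_⟩
  have := (b.repr.symm y).2
  rw [Submodule.mem_orthogonal_singleton_iff_inner_right] at this
  rw [real_inner_comm]
  exact this

lemma norm_exp_mul_I_sub_taylor_two_le (x : ℝ) :
    ‖Complex.exp (x * Complex.I) - (1 + x * Complex.I - x ^ 2 / 2)‖ ≤ 2 * (x ^ 2 * |x|) * 2 := by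
  have hI : Complex.I ^ 2 = -1 := Complex.I_sq
  rcases le_or_gt |x| 1 with h | h
  · have hz : ‖(x : ℂ) * Complex.I‖ ≤ 1 := by simpa using h
    have := Complex.exp_bound hz (n := 3) (by norm_num)
    have e : ∑ m ∈ Finset.range 3, ((x : ℂ) * Complex.I) ^ m / (m.factorial : ℂ) =
        1 + x * Complex.I - x ^ 2 / 2 := by
      simp [Finset.sum_range_succ, Nat.factorial, mul_pow]
      ring
    rw [e] at this
    refine this.trans ?_
    have h3 : ‖(x : ℂ) * Complex.I‖ ^ 3 = x ^ 2 * |x| := by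
      simp only [norm_mul, Complex.norm_I, mul_one, Complex.norm_real, Real.norm_eq_abs]
      rw [← sq_abs]; ring
    rw [h3]
    have : 0 ≤ x ^ 2 * |x| := by positivity
    norm_num [Nat.factorial]
    nlinarith
  · have h1 : ‖Complex.exp (x * Complex.I)‖ = 1 := Complex.norm_exp_ofReal_mul_I x
    have h2 : ‖(1 + x * Complex.I - x ^ 2 / 2 : ℂ)‖ ≤ 1 + |x| + x ^ 2 / 2 := by
      refine (norm_sub_le _ _).trans (add_le_add ((norm_add_le _ _).trans (by simp)) ?_)
      simp
    refine (norm_sub_le _ _).trans ?_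
    rw [h1]
    have : x ^ 2 = |x| ^ 2 := (sq_abs x).symm
    rw [this] at h2 ⊢
    nlinarith [mul_pos (sub_pos.2 h) (sub_pos.2 h), mul_pos (sub_pos.2 h) (abs_pos.2 (show x ≠ 0 by
      rintro rfl; simp at h; linarith))]

lemma norm_pow_sub_pow_le_mul {z w : ℂ} (hz : ‖z‖ ≤ 1) (hw : ‖w‖ ≤ 1) (n : ℕ) :
    ‖z ^ n - w ^ n‖ ≤ n * ‖z - w‖ := by
  induction n with
  | zero => simp
  | succ n ih =>
    have : z ^ (n + 1) - w ^ (n + 1) = z ^ n * (z - w) + (z ^ n - w ^ n) * w := by ring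
    rw [this]
    refine (norm_add_le _ _).trans ?_
    rw [norm_mul, norm_mul, norm_pow]
    have h1 : ‖z‖ ^ n ≤ 1 := pow_le_one₀ (norm_nonneg _) hz
    have h2 := norm_nonneg (z - w)
    have h3 := norm_nonneg (z ^ n - w ^ n)
    push_cast
    nlinarith [mul_le_mul_of_nonneg_right h1 h2, mul_le_mul_of_nonneg_left hw h3]

lemma abs_exp_neg_sub_one_add_le {x : ℝ} (hx : 0 ≤ x) : |Real.exp (-x) - 1 + x| ≤ x ^ 2 := by
  rcases le_or_gt x 1 with h | h
  · have := Real.abs_exp_sub_one_sub_id_le (x := -x) (by rwa [abs_neg, abs_of_nonneg hx])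
    rw [show Real.exp (-x) - 1 + x = Real.exp (-x) - 1 - -x by ring]
    simpa using this
  · have h1 := Real.add_one_le_exp (-x)
    have h2 : Real.exp (-x) ≤ 1 := Real.exp_le_one_iff.2 (by linarith)
    rw [abs_of_nonneg (by linarith)]
    nlinarith

section TriangularCLT

variable {Ω : Type*} [MeasurableSpace Ω] {P : Measure Ω} [IsProbabilityMeasure P] {X : Ω → ℝ}

lemma norm_charFun_map_sub_le (hX : Measurable X) (h4 : Integrable (fun ω => X ω ^ 4) P)
    (h0 : ∫ ω, X ω ∂P = 0) (h2 : ∫ ω, X ω ^ 2 ∂P = 1) (s : ℝ) :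
    ‖charFun (P.map X) s - (1 - s ^ 2 / 2)‖ ≤ 2 * (1 + ∫ ω, X ω ^ 4 ∂P) * (s ^ 2 * |s|) := by
  have i2 : Integrable (fun ω => X ω ^ 2) P := by
    refine ((integrable_const (1 : ℝ)).add h4).mono' (by fun_prop) (ae_of_all _ fun ω => ?_)
    rw [Real.norm_of_nonneg (sq_nonneg _), Pi.add_apply]
    nlinarith [sq_nonneg (X ω ^ 2 - 1), sq_nonneg (X ω)]
  have i1 : Integrable X P := by
    refine ((integrable_const (1 : ℝ)).add i2).mono' (by fun_prop) (ae_of_all _ fun ω => ?_)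
    rw [Real.norm_eq_abs, Pi.add_apply, ← sq_abs (X ω)]
    nlinarith [sq_nonneg (|X ω| - 1), abs_nonneg (X ω)]
  have iexp : Integrable (fun ω => Complex.exp ((s * X ω : ℝ) * Complex.I)) P := by
    refine (integrable_const (1 : ℝ)).mono' (by fun_prop) (ae_of_all _ fun ω => ?_)
    rw [Complex.norm_exp_ofReal_mul_I]
  have a1 : Integrable (fun ω => ((s * X ω : ℝ) : ℂ) * Complex.I) P :=
    (i1.const_mul s).ofReal.mul_const _
  have a2 : Integrable (fun ω => ((s * X ω : ℝ) : ℂ) ^ 2 / 2) P := by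
    refine (((i2.const_mul (s ^ 2)).ofReal (𝕜 := ℂ)).div_const 2).congr (ae_of_all _ fun ω => ?_)
    simp [mul_pow]
  have a0 : Integrable (fun _ : Ω => (1 : ℂ)) P := integrable_const _
  have a01 : Integrable (fun ω => 1 + ((s * X ω : ℝ) : ℂ) * Complex.I) P := a0.add a1
  have itay : Integrable
      (fun ω => 1 + ((s * X ω : ℝ) : ℂ) * Complex.I - ((s * X ω : ℝ) : ℂ) ^ 2 / 2) P := a01.sub a2
  have e1 : charFun (P.map X) s = ∫ ω, Complex.exp ((s * X ω : ℝ) * Complex.I) ∂P := by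
    rw [charFun_apply_real, integral_map hX.aemeasurable (by fun_prop)]
    simp
  have e2 : (1 - s ^ 2 / 2 : ℂ) =
      ∫ ω, (1 + (s * X ω : ℝ) * Complex.I - ((s * X ω : ℝ) : ℂ) ^ 2 / 2) ∂P := by
    rw [MeasureTheory.integral_sub a01 a2, MeasureTheory.integral_add a0 a1]
    have b1 : ∫ ω, ((s * X ω : ℝ) : ℂ) * Complex.I ∂P = 0 := by
      rw [MeasureTheory.integral_mul_const, integral_complex_ofReal,
        MeasureTheory.integral_const_mul, h0]
      simp
    have b2 : ∫ ω, ((s * X ω : ℝ) : ℂ) ^ 2 / 2 ∂P = (s : ℂ) ^ 2 / 2 := by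
      rw [MeasureTheory.integral_div]
      have : ∀ ω, ((s * X ω : ℝ) : ℂ) ^ 2 = ((s ^ 2 * X ω ^ 2 : ℝ) : ℂ) := fun ω => by
        push_cast; ring
      simp_rw [this]
      rw [integral_complex_ofReal, MeasureTheory.integral_const_mul, h2]
      simp
    rw [b1, b2]
    simp
  rw [e1, e2, ← MeasureTheory.integral_sub iexp itay]
  have key : ∀ ω, ‖Complex.exp ((s * X ω : ℝ) * Complex.I) -
      (1 + (s * X ω : ℝ) * Complex.I - ((s * X ω : ℝ) : ℂ) ^ 2 / 2)‖ ≤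
      2 * (s ^ 2 * |s|) * (X ω ^ 2 + X ω ^ 4) := fun ω => by
    refine (norm_exp_mul_I_sub_taylor_two_le (s * X ω)).trans ?_
    rw [abs_mul, mul_pow]
    have h : X ω ^ 2 * |X ω| ≤ (X ω ^ 2 + X ω ^ 4) / 2 := by
      rw [← sq_abs (X ω), show X ω ^ 4 = |X ω| ^ 4 by rw [← abs_pow, abs_of_nonneg (by positivity)]]
      nlinarith [mul_nonneg (sq_nonneg |X ω|) (sq_nonneg (|X ω| - 1))]
    have hs : 0 ≤ s ^ 2 * |s| := by positivity
    nlinarith [mul_le_mul_of_nonneg_left h hs]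
  refine (norm_integral_le_of_norm_le ((i2.add h4).const_mul (2 * (s ^ 2 * |s|)))
    (ae_of_all _ key)).trans (le_of_eq ?_)
  simp only [Pi.add_apply]
  rw [MeasureTheory.integral_const_mul, MeasureTheory.integral_add i2 h4, h2]
  ring

lemma norm_charFun_pi_map_sub_le (hX : Measurable X) (h4 : Integrable (fun ω => X ω ^ 4) P)
    (h0 : ∫ ω, X ω ∂P = 0) (h2 : ∫ ω, X ω ^ 2 ∂P = 1) {n : ℕ} (hn : 0 < n) (t : ℝ) :
    ‖charFun ((Measure.pi fun _ : Fin n => P).map fun ω => (√n)⁻¹ * ∑ i, X (ω i)) t -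
        charFun (gaussianReal 0 1) t‖ ≤
      (2 * (1 + ∫ ω, X ω ^ 4 ∂P) * (t ^ 2 * |t|) + t ^ 4) / √n := by
  have hn' : (0 : ℝ) < n := by exact_mod_cast hn
  have hs : 0 < √(n : ℝ) := Real.sqrt_pos.2 hn'
  have hss : √(n : ℝ) ^ 2 = n := Real.sq_sqrt hn'.le
  have h1n : (1 : ℝ) ≤ √(n : ℝ) := Real.one_le_sqrt.2 (by exact_mod_cast hn)
  set s : ℝ := (√n)⁻¹ * t with hsdef
  have hind : iIndepFun (fun (i : Fin n) (ω : Fin n → Ω) => X (ω i)) (Measure.pi fun _ => P) :=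
    iIndepFun_pi (X := fun _ => X) fun _ => hX.aemeasurable
  have hXm : ∀ i : Fin n, Measurable fun ω : Fin n → Ω => X (ω i) := fun i =>
    hX.comp (measurable_pi_apply i)
  have hmap : ∀ i : Fin n, (Measure.pi fun _ : Fin n => P).map (fun ω => X (ω i)) = P.map X := by
    intro i
    conv_rhs => rw [← (measurePreserving_eval (fun _ : Fin n => P) i).map_eq]
    rw [Measure.map_map hX (measurable_pi_apply i)]
    rfl
  have hchar : charFun ((Measure.pi fun _ : Fin n => P).map fun ω => (√n)⁻¹ * ∑ i, X (ω i)) t =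
      charFun (P.map X) s ^ n := by
    rw [charFun_map_mul_comp (Finset.measurable_fun_sum _ fun i _ => hXm i).aemeasurable,
      hind.charFun_map_fun_sum_eq_prod (fun i => (hXm i).aemeasurable)]
    simp [hmap, hsdef]
  have hg : charFun (gaussianReal 0 1) t = ((Real.exp (-(s ^ 2 / 2)) : ℝ) : ℂ) ^ n := by
    rw [charFun_gaussianReal, ← Complex.ofReal_pow (Real.exp _), ← Real.exp_nat_mul]
    have : (n : ℝ) * -(s ^ 2 / 2) = -(t ^ 2 / 2) := by
      rw [hsdef, mul_pow, inv_pow, hss]; field_simp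
    rw [this]
    push_cast
    simp
  have : IsProbabilityMeasure (P.map X) := Measure.isProbabilityMeasure_map hX.aemeasurable
  rw [hchar, hg]
  refine (norm_pow_sub_pow_le_mul (norm_charFun_le_one _) ?_ n).trans ?_
  · rw [Complex.norm_real, Real.norm_of_nonneg (Real.exp_nonneg _)]
    exact Real.exp_le_one_iff.2 (by nlinarith [sq_nonneg s])
  have hb : ‖charFun (P.map X) s - ((Real.exp (-(s ^ 2 / 2)) : ℝ) : ℂ)‖ ≤
      2 * (1 + ∫ ω, X ω ^ 4 ∂P) * (s ^ 2 * |s|) + s ^ 4 := by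
    have e : charFun (P.map X) s - ((Real.exp (-(s ^ 2 / 2)) : ℝ) : ℂ) =
        (charFun (P.map X) s - (1 - s ^ 2 / 2)) -
          ((Real.exp (-(s ^ 2 / 2)) - 1 + s ^ 2 / 2 : ℝ) : ℂ) := by push_cast; ring
    rw [e]
    refine (norm_sub_le _ _).trans (add_le_add (norm_charFun_map_sub_le hX h4 h0 h2 s) ?_)
    rw [Complex.norm_real, Real.norm_eq_abs]
    refine (abs_exp_neg_sub_one_add_le (by positivity)).trans ?_
    nlinarith [sq_nonneg (s ^ 2)]
  refine (mul_le_mul_of_nonneg_left hb hn'.le).trans ?_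
  have hsabs : |s| = (√n)⁻¹ * |t| := by rw [hsdef, abs_mul, abs_of_pos (inv_pos.2 hs)]
  rw [hsabs, hsdef, le_div_iff₀ hs]
  have e1 : (n : ℝ) * (2 * (1 + ∫ ω, X ω ^ 4 ∂P) * (((√n)⁻¹ * t) ^ 2 * ((√n)⁻¹ * |t|)) +
      ((√n)⁻¹ * t) ^ 4) * √n =
      2 * (1 + ∫ ω, X ω ^ 4 ∂P) * (t ^ 2 * |t|) + t ^ 4 / √n := by
    rw [← hss]; field_simp; simp only [Real.sqrt_sq hs.le]
  rw [e1]
  gcongr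
  exact div_le_self (by positivity) h1n

end TriangularCLT

/-- A triangular-array central limit theorem under a uniform fourth moment bound. -/
lemma tendsto_pi_map_gaussianReal {Ω : ℕ → Type*} [∀ n, MeasurableSpace (Ω n)]
    (P : ∀ n, Measure (Ω n)) [∀ n, IsProbabilityMeasure (P n)] {X : ∀ n, Ω n → ℝ} {k : ℕ → ℕ}
    (hk : Tendsto k atTop atTop) (hX : ∀ n, Measurable (X n)) {K : ℝ}
    (h4 : ∀ n, Integrable (fun ω => X n ω ^ 4) (P n)) (h0 : ∀ n, ∫ ω, X n ω ∂(P n) = 0)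
    (h2 : ∀ n, ∫ ω, X n ω ^ 2 ∂(P n) = 1) (hK : ∀ n, ∫ ω, X n ω ^ 4 ∂(P n) ≤ K)
    (μ : ℕ → ProbabilityMeasure ℝ)
    (hμ : ∀ n, (μ n : Measure ℝ) =
      (Measure.pi fun _ : Fin (k n) => P n).map fun ω => (√(k n))⁻¹ * ∑ i, X n (ω i)) :
    Tendsto μ atTop (nhds ⟨gaussianReal 0 1, inferInstance⟩) := by
  refine ProbabilityMeasure.tendsto_of_tendsto_charFun fun t => ?_
  rw [tendsto_iff_norm_sub_tendsto_zero]
  have hlim : Tendsto (fun n => (2 * (1 + K) * (t ^ 2 * |t|) + t ^ 4) / √(k n : ℝ)) atTop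
      (nhds 0) :=
    tendsto_const_nhds.div_atTop
      (Real.tendsto_sqrt_atTop.comp (tendsto_natCast_atTop_atTop.comp hk))
  refine squeeze_zero' (Eventually.of_forall fun _ => norm_nonneg _) ?_ hlim
  filter_upwards [hk.eventually_gt_atTop 0] with n hn
  rw [hμ n]
  refine (norm_charFun_pi_map_sub_le (hX n) (h4 n) (h0 n) (h2 n) hn t).trans ?_
  gcongr
  exact hK n

lemma integral_pow_four_gaussianReal : ∫ x, x ^ 4 ∂(gaussianReal 0 1) = 3 := by
  have h := iteratedDeriv_mgf_zero (X := id) (μ := gaussianReal 0 1) (by simp) 4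
  have d : ∀ (q q' : ℝ → ℝ), (∀ x, HasDerivAt q (q' x) x) →
      deriv (fun x => q x * Real.exp (x ^ 2 / 2)) =
        fun x => (q' x + x * q x) * Real.exp (x ^ 2 / 2) := fun q q' hq => by
    funext x
    have h2 : HasDerivAt (fun x : ℝ => x ^ 2 / 2) x x := by
      simpa using (hasDerivAt_pow 2 x).div_const 2
    rw [((hq x).fun_mul h2.exp).deriv]
    ring
  have e0 : mgf id (gaussianReal 0 1) = fun x => (1 : ℝ) * Real.exp (x ^ 2 / 2) := by
    rw [mgf_id_gaussianReal]
    funext x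
    simp
  have d1 := d (fun _ => 1) (fun _ => 0) fun x => hasDerivAt_const x 1
  have d2 := d (fun x => 0 + x * 1) (fun _ => 1) fun x => by
    simpa using hasDerivAt_id' x
  have d3 := d (fun x => 1 + x * (0 + x * 1)) (fun x => 2 * x) fun x => by
    simpa [pow_two] using (hasDerivAt_pow 2 x).const_add 1
  have d4 := d (fun x => 2 * x + x * (1 + x * (0 + x * 1))) (fun x => 3 + 3 * x ^ 2) fun x => by
    have := ((hasDerivAt_id x).const_mul 3).add (hasDerivAt_pow 3 x)
    refine (this.congr_of_eventuallyEq (Eventually.of_forall fun y => ?_)).congr_deriv ?_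
    · simp; ring
    · simp
  rw [e0, iteratedDeriv_eq_iterate] at h
  simp only [Function.iterate_succ, Function.iterate_zero, Function.comp_apply, id] at h
  rw [d1, d2, d3, d4] at h
  simp at h
  exact h.symm

lemma integrable_pow_gaussianReal (k : ℕ) : Integrable (fun x => x ^ k) (gaussianReal 0 1) := by
  rcases Nat.eq_zero_or_pos k with rfl | hk
  · simp
  have h := (memLp_id_gaussianReal (μ := 0) (v := 1) (k : NNReal)).integrable_norm_pow
    (by simpa using hk.ne')
  exact h.mono' (by fun_prop) (ae_of_all _ fun x => by simp)

lemma integral_sq_gaussianReal : ∫ x, x ^ 2 ∂(gaussianReal 0 1) = 1 := by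
  have h := variance_fun_id_gaussianReal (μ := 0) (v := 1)
  rw [variance_eq_integral (by fun_prop)] at h
  simpa using h

section ChiSquare

variable {m : ℕ}

/-- Integrals against the standard Gaussian on `EuclideanSpace` in coordinates. -/
lemma stdGaussian_map_norm_sq :
    (stdGaussian (EuclideanSpace ℝ (Fin m))).map (fun y => ‖y‖ ^ 2) =
      (Measure.pi fun _ : Fin m => gaussianReal 0 1).map fun x => ∑ i, x i ^ 2 := by
  rw [← map_pi_eq_stdGaussian, Measure.map_map (by fun_prop) (by fun_prop)]
  congr 1
  funext x
  simp [EuclideanSpace.norm_sq_eq]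

lemma memLp_sq_gaussianReal : MemLp (fun x : ℝ => x ^ 2) 2 (gaussianReal 0 1) := by
  rw [memLp_two_iff_integrable_sq (by fun_prop)]
  simpa [← pow_mul] using integrable_pow_gaussianReal 4

lemma variance_sq_gaussianReal : Var[fun x => x ^ 2; gaussianReal 0 1] = 2 := by
  rw [variance_eq_sub memLp_sq_gaussianReal]
  simp only [Pi.pow_apply, ← pow_mul]
  norm_num [integral_pow_four_gaussianReal, integral_sq_gaussianReal]

lemma memLp_norm_sq_stdGaussian :
    MemLp (fun y => ‖y‖ ^ 2) 2 (stdGaussian (EuclideanSpace ℝ (Fin m))) := by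
  rw [memLp_two_iff_integrable_sq (by fun_prop)]
  have h := (IsGaussian.memLp_id (stdGaussian (EuclideanSpace ℝ (Fin m))) 4
    (by simp)).integrable_norm_pow (p := 4) (by norm_num)
  simpa [← pow_mul] using h

lemma integral_norm_sq_stdGaussian :
    ∫ y, ‖y‖ ^ 2 ∂(stdGaussian (EuclideanSpace ℝ (Fin m))) = m := by
  have h : ∫ y, ‖y‖ ^ 2 ∂(stdGaussian (EuclideanSpace ℝ (Fin m))) =
      ∫ z, z ∂((stdGaussian (EuclideanSpace ℝ (Fin m))).map (fun y => ‖y‖ ^ 2)) := by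
    rw [integral_map (by fun_prop) (by fun_prop)]
  rw [h, stdGaussian_map_norm_sq, integral_map (Measurable.aemeasurable (by fun_prop)) (by fun_prop),
    integral_finsetSum _ fun i _ => ?_]
  · have : ∀ i : Fin m, ∫ x : Fin m → ℝ, x i ^ 2 ∂(Measure.pi fun _ => gaussianReal 0 1) = 1 :=
      fun i => by
        rw [← integral_sq_gaussianReal]
        conv_rhs => rw [← (measurePreserving_eval (fun _ : Fin m => gaussianReal 0 1) i).map_eq]
        rw [integral_map (measurable_pi_apply i).aemeasurable (by fun_prop)]
    simp [this]
  · exact (measurePreserving_eval (fun _ : Fin m => gaussianReal 0 1) i).integrable_comp_of_integrable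
      (integrable_pow_gaussianReal 2)

lemma variance_norm_sq_stdGaussian :
    Var[fun y => ‖y‖ ^ 2; stdGaussian (EuclideanSpace ℝ (Fin m))] = 2 * m := by
  have h : Var[fun y => ‖y‖ ^ 2; stdGaussian (EuclideanSpace ℝ (Fin m))] =
      Var[id; (stdGaussian (EuclideanSpace ℝ (Fin m))).map (fun y => ‖y‖ ^ 2)] := by
    rw [variance_map (by fun_prop) (by fun_prop)]
    rfl
  rw [h, stdGaussian_map_norm_sq, variance_map (by fun_prop)
    (Measurable.aemeasurable (by fun_prop))]
  have := variance_sum_pi (μ := fun _ : Fin m => gaussianReal 0 1) (X := fun _ x => x ^ 2)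
    fun _ => memLp_sq_gaussianReal
  rw [variance_sq_gaussianReal] at this
  simp only [Finset.sum_const, Finset.card_univ, Fintype.card_fin, nsmul_eq_mul] at this
  rw [mul_comm, ← this]
  congr 1
  funext x
  simp

lemma integral_norm_pow_four_stdGaussian :
    ∫ y, ‖y‖ ^ 4 ∂(stdGaussian (EuclideanSpace ℝ (Fin m))) = m * (m + 2) := by
  have h := variance_norm_sq_stdGaussian (m := m)
  rw [variance_eq_sub memLp_norm_sq_stdGaussian, integral_norm_sq_stdGaussian] at h
  simp only [Pi.pow_apply, ← pow_mul] at h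
  norm_num at h
  linarith

/-- The standardized chi-square law converges to the standard normal law. -/
lemma tendsto_stdGaussian_map_chiSquare {k : ℕ → ℕ} (hk : Tendsto k atTop atTop)
    (μ : ℕ → ProbabilityMeasure ℝ)
    (hμ : ∀ n, (μ n : Measure ℝ) = (stdGaussian (EuclideanSpace ℝ (Fin (k n)))).map
      fun y => (‖y‖ ^ 2 - k n) / √(2 * k n)) :
    Tendsto μ atTop (nhds ⟨gaussianReal 0 1, inferInstance⟩) := by
  have hs2 : √(2 : ℝ) ^ 2 = 2 := Real.sq_sqrt (by norm_num)
  have i2 := integrable_pow_gaussianReal 2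
  have i4 := integrable_pow_gaussianReal 4
  have ic : Integrable (fun _ : ℝ => (1 : ℝ)) (gaussianReal 0 1) := integrable_const _
  refine tendsto_pi_map_gaussianReal (fun _ => gaussianReal 0 1)
    (X := fun _ x => (x ^ 2 - 1) / √2) hk (fun _ => by fun_prop)
    (K := ∫ x, ((x ^ 2 - 1) / √2) ^ 4 ∂(gaussianReal 0 1)) (fun _ => ?_) (fun _ => ?_)
    (fun _ => ?_) (fun _ => le_rfl) μ fun n => ?_
  · have e : ∀ x : ℝ, ((x ^ 2 - 1) / √2) ^ 4 =
        (x ^ 8 - 4 * x ^ 6 + 6 * x ^ 4 - 4 * x ^ 2 + 1) / 4 := fun x => by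
      rw [div_pow, show √(2 : ℝ) ^ 4 = 4 by rw [show 4 = 2 * 2 from rfl, pow_mul, hs2]; norm_num]
      ring
    simp_rw [e]
    exact ((((((integrable_pow_gaussianReal 8).sub ((integrable_pow_gaussianReal 6).const_mul 4)).add
      (i4.const_mul 6)).sub (i2.const_mul 4)).add ic).div_const 4)
  · rw [MeasureTheory.integral_div, MeasureTheory.integral_sub i2 ic, integral_sq_gaussianReal]
    simp
  · have e : ∀ x : ℝ, ((x ^ 2 - 1) / √2) ^ 2 = (x ^ 4 - (2 * x ^ 2 - 1)) / 2 := fun x => by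
      rw [div_pow, hs2]
      ring
    simp_rw [e]
    have i2c : Integrable (fun x : ℝ => 2 * x ^ 2 - 1) (gaussianReal 0 1) := (i2.const_mul 2).sub ic
    rw [MeasureTheory.integral_div, MeasureTheory.integral_sub i4 i2c,
      MeasureTheory.integral_sub (i2.const_mul 2) ic, MeasureTheory.integral_const_mul,
      integral_sq_gaussianReal, integral_pow_four_gaussianReal]
    norm_num
  · have : (fun y : EuclideanSpace ℝ (Fin (k n)) => (‖y‖ ^ 2 - k n) / √(2 * k n)) =
        (fun z : ℝ => (z - k n) / √(2 * k n)) ∘ fun y => ‖y‖ ^ 2 := rfl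
    rw [hμ n, this, ← Measure.map_map (by fun_prop) (by fun_prop), stdGaussian_map_norm_sq,
      Measure.map_map (by fun_prop) (by fun_prop)]
    congr 1
    funext x
    simp only [Function.comp_apply, ← Finset.sum_div, Finset.sum_sub_distrib, Finset.sum_const,
      Finset.card_univ, Fintype.card_fin, nsmul_eq_mul, mul_one]
    rw [Real.sqrt_mul (by norm_num)]
    field_simp

/-- Uniform direction of a standard Gaussian vector, weighted by a function of its length. -/
lemma integral_inner_sq_mul_norm_stdGaussian_le {φ : ℝ → ℝ} (hφ : Measurable φ)
    (hφ0 : ∀ r, 0 ≤ φ r)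
    (hi : Integrable (fun y => φ ‖y‖) (stdGaussian (EuclideanSpace ℝ (Fin m))))
    {e : EuclideanSpace ℝ (Fin m)} (he : ‖e‖ = 1) :
    ∫ y, ⟪‖y‖⁻¹ • y, e⟫ ^ 2 * φ ‖y‖ ∂(stdGaussian (EuclideanSpace ℝ (Fin m))) ≤
      (∫ y, φ ‖y‖ ∂(stdGaussian (EuclideanSpace ℝ (Fin m)))) / m := by
  set γ := stdGaussian (EuclideanSpace ℝ (Fin m)) with hγ
  have hm : 0 < m := by
    rcases Nat.eq_zero_or_pos m with rfl | h
    · rw [Subsingleton.elim e 0] at he; simp at he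
    · exact h
  let b := EuclideanSpace.basisFun (Fin m) ℝ
  have hnorm : ∀ y : EuclideanSpace ℝ (Fin m), ‖‖y‖⁻¹ • y‖ ≤ 1 := fun y => by
    rw [norm_smul, norm_inv, norm_norm]
    exact inv_mul_le_one
  have hint : ∀ d : EuclideanSpace ℝ (Fin m), ‖d‖ = 1 →
      Integrable (fun y => ⟪‖y‖⁻¹ • y, d⟫ ^ 2 * φ ‖y‖) γ := fun d hd => by
    refine hi.mono' (by fun_prop) (ae_of_all _ fun y => ?_)
    rw [Real.norm_of_nonneg (mul_nonneg (sq_nonneg _) (hφ0 _))]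
    have h1 : |⟪‖y‖⁻¹ • y, d⟫| ≤ 1 := (abs_real_inner_le_norm _ _).trans (by
      rw [hd, mul_one]; exact hnorm y)
    have h2 : ⟪‖y‖⁻¹ • y, d⟫ ^ 2 ≤ 1 := by rw [← sq_abs]; exact pow_le_one₀ (abs_nonneg _) h1
    nlinarith [hφ0 ‖y‖]
  have hrot : ∀ i, ∫ y, ⟪‖y‖⁻¹ • y, b i⟫ ^ 2 * φ ‖y‖ ∂γ = ∫ y, ⟪‖y‖⁻¹ • y, e⟫ ^ 2 * φ ‖y‖ ∂γ :=
    fun i => by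
      have hb : ‖e‖ = ‖b i‖ := by rw [he, b.norm_eq_one]
      let f := (ℝ ∙ (e - b i))ᗮ.reflection
      have hf : f e = b i := Submodule.reflection_sub hb
      have hmap : γ.map f = γ := stdGaussian_map f
      conv_lhs => rw [← hmap]
      rw [integral_map f.continuous.aemeasurable (by fun_prop)]
      refine MeasureTheory.integral_congr_ae (ae_of_all _ fun y => ?_)
      simp only [f.norm_map]
      rw [← hf, ← map_smul, f.inner_map_map]
  have hsum : ∑ i, ∫ y, ⟪‖y‖⁻¹ • y, b i⟫ ^ 2 * φ ‖y‖ ∂γ ≤ ∫ y, φ ‖y‖ ∂γ := by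
    rw [← integral_finsetSum _ fun i _ => hint _ (b.norm_eq_one i)]
    refine MeasureTheory.integral_mono (integrable_finsetSum _ fun i _ => hint _ (b.norm_eq_one i)) hi
      fun y => ?_
    simp only [← Finset.sum_mul]
    rw [b.sum_sq_inner_left]
    have := pow_le_one₀ (n := 2) (norm_nonneg _) (hnorm y)
    nlinarith [hφ0 ‖y‖]
  simp only [hrot, Finset.sum_const, Finset.card_univ, Fintype.card_fin, nsmul_eq_mul] at hsum
  rw [le_div_iff₀ (by exact_mod_cast hm)]
  linarith

end ChiSquare

section DirectionGap

variable {m : ℕ}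

/-- The error in replacing the inner product of two directions by the rescaled inner product of
the vectors. -/
noncomputable def dirGap (m : ℕ) (x y : EuclideanSpace ℝ (Fin m)) : ℝ :=
  ⟪‖x‖⁻¹ • x, ‖y‖⁻¹ • y⟫ - ⟪x, y⟫ / m

lemma measurable_dirGap : Measurable fun z : EuclideanSpace ℝ (Fin m) × EuclideanSpace ℝ (Fin m) =>
    dirGap m z.1 z.2 := by
  unfold dirGap
  fun_prop

lemma dirGap_comm (x y : EuclideanSpace ℝ (Fin m)) : dirGap m x y = dirGap m y x := by
  rw [dirGap, dirGap, real_inner_comm, real_inner_comm x y]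

lemma dirGap_neg_left (x y : EuclideanSpace ℝ (Fin m)) : dirGap m (-x) y = -dirGap m x y := by
  simp [dirGap]
  ring

lemma dirGap_neg_right (x y : EuclideanSpace ℝ (Fin m)) : dirGap m x (-y) = -dirGap m x y := by
  rw [dirGap_comm, dirGap_neg_left, dirGap_comm]

lemma dirGap_eq (x y : EuclideanSpace ℝ (Fin m)) :
    dirGap m x y = ⟪‖y‖⁻¹ • y, ‖x‖⁻¹ • x⟫ * (1 - ‖x‖ * ‖y‖ / m) := by
  rcases eq_or_ne x 0 with rfl | hx
  · simp [dirGap]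
  rcases eq_or_ne y 0 with rfl | hy
  · simp [dirGap]
  have h1 := norm_ne_zero_iff.2 hx
  have h2 := norm_ne_zero_iff.2 hy
  rw [dirGap, real_inner_comm]
  simp only [inner_smul_left, inner_smul_right, RCLike.conj_to_real]
  rw [real_inner_comm x y]
  field_simp

lemma abs_inner_direction_le (x y : EuclideanSpace ℝ (Fin m)) :
    ⟪‖y‖⁻¹ • y, ‖x‖⁻¹ • x⟫ ^ 2 ≤ 1 := by
  have hnorm : ∀ y : EuclideanSpace ℝ (Fin m), ‖‖y‖⁻¹ • y‖ ≤ 1 := fun y => by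
    rw [norm_smul, norm_inv, norm_norm]
    exact inv_mul_le_one
  have h := (abs_real_inner_le_norm (‖y‖⁻¹ • y) (‖x‖⁻¹ • x)).trans
    (mul_le_one₀ (hnorm y) (norm_nonneg _) (hnorm x))
  rw [← sq_abs]
  exact pow_le_one₀ (abs_nonneg _) h

lemma dirGap_sq_le (x y : EuclideanSpace ℝ (Fin m)) :
    dirGap m x y ^ 2 ≤
      ⟪‖y‖⁻¹ • y, ‖x‖⁻¹ • x⟫ ^ 2 * (1 - ‖x‖ ^ 2 / m ^ 2 * ‖y‖ ^ 2) ^ 2 := by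
  rw [dirGap_eq, mul_pow]
  refine mul_le_mul_of_nonneg_left ?_ (sq_nonneg _)
  have ht : 0 ≤ ‖x‖ * ‖y‖ / m := by positivity
  have e : 1 - ‖x‖ ^ 2 / m ^ 2 * ‖y‖ ^ 2 =
      (1 - ‖x‖ * ‖y‖ / m) * (1 + ‖x‖ * ‖y‖ / m) := by ring
  rw [e, mul_pow]
  exact le_mul_of_one_le_right (sq_nonneg _) (one_le_pow₀ (by linarith))

local notation "γ" => stdGaussian (EuclideanSpace ℝ (Fin m))

lemma integrable_norm_sq_stdGaussian : Integrable (fun y => ‖y‖ ^ 2) γ :=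
  memLp_norm_sq_stdGaussian.integrable (by norm_num)

lemma integrable_norm_pow_four_stdGaussian : Integrable (fun y => ‖y‖ ^ 4) γ := by
  simpa [← pow_mul] using memLp_norm_sq_stdGaussian.integrable_sq

lemma integrable_dirGap_sq :
    Integrable (fun z => dirGap m z.1 z.2 ^ 2) ((γ).prod γ) := by
  have h := ((integrable_const (1 : ℝ)).sub
    (((integrable_norm_sq_stdGaussian (m := m)).mul_prod
      (integrable_norm_sq_stdGaussian (m := m))).const_mul (2 / (m : ℝ) ^ 2))).add
    (((integrable_norm_pow_four_stdGaussian (m := m)).mul_prod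
      (integrable_norm_pow_four_stdGaussian (m := m))).const_mul (1 / (m : ℝ) ^ 4))
  refine h.mono' (measurable_dirGap.pow_const 2).aestronglyMeasurable (ae_of_all _ fun z => ?_)
  rw [Real.norm_of_nonneg (sq_nonneg _)]
  refine (dirGap_sq_le _ _).trans ((mul_le_of_le_one_left (sq_nonneg _)
    (abs_inner_direction_le _ _)).trans (le_of_eq ?_))
  simp only [Pi.add_apply, Pi.sub_apply]
  ring

lemma integral_dirGap_sq_le (hm : 0 < m) :
    ∫ z, dirGap m z.1 z.2 ^ 2 ∂((γ).prod γ) ≤ 8 / (m : ℝ) ^ 2 := by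
  have hm' : (0 : ℝ) < m := by exact_mod_cast hm
  have hm1 : (1 : ℝ) ≤ m := by exact_mod_cast hm
  have ic : Integrable (fun _ => (1 : ℝ)) γ := integrable_const _
  have i2 := integrable_norm_sq_stdGaussian (m := m)
  have i4 := integrable_norm_pow_four_stdGaussian (m := m)
  have hquad : ∀ a b c : ℝ, ∫ y, (a - b * ‖y‖ ^ 2 + c * ‖y‖ ^ 4) ∂γ =
      a - b * m + c * (m * (m + 2)) := fun a b c => by
    have j1 : Integrable (fun _ => a) γ := integrable_const _
    have j2 : Integrable (fun y => a - b * ‖y‖ ^ 2) γ := j1.sub (i2.const_mul b)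
    rw [MeasureTheory.integral_add j2 (i4.const_mul c),
      MeasureTheory.integral_sub j1 (i2.const_mul b), MeasureTheory.integral_const_mul,
      MeasureTheory.integral_const_mul, integral_norm_sq_stdGaussian,
      integral_norm_pow_four_stdGaussian]
    simp
  have iquad : ∀ a b c : ℝ, Integrable (fun y => a - b * ‖y‖ ^ 2 + c * ‖y‖ ^ 4) γ :=
    fun a b c => (((integrable_const a).sub (i2.const_mul b)).add (i4.const_mul c))
  rw [MeasureTheory.integral_prod _ integrable_dirGap_sq]
  have inner_le : ∀ x : EuclideanSpace ℝ (Fin m), ∫ y, dirGap m x y ^ 2 ∂γ ≤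
      1 / m - 2 / m ^ 2 * ‖x‖ ^ 2 + (m + 2) / m ^ 4 * ‖x‖ ^ 4 := fun x => by
    rcases eq_or_ne x 0 with rfl | hx
    · simp [dirGap]
    have hφ : ∀ r : ℝ, (1 - ‖x‖ ^ 2 / m ^ 2 * r ^ 2) ^ 2 =
        1 - 2 * (‖x‖ ^ 2 / m ^ 2) * r ^ 2 + ‖x‖ ^ 4 / m ^ 4 * r ^ 4 := fun r => by
      field_simp; ring
    have hφi : Integrable (fun y => (1 - ‖x‖ ^ 2 / m ^ 2 * ‖y‖ ^ 2) ^ 2) γ := by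
      simp_rw [hφ]
      exact iquad _ _ _
    have key := integral_inner_sq_mul_norm_stdGaussian_le
      (φ := fun r => (1 - ‖x‖ ^ 2 / m ^ 2 * r ^ 2) ^ 2) (by fun_prop) (fun _ => sq_nonneg _) hφi
      (e := ‖x‖⁻¹ • x) (norm_smul_inv_norm hx)
    have hle : ∫ y, dirGap m x y ^ 2 ∂γ ≤
        ∫ y, ⟪‖y‖⁻¹ • y, ‖x‖⁻¹ • x⟫ ^ 2 * (1 - ‖x‖ ^ 2 / m ^ 2 * ‖y‖ ^ 2) ^ 2 ∂γ := by
      refine integral_mono_of_nonneg (ae_of_all _ fun _ => sq_nonneg _) ?_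
        (ae_of_all _ fun y => dirGap_sq_le x y)
      refine hφi.mono' (by fun_prop) (ae_of_all _ fun y => ?_)
      rw [Real.norm_of_nonneg (by positivity)]
      exact mul_le_of_le_one_left (sq_nonneg _) (abs_inner_direction_le _ _)
    refine (hle.trans key).trans (le_of_eq ?_)
    simp_rw [hφ]
    rw [hquad]
    field_simp
  refine (MeasureTheory.integral_mono integrable_dirGap_sq.integral_prod_left (iquad _ _ _)
    inner_le).trans ?_
  rw [hquad, ← sub_nonneg]
  have : 8 / (m : ℝ) ^ 2 - (1 / m - 2 / m ^ 2 * m + (m + 2) / m ^ 4 * (m * (m + 2))) =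
      4 * (m - 1) / m ^ 3 := by field_simp; ring
  rw [this]
  have : (0 : ℝ) ≤ m - 1 := by linarith
  positivity

lemma ae_ne_zero_stdGaussian (hm : 0 < m) : ∀ᵐ y ∂γ, y ≠ 0 := by
  have h := (measurePreserving_eval (fun _ : Fin m => gaussianReal 0 1) ⟨0, hm⟩).quasiMeasurePreserving
  have : NullSingletonClass (gaussianReal 0 1) :=
    nullSingletonClass_gaussianReal (by simp)
  have h0 : ∀ᵐ x ∂(gaussianReal 0 1), x ≠ 0 := by
    rw [ae_iff]; simp
  rw [← map_pi_eq_stdGaussian]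
  refine (ae_map_iff (p := fun y => y ≠ 0) (by fun_prop) (measurableSet_singleton 0).compl).2 ?_
  filter_upwards [h.ae h0] with x hx h
  apply hx
  have := congrArg (fun z : EuclideanSpace ℝ (Fin m) => z ⟨0, hm⟩) h
  simpa using this

lemma dirGap_self_ae (hm : 0 < m) : ∀ᵐ y ∂γ, dirGap m y y = 1 - ‖y‖ ^ 2 / m := by
  filter_upwards [ae_ne_zero_stdGaussian hm] with y hy
  rw [dirGap, real_inner_self_eq_norm_sq, real_inner_self_eq_norm_sq, norm_smul, norm_inv,
    norm_norm, inv_mul_cancel₀ (norm_ne_zero_iff.2 hy)]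
  simp

lemma memLp_dirGap_self (hm : 0 < m) : MemLp (fun y => dirGap m y y) 2 γ := by
  have h : MemLp (fun y => 1 - ‖y‖ ^ 2 / m) 2 γ :=
    (memLp_const (1 : ℝ)).sub ((memLp_norm_sq_stdGaussian (m := m)).mul_const (m : ℝ)⁻¹)
  exact (memLp_congr_ae (dirGap_self_ae hm)).2 h

lemma integral_dirGap_self (hm : 0 < m) : ∫ y, dirGap m y y ∂γ = 0 := by
  have hm' : (m : ℝ) ≠ 0 := by exact_mod_cast hm.ne'
  rw [MeasureTheory.integral_congr_ae (dirGap_self_ae hm),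
    MeasureTheory.integral_sub (integrable_const _) (integrable_norm_sq_stdGaussian.div_const _),
    MeasureTheory.integral_div, integral_norm_sq_stdGaussian]
  simp [hm']

lemma variance_dirGap_self (hm : 0 < m) : Var[fun y => dirGap m y y; γ] = 2 / m := by
  have hm' : (m : ℝ) ≠ 0 := by exact_mod_cast hm.ne'
  rw [variance_congr (dirGap_self_ae hm), variance_const_sub (by fun_prop)]
  have : (fun y : EuclideanSpace ℝ (Fin m) => ‖y‖ ^ 2 / (m : ℝ)) = fun y => (m : ℝ)⁻¹ * ‖y‖ ^ 2 := by
    funext y; ring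
  rw [this, variance_const_mul, variance_norm_sq_stdGaussian]
  field_simp

variable {n : ℕ}

local notation "Γ" => Measure.pi fun _ : Fin n => stdGaussian (EuclideanSpace ℝ (Fin m))

lemma map_pair_pi_stdGaussian {i j : Fin n} (hij : i ≠ j) :
    (Γ).map (fun ω => (ω i, ω j)) = (γ).prod γ := by
  have hind : iIndepFun (fun (i : Fin n) (ω : Fin n → EuclideanSpace ℝ (Fin m)) => ω i) Γ :=
    iIndepFun_pi (X := fun _ => id) fun _ => aemeasurable_id
  have h := (indepFun_iff_map_prod_eq_prod_map_map (measurable_pi_apply i).aemeasurable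
    (measurable_pi_apply j).aemeasurable).1 (hind.indepFun hij)
  rw [h]
  exact congrArg₂ Measure.prod (measurePreserving_eval (fun _ : Fin n => γ) i).map_eq
    (measurePreserving_eval (fun _ : Fin n => γ) j).map_eq

lemma measurable_dirGap_pi (i j : Fin n) :
    Measurable fun ω : Fin n → EuclideanSpace ℝ (Fin m) => dirGap m (ω i) (ω j) := by
  unfold dirGap
  fun_prop

lemma memLp_dirGap_pi {i j : Fin n} (hij : i ≠ j) :
    MemLp (fun ω => dirGap m (ω i) (ω j)) 2 Γ := by
  rw [memLp_two_iff_integrable_sq (measurable_dirGap_pi i j).aestronglyMeasurable]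
  have h := integrable_dirGap_sq (m := m)
  rw [← map_pair_pi_stdGaussian hij] at h
  exact h.comp_measurable ((measurable_pi_apply i).prodMk (measurable_pi_apply j))

lemma integral_dirGap_pi_sq_le (hm : 0 < m) {i j : Fin n} (hij : i ≠ j) :
    ∫ ω, dirGap m (ω i) (ω j) ^ 2 ∂Γ ≤ 8 / (m : ℝ) ^ 2 := by
  have h := integral_dirGap_sq_le hm
  rw [← map_pair_pi_stdGaussian hij, integral_map
    ((measurable_pi_apply i).prodMk (measurable_pi_apply j)).aemeasurable
    (measurable_dirGap.pow_const 2).aestronglyMeasurable] at h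
  exact h

/-- Reversing one of the independent Gaussian vectors preserves their joint law. -/
lemma measurePreserving_neg_single (a : Fin n) :
    MeasurePreserving (fun (ω : Fin n → EuclideanSpace ℝ (Fin m)) i => if i = a then -ω i else ω i)
      Γ Γ := by
  refine measurePreserving_pi (fun _ => γ) (fun _ => γ) (f := fun i y => if i = a then -y else y)
    fun i => ?_
  by_cases h : i = a
  · simp only [h, if_true]
    exact ⟨measurable_neg, stdGaussian_map (LinearIsometryEquiv.neg ℝ)⟩
  · simp only [h, if_false]
    exact MeasurePreserving.id _

lemma integral_eq_zero_of_neg_single {g : (Fin n → EuclideanSpace ℝ (Fin m)) → ℝ}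
    (hg : Measurable g) (a : Fin n) (h : ∀ ω, g (fun i => if i = a then -ω i else ω i) = -g ω) :
    ∫ ω, g ω ∂Γ = 0 := by
  have hp := measurePreserving_neg_single (m := m) a
  have e : ∫ ω, g ω ∂Γ = ∫ ω, -g ω ∂Γ := by
    conv_lhs => rw [← hp.map_eq]
    rw [integral_map hp.measurable.aemeasurable hg.aestronglyMeasurable]
    simp only [h]
  rw [MeasureTheory.integral_neg] at e
  linarith

lemma integral_dirGap_mul_dirGap_eq_zero {i j k l : Fin n} (hij : i ≠ j) (hkl : k ≠ l)
    (h1 : ¬ (k = i ∧ l = j)) (h2 : ¬ (k = j ∧ l = i)) :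
    ∫ ω, dirGap m (ω i) (ω j) * dirGap m (ω k) (ω l) ∂Γ = 0 := by
  have hmeas := (measurable_dirGap_pi (m := m) i j).mul (measurable_dirGap_pi (m := m) k l)
  by_cases hi : i = k ∨ i = l
  · have hj : ¬ (j = k ∨ j = l) := by
      rintro (rfl | rfl) <;> rcases hi with rfl | rfl <;> simp_all
    push Not at hj
    refine integral_eq_zero_of_neg_single hmeas j fun ω => ?_
    simp [hij, hj.1.symm, hj.2.symm, dirGap_neg_right]
  · push Not at hi
    refine integral_eq_zero_of_neg_single hmeas i fun ω => ?_
    simp [hij.symm, hi.1.symm, hi.2.symm, dirGap_neg_left]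

end DirectionGap

section QuadraticGap

variable {m n : ℕ}

local notation "Γ" => Measure.pi fun _ : Fin n => stdGaussian (EuclideanSpace ℝ (Fin m))

lemma integral_diag_dirGap_sq (hm : 0 < m) (w : Fin n → ℝ) :
    MemLp (fun ω => ∑ i, w i * dirGap m (ω i) (ω i)) 2 Γ ∧
      ∫ ω, (∑ i, w i * dirGap m (ω i) (ω i)) ^ 2 ∂Γ = (∑ i, w i ^ 2) * (2 / m) := by
  have hL : ∀ i : Fin n, MemLp (fun y => w i * dirGap m y y) 2
      (stdGaussian (EuclideanSpace ℝ (Fin m))) := fun i => (memLp_dirGap_self hm).const_mul (w i)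
  have hLp : ∀ i : Fin n, MemLp (fun ω => w i * dirGap m (ω i) (ω i)) 2 Γ := fun i =>
    (hL i).comp_measurePreserving (measurePreserving_eval _ i)
  have hsum : MemLp (fun ω => ∑ i, w i * dirGap m (ω i) (ω i)) 2 Γ :=
    memLp_finsetSum _ fun i _ => hLp i
  refine ⟨hsum, ?_⟩
  have hv := variance_sum_pi (μ := fun _ : Fin n => stdGaussian (EuclideanSpace ℝ (Fin m)))
    (X := fun i y => w i * dirGap m y y) hL
  have hfun : (∑ i, fun ω : Fin n → EuclideanSpace ℝ (Fin m) => w i * dirGap m (ω i) (ω i)) =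
      fun ω => ∑ i, w i * dirGap m (ω i) (ω i) := by
    funext ω
    simp
  rw [hfun, variance_of_integral_eq_zero hsum.aemeasurable] at hv
  · simp only [variance_const_mul, variance_dirGap_self hm] at hv
    rw [hv, Finset.sum_mul]
  · rw [integral_finsetSum _ fun i _ => (hLp i).integrable (by norm_num)]
    refine Finset.sum_eq_zero fun i _ => ?_
    have h0 : ∫ y, w i * dirGap m y y ∂(stdGaussian (EuclideanSpace ℝ (Fin m))) = 0 := by
      rw [MeasureTheory.integral_const_mul, integral_dirGap_self hm, mul_zero]
    rw [← (measurePreserving_eval (fun _ : Fin n => stdGaussian (EuclideanSpace ℝ (Fin m))) i).map_eq,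
      integral_map (measurable_pi_apply i).aemeasurable ?_] at h0
    · exact h0
    · rw [(measurePreserving_eval (fun _ : Fin n => stdGaussian (EuclideanSpace ℝ (Fin m))) i).map_eq]
      exact (hL i).aestronglyMeasurable

lemma integral_offDiag_dirGap_sq_le (hm : 0 < m) (v : Fin n → ℝ) :
    MemLp (fun ω => ∑ q ∈ (Finset.univ : Finset (Fin n)).offDiag,
        v q.1 * v q.2 * dirGap m (ω q.1) (ω q.2)) 2 Γ ∧
      ∫ ω, (∑ q ∈ (Finset.univ : Finset (Fin n)).offDiag,
        v q.1 * v q.2 * dirGap m (ω q.1) (ω q.2)) ^ 2 ∂Γ ≤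
        16 * (∑ i, v i ^ 2) ^ 2 / (m : ℝ) ^ 2 := by
  set D := (Finset.univ : Finset (Fin n)).offDiag with hD
  have hne : ∀ q ∈ D, q.1 ≠ q.2 := fun q hq => (Finset.mem_offDiag.1 hq).2.2
  have hL : ∀ q ∈ D, MemLp (fun ω => v q.1 * v q.2 * dirGap m (ω q.1) (ω q.2)) 2 Γ :=
    fun q hq => (memLp_dirGap_pi (hne q hq)).const_mul _
  refine ⟨memLp_finsetSum _ hL, ?_⟩
  have hi : ∀ q ∈ D, ∀ r ∈ D, Integrable (fun ω => (v q.1 * v q.2 * dirGap m (ω q.1) (ω q.2)) *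
      (v r.1 * v r.2 * dirGap m (ω r.1) (ω r.2))) Γ := fun q hq r hr =>
    (hL q hq).integrable_mul (hL r hr)
  have hexp : ∀ ω : Fin n → EuclideanSpace ℝ (Fin m),
      (∑ q ∈ D, v q.1 * v q.2 * dirGap m (ω q.1) (ω q.2)) ^ 2 =
      ∑ q ∈ D, ∑ r ∈ D, (v q.1 * v q.2 * dirGap m (ω q.1) (ω q.2)) *
        (v r.1 * v r.2 * dirGap m (ω r.1) (ω r.2)) := fun ω => by
    rw [sq, Finset.sum_mul_sum]
  simp_rw [hexp]
  rw [integral_finsetSum _ fun q hq => integrable_finsetSum _ fun r hr => hi q hq r hr]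
  have hq_le : ∀ q ∈ D, ∫ ω, ∑ r ∈ D, (v q.1 * v q.2 * dirGap m (ω q.1) (ω q.2)) *
      (v r.1 * v r.2 * dirGap m (ω r.1) (ω r.2)) ∂Γ ≤
      (v q.1 ^ 2 * v q.2 ^ 2) * (16 / (m : ℝ) ^ 2) := fun q hq => by
    have hq12 := hne q hq
    rw [integral_finsetSum _ fun r hr => hi q hq r hr,
      Finset.sum_eq_add (s := D) q q.swap (fun h => hq12 (congrArg Prod.fst h)) ?_ ?_ ?_]
    · have e1 : ∀ ω : Fin n → EuclideanSpace ℝ (Fin m),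
          (v q.1 * v q.2 * dirGap m (ω q.1) (ω q.2)) *
            (v q.1 * v q.2 * dirGap m (ω q.1) (ω q.2)) =
          (v q.1 ^ 2 * v q.2 ^ 2) * dirGap m (ω q.1) (ω q.2) ^ 2 := fun ω => by ring
      have e2 : ∀ ω : Fin n → EuclideanSpace ℝ (Fin m),
          (v q.1 * v q.2 * dirGap m (ω q.1) (ω q.2)) *
            (v q.swap.1 * v q.swap.2 * dirGap m (ω q.swap.1) (ω q.swap.2)) =
          (v q.1 ^ 2 * v q.2 ^ 2) * dirGap m (ω q.1) (ω q.2) ^ 2 := fun ω => by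
        simp only [Prod.fst_swap, Prod.snd_swap, dirGap_comm (ω q.2) (ω q.1)]
        ring
      simp_rw [e1, e2]
      rw [MeasureTheory.integral_const_mul, ← mul_add]
      refine mul_le_mul_of_nonneg_left ?_ (by positivity)
      have := integral_dirGap_pi_sq_le hm hq12
      rw [show (16 : ℝ) / m ^ 2 = 8 / m ^ 2 + 8 / m ^ 2 by ring]
      linarith
    · rintro r hr ⟨h1, h2⟩
      have e : ∀ ω : Fin n → EuclideanSpace ℝ (Fin m),
          (v q.1 * v q.2 * dirGap m (ω q.1) (ω q.2)) *
            (v r.1 * v r.2 * dirGap m (ω r.1) (ω r.2)) =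
          (v q.1 * v q.2 * (v r.1 * v r.2)) *
            (dirGap m (ω q.1) (ω q.2) * dirGap m (ω r.1) (ω r.2)) := fun ω => by ring
      simp_rw [e]
      rw [MeasureTheory.integral_const_mul, integral_dirGap_mul_dirGap_eq_zero hq12 (hne r hr)
        (fun h => h1 (Prod.ext h.1 h.2)) (fun h => h2 (Prod.ext h.1 h.2)), mul_zero]
    · exact fun h => absurd hq h
    · intro h
      exact absurd (Finset.mem_offDiag.2 ⟨Finset.mem_univ _, Finset.mem_univ _, hq12.symm⟩) h
  refine (Finset.sum_le_sum hq_le).trans ?_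
  rw [← Finset.sum_mul]
  have hs : ∑ q ∈ D, v q.1 ^ 2 * v q.2 ^ 2 ≤ (∑ i, v i ^ 2) ^ 2 := by
    rw [sq, Finset.sum_mul_sum, ← Finset.sum_product']
    exact Finset.sum_le_sum_of_subset_of_nonneg (fun q _ => by simp) fun _ _ _ => by positivity
  have := mul_le_mul_of_nonneg_right hs (show (0 : ℝ) ≤ 16 / (m : ℝ) ^ 2 by positivity)
  refine this.trans (le_of_eq ?_)
  ring

lemma norm_sum_direction_sq_sub (v : Fin n → ℝ) (ω : Fin n → EuclideanSpace ℝ (Fin m)) :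
    ‖∑ i, v i • (‖ω i‖⁻¹ • ω i)‖ ^ 2 - ‖∑ i, v i • ω i‖ ^ 2 / m =
      (∑ i, v i ^ 2 * dirGap m (ω i) (ω i)) +
        ∑ q ∈ (Finset.univ : Finset (Fin n)).offDiag,
          v q.1 * v q.2 * dirGap m (ω q.1) (ω q.2) := by
  have h : (∑ i, v i ^ 2 * dirGap m (ω i) (ω i)) +
      ∑ q ∈ (Finset.univ : Finset (Fin n)).offDiag, v q.1 * v q.2 * dirGap m (ω q.1) (ω q.2) =
      ∑ i, ∑ j, v i * v j * dirGap m (ω i) (ω j) := by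
    rw [← Finset.sum_product', ← Finset.diag_union_offDiag,
      Finset.sum_union (Finset.disjoint_diag_offDiag _), Finset.sum_diag]
    simp only [sq]
  rw [h, ← real_inner_self_eq_norm_sq, ← real_inner_self_eq_norm_sq]
  simp only [sum_inner, inner_sum, Finset.sum_div, ← Finset.sum_sub_distrib, dirGap]
  rw [Finset.sum_comm]
  refine Finset.sum_congr rfl fun i _ => Finset.sum_congr rfl fun j _ => ?_
  simp only [inner_smul_left, inner_smul_right, RCLike.conj_to_real]
  rw [real_inner_comm]
  ring

lemma integral_norm_sum_direction_sub_sq_le (hm : 0 < m) (v : Fin n → ℝ) :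
    Integrable (fun ω => (‖∑ i, v i • (‖ω i‖⁻¹ • ω i)‖ ^ 2 - ‖∑ i, v i • ω i‖ ^ 2 / m) ^ 2) Γ ∧
    ∫ ω, (‖∑ i, v i • (‖ω i‖⁻¹ • ω i)‖ ^ 2 - ‖∑ i, v i • ω i‖ ^ 2 / m) ^ 2 ∂Γ ≤
      4 * (∑ i, v i ^ 4) / m + 32 * (∑ i, v i ^ 2) ^ 2 / (m : ℝ) ^ 2 := by
  obtain ⟨hA, hA2⟩ := integral_diag_dirGap_sq (n := n) hm fun i => v i ^ 2
  obtain ⟨hB, hB2⟩ := integral_offDiag_dirGap_sq_le hm v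
  simp_rw [norm_sum_direction_sq_sub]
  refine ⟨(hA.add hB).integrable_sq, ?_⟩
  have hle := MeasureTheory.integral_mono (hA.add hB).integrable_sq
    ((hA.integrable_sq.const_mul 2).add (hB.integrable_sq.const_mul 2)) fun ω => by
      simp only [Pi.add_apply]
      exact add_sq_le.trans (le_of_eq (mul_add _ _ _))
  refine hle.trans ?_
  simp only [Pi.add_apply]
  rw [MeasureTheory.integral_add (hA.integrable_sq.const_mul 2) (hB.integrable_sq.const_mul 2),
    MeasureTheory.integral_const_mul, MeasureTheory.integral_const_mul, hA2]
  simp only [← pow_mul]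
  norm_num
  calc _ ≤ 2 * ((∑ i, v i ^ 4) * (2 / m)) + 2 * (16 * (∑ i, v i ^ 2) ^ 2 / (m : ℝ) ^ 2) := by gcongr
    _ = _ := by ring

end QuadraticGap

lemma integral_sum_sq_div_sq_sum_le {Ω : Type*} [MeasurableSpace Ω] {P : Measure Ω}
    [IsProbabilityMeasure P] {x : Ω → ℝ} (hx : Measurable x) (h0 : ∀ ω, 0 ≤ x ω)
    (h1 : ∀ ω, x ω ≤ 1) (hμ : 0 < ∫ ω, x ω ∂P) {K : ℝ}
    (hK : ∫ ω, x ω ^ 2 ∂P ≤ K * (∫ ω, x ω ∂P) ^ 2) {n : ℕ} (hn : 0 < n) :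
    ∫ ω, (∑ i, x (ω i) ^ 2) / (∑ i, x (ω i)) ^ 2 ∂(Measure.pi fun _ : Fin n => P) ≤ 8 * K / n := by
  set μ := ∫ ω, x ω ∂P with hμd
  set Q := Measure.pi fun _ : Fin n => P with hQ
  have hn' : (0 : ℝ) < n := by exact_mod_cast hn
  have hL : MemLp x 2 P := MemLp.of_bound hx.aestronglyMeasurable 1
    (ae_of_all _ fun ω => by rw [Real.norm_of_nonneg (h0 ω)]; exact h1 ω)
  have hLp : ∀ i : Fin n, MemLp (fun ω : Fin n → Ω => x (ω i)) 2 Q := fun i =>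
    hL.comp_measurePreserving (measurePreserving_eval (fun _ : Fin n => P) i)
  have hmean : ∀ (i : Fin n) (g : Ω → ℝ), Measurable g → ∫ ω, g (ω i) ∂Q = ∫ ω, g ω ∂P :=
    fun i g hg => by
      rw [← (measurePreserving_eval (fun _ : Fin n => P) i).map_eq,
        integral_map (measurable_pi_apply i).aemeasurable hg.aestronglyMeasurable]
  have hS : MemLp (fun ω : Fin n → Ω => ∑ i, x (ω i)) 2 Q := memLp_finsetSum _ fun i _ => hLp i
  have hSm : ∫ ω, ∑ i, x (ω i) ∂Q = n * μ := by
    rw [integral_finsetSum _ fun i _ => (hLp i).integrable (by norm_num)]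
    simp [hmean _ x hx, hμd]
  have hVar : ∫ ω, (∑ i, x (ω i) - n * μ) ^ 2 ∂Q ≤ n * (K * μ ^ 2) := by
    have hv := variance_sum_pi (μ := fun _ : Fin n => P) (X := fun _ => x) fun _ => hL
    have hfun : (∑ i, fun ω : Fin n → Ω => x (ω i)) = fun ω => ∑ i, x (ω i) := by
      funext ω; simp
    rw [hfun, variance_eq_integral hS.aemeasurable, hSm] at hv
    rw [hv, Finset.sum_const, Finset.card_univ, Fintype.card_fin, nsmul_eq_mul]
    gcongr
    refine (variance_le_expectation_sq hx.aestronglyMeasurable).trans ?_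
    simpa using hK
  have hSq : ∫ ω, ∑ i, x (ω i) ^ 2 ∂Q ≤ n * (K * μ ^ 2) := by
    rw [integral_finsetSum _ fun i _ => (hLp i).integrable_sq]
    simp only [hmean _ (fun ω => x ω ^ 2) (by fun_prop), Finset.sum_const, Finset.card_univ,
      Fintype.card_fin, nsmul_eq_mul]
    gcongr
  have hiSq : Integrable (fun ω : Fin n → Ω => ∑ i, x (ω i) ^ 2) Q :=
    integrable_finsetSum _ fun i _ => (hLp i).integrable_sq
  have hiV : Integrable (fun ω : Fin n → Ω => (∑ i, x (ω i) - n * μ) ^ 2) Q :=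
    (hS.sub (memLp_const (n * μ))).integrable_sq
  have hpt : ∀ ω : Fin n → Ω, (∑ i, x (ω i) ^ 2) / (∑ i, x (ω i)) ^ 2 ≤
      4 / (n * μ) ^ 2 * (∑ i, x (ω i) ^ 2 + (∑ i, x (ω i) - n * μ) ^ 2) := fun ω => by
    set s := ∑ i, x (ω i) with hs
    have hs0 : 0 ≤ s := Finset.sum_nonneg fun i _ => h0 _
    have hq0 : 0 ≤ ∑ i, x (ω i) ^ 2 := Finset.sum_nonneg fun i _ => sq_nonneg _
    have hqs : ∑ i, x (ω i) ^ 2 ≤ s ^ 2 := Finset.sum_sq_le_sq_sum_of_nonneg fun i _ => h0 _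
    have hnμ : 0 < n * μ := by positivity
    rcases le_or_gt (n * μ / 2) s with h | h
    · have hsp : 0 < s := by linarith
      rw [div_mul_eq_mul_div, div_le_div_iff₀ (by positivity) (by positivity)]
      have : (n * μ) ^ 2 ≤ 4 * s ^ 2 := by nlinarith
      nlinarith [mul_le_mul_of_nonneg_left this hq0, mul_nonneg (sq_nonneg (s - n * μ)) (sq_nonneg s)]
    · refine (div_le_one_of_le₀ hqs (sq_nonneg _)).trans ?_
      rw [div_mul_eq_mul_div, le_div_iff₀ (by positivity)]
      nlinarith
  calc _ ≤ ∫ ω, 4 / (n * μ) ^ 2 * (∑ i, x (ω i) ^ 2 + (∑ i, x (ω i) - n * μ) ^ 2) ∂Q :=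
        integral_mono_of_nonneg (ae_of_all _ fun ω => by positivity)
          ((hiSq.add hiV).const_mul _) (ae_of_all _ hpt)
    _ = 4 / (n * μ) ^ 2 * (∫ ω, ∑ i, x (ω i) ^ 2 ∂Q + ∫ ω, (∑ i, x (ω i) - n * μ) ^ 2 ∂Q) := by
        rw [MeasureTheory.integral_const_mul, MeasureTheory.integral_add hiSq hiV]
    _ ≤ 4 / (n * μ) ^ 2 * (n * (K * μ ^ 2) + n * (K * μ ^ 2)) := by gcongr
    _ = 8 * K / n := by field_simp; ring

section WatsonGap

variable {m n : ℕ}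

local notation "γ" => stdGaussian (EuclideanSpace ℝ (Fin m))
local notation "Γ" => Measure.pi fun _ : Fin n => stdGaussian (EuclideanSpace ℝ (Fin m))

lemma map_normalized_sum_stdGaussian {v : Fin n → ℝ} (hv : 0 < ∑ i, v i ^ 2) :
    (Γ).map (fun ω => (√(∑ i, v i ^ 2))⁻¹ • ∑ i, v i • ω i) = γ := by
  have hm : Measurable fun ω : Fin n → EuclideanSpace ℝ (Fin m) =>
      (√(∑ i, v i ^ 2))⁻¹ • ∑ i, v i • ω i := by fun_prop
  have := Measure.isProbabilityMeasure_map (μ := Γ) hm.aemeasurable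
  refine Measure.ext_of_charFun ?_
  ext t
  have hind : iIndepFun (fun (i : Fin n) (ω : Fin n → EuclideanSpace ℝ (Fin m)) =>
      ((√(∑ i, v i ^ 2))⁻¹ * v i) • ω i) Γ :=
    iIndepFun_pi (X := fun i y => ((√(∑ i, v i ^ 2))⁻¹ * v i) • y) fun i => by fun_prop
  have hfun : (fun ω : Fin n → EuclideanSpace ℝ (Fin m) => (√(∑ i, v i ^ 2))⁻¹ • ∑ i, v i • ω i) =
      fun ω => ∑ i, ((√(∑ i, v i ^ 2))⁻¹ * v i) • ω i := by
    funext ω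
    simp only [Finset.smul_sum, smul_smul]
  rw [hfun, hind.charFun_map_fun_sum_eq_prod fun i => Measurable.aemeasurable (by fun_prop),
    charFun_stdGaussian, Finset.prod_apply]
  have hone : ∀ i : Fin n, charFun ((Γ).map fun ω => ((√(∑ i, v i ^ 2))⁻¹ * v i) • ω i) t =
      Complex.exp (-‖((√(∑ i, v i ^ 2))⁻¹ * v i) • t‖ ^ 2 / 2) := fun i => by
    have hmap : (Γ).map (fun ω => ((√(∑ i, v i ^ 2))⁻¹ * v i) • ω i) =
        (γ).map (fun y => ((√(∑ i, v i ^ 2))⁻¹ * v i) • y) := by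
      conv_rhs => rw [← (measurePreserving_eval (fun _ : Fin n => γ) i).map_eq]
      rw [Measure.map_map (by fun_prop) (by fun_prop)]
      rfl
    rw [hmap, charFun_map_smul, charFun_stdGaussian]
  simp only [hone, ← Complex.exp_sum]
  congr 1
  rw [← Finset.sum_div, Finset.sum_neg_distrib]
  congr 2
  simp only [norm_smul, mul_pow, norm_mul, Complex.ofReal_mul]
  norm_cast
  simp only [← Finset.sum_mul, ← Finset.mul_sum, norm_inv, inv_pow, Real.norm_eq_abs, sq_abs]
  rw [Real.sq_sqrt hv.le, inv_mul_cancel₀ hv.ne', one_mul]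

/-- The standardized Watson statistic of the observations with tangential components
`v i • (‖ω i‖⁻¹ • ω i)`. -/
noncomputable def tangentWatson (m : ℕ) {n : ℕ} (v : Fin n → ℝ)
    (ω : Fin n → EuclideanSpace ℝ (Fin m)) : ℝ :=
  (m * ‖∑ i, v i • (‖ω i‖⁻¹ • ω i)‖ ^ 2 / (∑ i, v i ^ 2) - m) / √(2 * m)

/-- The standardized squared length of a vector. -/
noncomputable def stdNormSq (m : ℕ) (y : EuclideanSpace ℝ (Fin m)) : ℝ :=
  (‖y‖ ^ 2 - m) / √(2 * m)

@[fun_prop]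
lemma measurable_stdNormSq (m : ℕ) : Measurable (stdNormSq m) := by
  unfold stdNormSq
  fun_prop

lemma integral_tangentWatson_sub_sq_le (hm : 0 < m) {v : Fin n → ℝ} (hv : 0 < ∑ i, v i ^ 2) :
    Integrable (fun ω => (tangentWatson m v ω -
        stdNormSq m ((√(∑ i, v i ^ 2))⁻¹ • ∑ i, v i • ω i)) ^ 2) Γ ∧
      ∫ ω, (tangentWatson m v ω -
        stdNormSq m ((√(∑ i, v i ^ 2))⁻¹ • ∑ i, v i • ω i)) ^ 2 ∂Γ ≤
        16 / m + 2 * ((∑ i, v i ^ 4) / (∑ i, v i ^ 2) ^ 2) := by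
  obtain ⟨hi, hle⟩ := integral_norm_sum_direction_sub_sq_le hm v
  set s := ∑ i, v i ^ 2 with hs
  have hm' : (0 : ℝ) < m := by exact_mod_cast hm
  have hfun : (fun ω : Fin n → EuclideanSpace ℝ (Fin m) => (tangentWatson m v ω -
        stdNormSq m ((√s)⁻¹ • ∑ i, v i • ω i)) ^ 2) = fun ω => m / (2 * s ^ 2) *
        (‖∑ i, v i • (‖ω i‖⁻¹ • ω i)‖ ^ 2 - ‖∑ i, v i • ω i‖ ^ 2 / m) ^ 2 := by
    funext ω
    rw [tangentWatson, stdNormSq, norm_smul, mul_pow, norm_inv, inv_pow,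
      Real.norm_of_nonneg (Real.sqrt_nonneg _), Real.sq_sqrt hv.le, ← hs, ← sub_div, div_pow,
      Real.sq_sqrt (by positivity)]
    field_simp
    ring
  rw [hfun]
  refine ⟨hi.const_mul _, ?_⟩
  rw [MeasureTheory.integral_const_mul]
  refine (mul_le_mul_of_nonneg_left hle (by positivity)).trans_eq ?_
  field_simp
  ring

lemma abs_integral_tangentWatson_sub_le (hm : 0 < m) {v : Fin n → ℝ} (hv : 0 < ∑ i, v i ^ 2)
    {g : ℝ → ℝ} {L : NNReal} (hg : LipschitzWith L g) {C : ℝ} (hC : ∀ x, |g x| ≤ C) {η : ℝ}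
    (hη : 0 < η) :
    |∫ ω, g (tangentWatson m v ω) ∂Γ - ∫ y, g (stdNormSq m y) ∂γ| ≤
      L / 2 * (η + (16 / m + 2 * ((∑ i, v i ^ 4) / (∑ i, v i ^ 2) ^ 2)) / η) := by
  obtain ⟨hi, hle⟩ := integral_tangentWatson_sub_sq_le hm hv
  have hgm : Measurable g := hg.continuous.measurable
  have hW : Measurable fun ω : Fin n → EuclideanSpace ℝ (Fin m) => tangentWatson m v ω :=
    by
    unfold tangentWatson
    fun_prop
  have hQ : Measurable fun ω : Fin n → EuclideanSpace ℝ (Fin m) => (√(∑ i, v i ^ 2))⁻¹ • ∑ i, v i • ω i := by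
    fun_prop
  have hb : ∀ h : (Fin n → EuclideanSpace ℝ (Fin m)) → ℝ, Measurable h →
      Integrable (fun ω => g (h ω)) Γ := fun h hh =>
    Integrable.of_bound (hgm.comp hh).aestronglyMeasurable C (ae_of_all _ fun ω => hC _)
  have hγ : ∫ y, g (stdNormSq m y) ∂γ = ∫ ω, g (stdNormSq m ((√(∑ i, v i ^ 2))⁻¹ • ∑ i, v i • ω i)) ∂Γ := by
    conv_lhs => rw [← map_normalized_sum_stdGaussian hv]
    exact integral_map hQ.aemeasurable
      (hgm.comp (measurable_stdNormSq m)).aestronglyMeasurable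
  have hdiff := MeasureTheory.integral_sub (hb _ hW) (hb _ ((measurable_stdNormSq m).comp hQ))
  simp only [Function.comp_apply] at hdiff
  rw [hγ, ← hdiff]
  refine abs_integral_le_integral_abs.trans ?_
  have hpt : ∀ a b : ℝ, |g a - g b| ≤ L / 2 * (η + (a - b) ^ 2 / η) := fun a b => by
    have h1 : |g a - g b| ≤ L * |a - b| := by simpa [Real.dist_eq] using hg.dist_le_mul a b
    have h2 : 2 * |a - b| ≤ η + (a - b) ^ 2 / η := by
      rw [← sq_abs (a - b), ← sub_le_iff_le_add', le_div_iff₀ hη]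
      nlinarith [sq_nonneg (|a - b| - η)]
    have hL0 : (0 : ℝ) ≤ L := L.2
    nlinarith
  have hi2 : Integrable (fun ω => L / 2 * (η + (tangentWatson m v ω -
      stdNormSq m ((√(∑ i, v i ^ 2))⁻¹ • ∑ i, v i • ω i)) ^ 2 / η)) Γ :=
    ((integrable_const η).add (hi.div_const η)).const_mul _
  refine (integral_mono_of_nonneg (ae_of_all _ fun ω => abs_nonneg _) hi2
    (ae_of_all _ fun ω => hpt _ _)).trans ?_
  rw [MeasureTheory.integral_const_mul,
    MeasureTheory.integral_add (integrable_const η) (hi.div_const η), MeasureTheory.integral_div]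
  simp only [MeasureTheory.integral_const, probReal_univ, one_smul]
  gcongr

/-- Replacing the tangential directions by Gaussian vectors in the Watson statistic, jointly with a
function `Z` of the latitudes. -/
lemma abs_integral_tangentWatson_pair_sub_le (hm : 0 < m) (hn : 0 < n) {P : Measure ℝ}
    [IsProbabilityMeasure P] {v : ℝ → ℝ} (hv : Measurable v) (hv1 : ∀ u, v u ^ 2 ≤ 1)
    (hv0 : ∀ᵐ u ∂P, v u ≠ 0) {K : ℝ}
    (hK : ∫ u, v u ^ 4 ∂P ≤ K * (∫ u, v u ^ 2 ∂P) ^ 2)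
    {Z : (Fin n → ℝ) → ℝ} (hZ : Measurable Z)
    {f : ℝ × ℝ → ℝ} {L : NNReal} (hf : LipschitzWith L f) {C : ℝ} (hC : ∀ x, |f x| ≤ C) {η : ℝ}
    (hη : 0 < η) :
    |∫ z, f (tangentWatson m (fun i => v (z.1 i)) z.2, Z z.1) ∂((Measure.pi fun _ => P).prod Γ) -
      ∫ z, f z ∂(((γ).map (stdNormSq m)).prod ((Measure.pi fun _ => P).map Z))| ≤
      L / 2 * (η + (16 / m + 2 * (8 * K / n)) / η) := by
  have hfm : Measurable f := hf.continuous.measurable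
  have hW : Measurable fun z : (Fin n → ℝ) × (Fin n → EuclideanSpace ℝ (Fin m)) =>
      tangentWatson m (fun i => v (z.1 i)) z.2 :=
    by
    unfold tangentWatson
    fun_prop
  have hF : Measurable fun z : (Fin n → ℝ) × (Fin n → EuclideanSpace ℝ (Fin m)) =>
      f (tangentWatson m (fun i => v (z.1 i)) z.2, Z z.1) :=
    hfm.comp (hW.prodMk (hZ.comp measurable_fst))
  have hG : Measurable fun z : (Fin n → ℝ) × EuclideanSpace ℝ (Fin m) =>
      f (stdNormSq m z.2, Z z.1) :=
    hfm.comp (((measurable_stdNormSq m).comp measurable_snd).prodMk (hZ.comp measurable_fst))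
  have hFi : Integrable (fun z : (Fin n → ℝ) × (Fin n → EuclideanSpace ℝ (Fin m)) =>
      f (tangentWatson m (fun i => v (z.1 i)) z.2, Z z.1)) ((Measure.pi fun _ : Fin n => P).prod Γ) :=
    Integrable.of_bound hF.aestronglyMeasurable C (ae_of_all _ fun _ => hC _)
  have hGi : Integrable (fun z : (Fin n → ℝ) × EuclideanSpace ℝ (Fin m) =>
      f (stdNormSq m z.2, Z z.1)) ((Measure.pi fun _ : Fin n => P).prod γ) :=
    Integrable.of_bound hG.aestronglyMeasurable C (ae_of_all _ fun _ => hC _)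
  have hright : ∫ z, f z ∂(((γ).map (stdNormSq m)).prod ((Measure.pi fun _ : Fin n => P).map Z)) =
      ∫ u, ∫ y, f (stdNormSq m y, Z u) ∂γ ∂(Measure.pi fun _ : Fin n => P) := by
    have hsm : Measurable (stdNormSq m) := measurable_stdNormSq m
    rw [Measure.map_prod_map _ _ hsm hZ, integral_map (by fun_prop)
      hfm.aestronglyMeasurable, ← integral_prod_swap]
    exact MeasureTheory.integral_prod _ hGi
  rw [hright, MeasureTheory.integral_prod _ hFi]
  have hsub := MeasureTheory.integral_sub hFi.integral_prod_left hGi.integral_prod_left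
  simp only at hsub
  rw [← hsub]
  refine abs_integral_le_integral_abs.trans ?_
  have hpos : ∀ᵐ u ∂(Measure.pi fun _ : Fin n => P), 0 < ∑ i, v (u i) ^ 2 := by
    have h := (measurePreserving_eval (fun _ : Fin n => P) ⟨0, hn⟩).quasiMeasurePreserving.ae hv0
    filter_upwards [h] with u hu
    exact Finset.sum_pos' (fun i _ => sq_nonneg _) ⟨⟨0, hn⟩, Finset.mem_univ _, by positivity⟩
  have hratio1 : ∀ u : Fin n → ℝ, (∑ i, v (u i) ^ 4) / (∑ i, v (u i) ^ 2) ^ 2 ≤ 1 := fun u => by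
    refine div_le_one_of_le₀ ?_ (sq_nonneg _)
    have h := Finset.sum_sq_le_sq_sum_of_nonneg (s := Finset.univ) (f := fun i => v (u i) ^ 2)
      fun i _ => sq_nonneg _
    simpa [← pow_mul] using h
  have hratio0 : ∀ u : Fin n → ℝ, 0 ≤ (∑ i, v (u i) ^ 4) / (∑ i, v (u i) ^ 2) ^ 2 := fun u => by
    positivity
  have hri : Integrable (fun u : Fin n → ℝ => (∑ i, v (u i) ^ 4) / (∑ i, v (u i) ^ 2) ^ 2)
      (Measure.pi fun _ : Fin n => P) :=
    Integrable.of_bound (Measurable.aestronglyMeasurable (by fun_prop)) 1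
      (ae_of_all _ fun u => by rw [Real.norm_of_nonneg (hratio0 u)]; exact hratio1 u)
  have hmean : 0 < ∫ u, v u ^ 2 ∂P := by
    have hvi : Integrable (fun u => v u ^ 2) P := Integrable.of_bound (by fun_prop) 1
      (ae_of_all _ fun u => by rw [Real.norm_of_nonneg (sq_nonneg _)]; exact hv1 u)
    rw [integral_pos_iff_support_of_nonneg (fun u => sq_nonneg _) hvi]
    have : Function.support (fun u => v u ^ 2) =ᵐ[P] Set.univ := by
      filter_upwards [hv0] with u hu
      exact eq_true (show v u ^ 2 ≠ 0 from pow_ne_zero 2 hu)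
    rw [measure_congr this, measure_univ]
    exact one_pos
  have hratio := integral_sum_sq_div_sq_sum_le (P := P) (x := fun u => v u ^ 2) (by fun_prop)
    (fun u => sq_nonneg _) hv1 hmean (K := K) (by simpa [← pow_mul] using hK) hn
  simp only [← pow_mul] at hratio
  norm_num only at hratio
  have hi2 : Integrable (fun u : Fin n → ℝ => 16 / (m : ℝ) +
      2 * ((∑ i, v (u i) ^ 4) / (∑ i, v (u i) ^ 2) ^ 2)) (Measure.pi fun _ : Fin n => P) :=
    (integrable_const _).add (hri.const_mul 2)
  have hi1 : Integrable (fun u : Fin n → ℝ => L / 2 * (η + (16 / m +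
      2 * ((∑ i, v (u i) ^ 4) / (∑ i, v (u i) ^ 2) ^ 2)) / η)) (Measure.pi fun _ : Fin n => P) :=
    ((integrable_const η).add (hi2.div_const η)).const_mul _
  refine (integral_mono_of_nonneg (ae_of_all _ fun u => abs_nonneg _) hi1 ?_).trans ?_
  · filter_upwards [hpos] with u hu
    exact abs_integral_tangentWatson_sub_le hm hu (g := fun a => f (a, Z u))
      (by simpa [Function.comp_def] using hf.comp (LipschitzWith.prodMk_right (Z u))) (fun a => hC _) hη
  · rw [MeasureTheory.integral_const_mul,
      MeasureTheory.integral_add (integrable_const η) (hi2.div_const η), MeasureTheory.integral_div,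
      MeasureTheory.integral_add (integrable_const _) (hri.const_mul 2),
      MeasureTheory.integral_const_mul]
    simp only [MeasureTheory.integral_const, probReal_univ, one_smul]
    gcongr

end WatsonGap

/-- The pair formed by the standardized Watson statistic and the standardized projection of the
sample mean on the pole. -/
noncomputable def watsonPair (p : ℕ) (θ : EuclideanSpace ℝ (Fin p)) (κ : ℝ) {n : ℕ}
    (X : Fin n → EuclideanSpace ℝ (Fin p)) : ℝ × ℝ :=
  let Xbar : EuclideanSpace ℝ (Fin p) := (n : ℝ)⁻¹ • ∑ i, X i
  (((n : ℝ) * ((p : ℝ) - 1) * ⟪Xbar, Xbar - ⟪θ, Xbar⟫ • θ⟫ /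
      (1 - (n : ℝ)⁻¹ * ∑ i, ⟪X i, θ⟫ ^ 2) - ((p : ℝ) - 1)) / Real.sqrt (2 * ((p : ℝ) - 1)),
    Real.sqrt n * (⟪Xbar, θ⟫ - e1 p κ) / Real.sqrt (etilde2 p κ))

lemma measurable_watsonPair (p : ℕ) (θ : EuclideanSpace ℝ (Fin p)) (κ : ℝ) (n : ℕ) :
    Measurable fun X : Fin n → EuclideanSpace ℝ (Fin p) => watsonPair p θ κ X := by
  unfold watsonPair
  fun_prop

lemma watsonPair_latitudePoint {p m n : ℕ} (hm : p = m + 1) (hn : 0 < n)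
    {θ : EuclideanSpace ℝ (Fin p)} (hθ : ‖θ‖ = 1)
    {ι : EuclideanSpace ℝ (Fin m) →ₗᵢ[ℝ] EuclideanSpace ℝ (Fin p)} (hι : ∀ y, ⟪ι y, θ⟫ = 0)
    (κ : ℝ) {u : Fin n → ℝ} (hu : ∀ i, u i ∈ Set.Ioo (-1 : ℝ) 1)
    (ω : Fin n → EuclideanSpace ℝ (Fin m)) :
    watsonPair p θ κ (fun i => latitudePoint θ ι (u i, ω i)) =
      (tangentWatson m (fun i => √(1 - u i ^ 2)) ω,
        (√n)⁻¹ * ∑ i, (u i - e1 p κ) / √(etilde2 p κ)) := by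
  have hn' : (0 : ℝ) < n := by exact_mod_cast hn
  have hpm : (p : ℝ) - 1 = m := by rw [hm]; push_cast; ring
  have hinner : ∀ i, ⟪latitudePoint θ ι (u i, ω i), θ⟫ = u i := fun i =>
    inner_latitudePoint_pole hθ hι _
  have hsq : ∀ i, √(1 - u i ^ 2) ^ 2 = 1 - u i ^ 2 := fun i =>
    Real.sq_sqrt (by nlinarith [(hu i).1, (hu i).2])
  set R := ∑ i, √(1 - u i ^ 2) • (‖ω i‖⁻¹ • ω i) with hR
  have hsum : ∑ i, latitudePoint θ ι (u i, ω i) = (∑ i, u i) • θ + ι R := by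
    simp only [latitudePoint, Finset.sum_add_distrib, Finset.sum_smul, hR, map_sum, map_smul]
  have hιθ : ∀ y, ⟪θ, ι y⟫ = 0 := fun y => by rw [real_inner_comm]; exact hι y
  have hs : 1 - (n : ℝ)⁻¹ * ∑ i, u i ^ 2 = (n : ℝ)⁻¹ * ∑ i, √(1 - u i ^ 2) ^ 2 := by
    simp only [hsq, Finset.sum_sub_distrib, Finset.sum_const, Finset.card_univ, Fintype.card_fin,
      nsmul_eq_mul, mul_one, mul_sub]
    rw [inv_mul_cancel₀ hn'.ne']
  have hθθ : ⟪θ, θ⟫ = 1 := by rw [real_inner_self_eq_norm_sq, hθ, one_pow]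
  have hproj : (n : ℝ)⁻¹ • ((∑ i, u i) • θ + ι R) -
      ⟪θ, (n : ℝ)⁻¹ • ((∑ i, u i) • θ + ι R)⟫ • θ = (n : ℝ)⁻¹ • ι R := by
    rw [inner_smul_right, inner_add_right, inner_smul_right, hθθ, hιθ, mul_one, add_zero, smul_add,
      smul_smul, add_sub_cancel_left]
  have hquad : ⟪(n : ℝ)⁻¹ • ((∑ i, u i) • θ + ι R), (n : ℝ)⁻¹ • ι R⟫ =
      (n : ℝ)⁻¹ * ((n : ℝ)⁻¹ * ‖R‖ ^ 2) := by
    rw [inner_smul_left, inner_smul_right, inner_add_left, inner_smul_left, hιθ,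
      real_inner_self_eq_norm_sq, ι.norm_map]
    simp
  have hmean : ⟪(n : ℝ)⁻¹ • ((∑ i, u i) • θ + ι R), θ⟫ = (n : ℝ)⁻¹ * ∑ i, u i := by
    rw [inner_smul_left, inner_add_left, inner_smul_left, hθθ, hι]
    simp
  simp only [watsonPair, hinner, hsum, hproj, hquad, hmean, hs, hpm, tangentWatson, ← hR]
  refine Prod.ext ?_ ?_
  · simp only
    congr 2
    field_simp
  · simp only [← Finset.sum_div, Finset.sum_sub_distrib, Finset.sum_const, Finset.card_univ,
      Fintype.card_fin, nsmul_eq_mul]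
    rw [← mul_div_assoc]
    congr 1
    have h := Real.mul_self_sqrt hn'.le
    have h0 : √(n : ℝ) ≠ 0 := (Real.sqrt_pos.2 hn').ne'
    have h1 : (√(n : ℝ))⁻¹ = √n * (n : ℝ)⁻¹ := by
      rw [eq_mul_inv_iff_mul_eq₀ hn'.ne', inv_mul_eq_iff_eq_mul₀ h0, h]
    rw [h1]
    field_simp

lemma integral_watsonPair_fvml {p m n : ℕ} (hp : 4 ≤ p) (hm : p = m + 1) (hn : 0 < n)
    {θ : EuclideanSpace ℝ (Fin p)} (hθ : ‖θ‖ = 1) (κ : ℝ) {f : ℝ × ℝ → ℝ} (hf : Measurable f) :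
    ∫ x, f (watsonPair p θ κ fun i => (x i : EuclideanSpace ℝ (Fin p)))
        ∂(Measure.pi fun _ : Fin n => fvml p θ κ) =
      ∫ z, f (tangentWatson m (fun i => √(1 - z.1 i ^ 2)) z.2,
          (√n)⁻¹ * ∑ i, (z.1 i - e1 p κ) / √(etilde2 p κ))
        ∂((Measure.pi fun _ : Fin n => fvmlLatitude p κ).prod
          (Measure.pi fun _ : Fin n => stdGaussian (EuclideanSpace ℝ (Fin m)))) := by
  obtain ⟨ι, hι⟩ := exists_linearIsometry_orthogonal hm hθ
  have hP := isProbabilityMeasure_fvml (by omega : 1 ≤ p) θ κ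
  have hQ := isProbabilityMeasure_fvmlLatitude hp κ
  have hG : Measurable fun X : Fin n → EuclideanSpace ℝ (Fin p) => f (watsonPair p θ κ X) :=
    hf.comp (measurable_watsonPair p θ κ n)
  have h1 : IsProbabilityMeasure ((fvml p θ κ).map
      ((↑) : sphere (0 : EuclideanSpace ℝ (Fin p)) 1 → EuclideanSpace ℝ (Fin p))) :=
    Measure.isProbabilityMeasure_map (by fun_prop)
  have h2 : IsProbabilityMeasure (((fvmlLatitude p κ).prod
      (stdGaussian (EuclideanSpace ℝ (Fin m)))).map (latitudePoint θ ι)) :=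
    Measure.isProbabilityMeasure_map (by fun_prop)
  have hleft := Measure.pi_map_pi (ι := Fin n) (μ := fun _ => fvml p θ κ)
    (f := fun _ => ((↑) : sphere (0 : EuclideanSpace ℝ (Fin p)) 1 → EuclideanSpace ℝ (Fin p)))
    fun _ => by fun_prop
  have hright := Measure.pi_map_pi (ι := Fin n)
    (μ := fun _ => (fvmlLatitude p κ).prod (stdGaussian (EuclideanSpace ℝ (Fin m))))
    (f := fun _ => latitudePoint θ ι) fun _ => by fun_prop
  have harr := measurePreserving_arrowProdEquivProdArrow ℝ (EuclideanSpace ℝ (Fin m)) (Fin n)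
    (fun _ => fvmlLatitude p κ) (fun _ => stdGaussian (EuclideanSpace ℝ (Fin m)))
  have hstep : ∫ x, f (watsonPair p θ κ fun i => (x i : EuclideanSpace ℝ (Fin p)))
        ∂(Measure.pi fun _ : Fin n => fvml p θ κ) =
      ∫ z, f (watsonPair p θ κ fun i => latitudePoint θ ι (z i)) ∂(Measure.pi fun _ : Fin n =>
        (fvmlLatitude p κ).prod (stdGaussian (EuclideanSpace ℝ (Fin m)))) := by
    rw [← integral_map (f := fun X => f (watsonPair p θ κ X))
        (Measurable.aemeasurable (by fun_prop))
        hG.aestronglyMeasurable, hleft, fvml_map_coe_eq hp hm hθ hι, ← hright,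
      integral_map (Measurable.aemeasurable (by fun_prop)) hG.aestronglyMeasurable]
  rw [hstep, ← harr.integral_comp' (g := fun z : (Fin n → ℝ) × (Fin n → EuclideanSpace ℝ (Fin m)) =>
    f (tangentWatson m (fun i => √(1 - z.1 i ^ 2)) z.2,
          (√n)⁻¹ * ∑ i, (z.1 i - e1 p κ) / √(etilde2 p κ)))]
  refine MeasureTheory.integral_congr_ae ?_
  have hae : ∀ i : Fin n, ∀ᵐ z ∂(Measure.pi fun _ : Fin n =>
      (fvmlLatitude p κ).prod (stdGaussian (EuclideanSpace ℝ (Fin m)))),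
      (z i).1 ∈ Set.Ioo (-1 : ℝ) 1 := fun i =>
    (measurePreserving_eval (fun _ : Fin n => (fvmlLatitude p κ).prod
      (stdGaussian (EuclideanSpace ℝ (Fin m)))) i).quasiMeasurePreserving.ae
      (Measure.quasiMeasurePreserving_fst.ae (ae_fvmlLatitude_mem p κ))
  filter_upwards [ae_all_iff.2 hae] with z hz
  exact congrArg f (watsonPair_latitudePoint hm hn hθ hι κ hz fun i => (z i).2)

lemma integral_fvmlLatitude_standardized {p : ℕ} (hp : 4 ≤ p) (κ : ℝ) (j : ℕ) :
    ∫ u, ((u - e1 p κ) / √(etilde2 p κ)) ^ j ∂(fvmlLatitude p κ) =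
      (∫ u in (-1 : ℝ)..1, (u - e1 p κ) ^ j * fvmlWeight p κ u) /
        (√(etilde2 p κ) ^ j * mInt p κ 0) := by
  have h : ∫ u in (-1 : ℝ)..1, ((u - e1 p κ) / √(etilde2 p κ)) ^ j * fvmlWeight p κ u =
      (∫ u in (-1 : ℝ)..1, (u - e1 p κ) ^ j * fvmlWeight p κ u) / √(etilde2 p κ) ^ j := by
    rw [← intervalIntegral.integral_div]
    refine intervalIntegral.integral_congr fun u _ => ?_
    simp only [div_pow]
    ring
  rw [integral_fvmlLatitude hp, h, div_div]

lemma integral_sqrt_one_sub_sq_pow_four_le {p : ℕ} (hp : 4 ≤ p) {κ : ℝ} (hκ : 0 < κ) :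
    ∫ u, √(1 - u ^ 2) ^ 4 ∂(fvmlLatitude p κ) ≤
      3 * (∫ u, √(1 - u ^ 2) ^ 2 ∂(fvmlLatitude p κ)) ^ 2 := by
  have h0 := mInt_zero_pos hp κ
  have hsq : ∀ u ∈ Set.uIcc (-1 : ℝ) 1, √(1 - u ^ 2) ^ 2 = 1 - u ^ 2 := fun u hu => by
    rw [Set.uIcc_of_le (by norm_num)] at hu
    exact Real.sq_sqrt (by nlinarith [hu.1, hu.2])
  have h2 : ∫ u in (-1 : ℝ)..1, √(1 - u ^ 2) ^ 2 * fvmlWeight p κ u =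
      ∫ u in (-1 : ℝ)..1, (1 - u ^ 2) * fvmlWeight p κ u :=
    intervalIntegral.integral_congr fun u hu => by simp only [hsq u hu]
  have h4 : ∫ u in (-1 : ℝ)..1, √(1 - u ^ 2) ^ 4 * fvmlWeight p κ u =
      ∫ u in (-1 : ℝ)..1, (1 - u ^ 2) ^ 2 * fvmlWeight p κ u :=
    intervalIntegral.integral_congr fun u hu => by
      simp only [show √(1 - u ^ 2) ^ 4 = (√(1 - u ^ 2) ^ 2) ^ 2 by ring, hsq u hu]
  rw [integral_fvmlLatitude hp, integral_fvmlLatitude hp, h2, h4, div_pow, ← mul_div_assoc,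
    div_le_div_iff₀ h0 (by positivity)]
  nlinarith [mul_le_mul_of_nonneg_right (integral_one_sub_sq_sq_mul_fvmlWeight_le hp hκ) h0.le]

lemma tendsto_pi_fvmlLatitude_map {p k : ℕ → ℕ} (hp : ∀ n, 4 ≤ p n) (hk : Tendsto k atTop atTop)
    (κ : ℕ → ℝ) (μ : ℕ → ProbabilityMeasure ℝ)
    (hμ : ∀ n, (μ n : Measure ℝ) = (Measure.pi fun _ : Fin (k n) => fvmlLatitude (p n) (κ n)).map
      fun u => (√(k n))⁻¹ * ∑ i, (u i - e1 (p n) (κ n)) / √(etilde2 (p n) (κ n))) :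
    Tendsto μ atTop (nhds ⟨gaussianReal 0 1, inferInstance⟩) := by
  have hP := fun n => isProbabilityMeasure_fvmlLatitude (hp n) (κ n)
  have he := fun n => etilde2_pos (hp n) (κ n)
  have hm := fun n => mInt_zero_pos (hp n) (κ n)
  refine tendsto_pi_map_gaussianReal (fun n => fvmlLatitude (p n) (κ n))
    (X := fun n u => (u - e1 (p n) (κ n)) / √(etilde2 (p n) (κ n))) hk (fun n => by fun_prop)
    (K := 1760) (fun n => ?_) (fun n => ?_) (fun n => ?_) (fun n => ?_) μ hμ
  · refine Integrable.of_bound (by fun_prop)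
      (((1 + |e1 (p n) (κ n)|) / √(etilde2 (p n) (κ n))) ^ 4) ?_
    filter_upwards [ae_fvmlLatitude_mem (p n) (κ n)] with u hu
    rw [Real.norm_eq_abs, abs_pow, abs_div, abs_of_nonneg (Real.sqrt_nonneg _)]
    gcongr
    exact (abs_sub _ _).trans (by gcongr; exact abs_le.2 ⟨hu.1.le, hu.2.le⟩)
  · simpa [integral_sub_e1_mul_fvmlWeight (hp n)] using
      integral_fvmlLatitude_standardized (hp n) (κ n) 1
  · rw [integral_fvmlLatitude_standardized (hp n), integral_sub_e1_sq_mul_fvmlWeight (hp n),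
      Real.sq_sqrt (he n).le, div_self (mul_pos (he n) (hm n)).ne']
  · have h4 : √(etilde2 (p n) (κ n)) ^ 4 = etilde2 (p n) (κ n) ^ 2 := by
      rw [show 4 = 2 * 2 by norm_num, pow_mul, Real.sq_sqrt (he n).le]
    rw [integral_fvmlLatitude_standardized (hp n), h4,
      div_le_iff₀ (mul_pos (pow_pos (he n) 2) (hm n)), ← mul_assoc]
    exact integral_sub_e1_pow_four_mul_fvmlWeight_le (hp n) (κ n)

lemma tendsto_integral_watsonPair_of_lipschitz {p k : ℕ → ℕ} (hp4 : ∀ n, 4 ≤ p n)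
    (hp : Tendsto p atTop atTop) (hk : Tendsto k atTop atTop) (hk0 : ∀ n, 0 < k n) {κ : ℕ → ℝ}
    (hκ : ∀ n, 0 < κ n) {θ : (n : ℕ) → EuclideanSpace ℝ (Fin (p n))} (hθ : ∀ n, ‖θ n‖ = 1)
    {f : ℝ × ℝ → ℝ} {C : ℝ} (hC : ∀ x y, dist (f x) (f y) ≤ C) {L : NNReal}
    (hf : LipschitzWith L f) :
    Tendsto (fun n => ∫ x, f (watsonPair (p n) (θ n) (κ n)
        fun i => (x i : EuclideanSpace ℝ (Fin (p n))))
        ∂(Measure.pi fun _ : Fin (k n) => fvml (p n) (θ n) (κ n))) atTop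
      (nhds (∫ y, f y ∂((gaussianReal 0 1).prod (gaussianReal 0 1)))) := by
  have hb : ∀ x, |f x| ≤ C + |f 0| := fun x => by
    have h1 := hC x 0
    have h2 := abs_sub_abs_le_abs_sub (f x) (f 0)
    rw [Real.dist_eq] at h1
    linarith
  have hP := fun n => isProbabilityMeasure_fvmlLatitude (hp4 n) (κ n)
  set m : ℕ → ℕ := fun n => p n - 1 with hm
  have hpm : ∀ n, p n = m n + 1 := fun n => by have := hp4 n; simp only [hm]; omega
  have hm0 : ∀ n, 0 < m n := fun n => by have := hp4 n; simp only [hm]; omega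
  have hmt : Tendsto m atTop atTop := (tendsto_sub_atTop_nat 1).comp hp
  let Z : (n : ℕ) → (Fin (k n) → ℝ) → ℝ := fun n u =>
    (√(k n))⁻¹ * ∑ i, (u i - e1 (p n) (κ n)) / √(etilde2 (p n) (κ n))
  have hZ : ∀ n, Measurable (Z n) := fun n => by
    simp only [Z]
    fun_prop
  let μ₁ : ℕ → ProbabilityMeasure ℝ := fun n =>
    ⟨(stdGaussian (EuclideanSpace ℝ (Fin (m n)))).map (stdNormSq (m n)),
      Measure.isProbabilityMeasure_map (by fun_prop)⟩
  let μ₂ : ℕ → ProbabilityMeasure ℝ := fun n =>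
    ⟨(Measure.pi fun _ : Fin (k n) => fvmlLatitude (p n) (κ n)).map (Z n),
      Measure.isProbabilityMeasure_map (hZ n).aemeasurable⟩
  have h1 : Tendsto μ₁ atTop (nhds ⟨gaussianReal 0 1, inferInstance⟩) :=
    tendsto_stdGaussian_map_chiSquare hmt μ₁ fun n => rfl
  have h2 : Tendsto μ₂ atTop (nhds ⟨gaussianReal 0 1, inferInstance⟩) :=
    tendsto_pi_fvmlLatitude_map hp4 hk κ μ₂ fun n => rfl
  have h12 := (ProbabilityMeasure.continuous_prod.tendsto _).comp (h1.prodMk_nhds h2)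
  have hlim := tendsto_iff_forall_lipschitz_integral_tendsto.1 h12 f ⟨C, hC⟩ ⟨L, hf⟩
  simp only [Function.comp_apply, μ₁, μ₂] at hlim
  set η : ℕ → ℝ := fun n => √(16 / m n + 48 / k n) with hη
  have hη0 : Tendsto (fun n => (L : ℝ) * η n) atTop (nhds 0) := by
    have ha : Tendsto (fun n => 16 / (m n : ℝ) + 48 / (k n : ℝ)) atTop (nhds (0 + 0)) :=
      (tendsto_const_nhds.div_atTop (tendsto_natCast_atTop_atTop.comp hmt)).add
        (tendsto_const_nhds.div_atTop (tendsto_natCast_atTop_atTop.comp hk))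
    have hs := (Real.continuous_sqrt.tendsto (0 + 0)).comp ha
    simpa using hs.const_mul (L : ℝ)
  refine tendsto_of_tendsto_of_dist hlim (squeeze_zero (fun _ => dist_nonneg) (fun n => ?_) hη0)
  have hm' : (0 : ℝ) < m n := by exact_mod_cast hm0 n
  have hk' : (0 : ℝ) < k n := by exact_mod_cast hk0 n
  have hηn : 0 < η n := Real.sqrt_pos.2 (by positivity)
  rw [integral_watsonPair_fvml (hp4 n) (hpm n) (hk0 n) (hθ n) _ hf.continuous.measurable, dist_comm,
    Real.dist_eq]
  refine (abs_integral_tangentWatson_pair_sub_le (hm0 n) (hk0 n) (P := fvmlLatitude (p n) (κ n))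
    (v := fun u => √(1 - u ^ 2)) (by fun_prop) (fun u => ?_) ?_
    (integral_sqrt_one_sub_sq_pow_four_le (hp4 n) (hκ n)) (hZ n) hf hb hηn).trans_eq ?_
  · rcases le_total 0 (1 - u ^ 2) with h | h
    · rw [Real.sq_sqrt h]
      nlinarith
    · simp [Real.sqrt_eq_zero_of_nonpos h]
  · filter_upwards [ae_fvmlLatitude_mem (p n) (κ n)] with u hu
    exact (Real.sqrt_pos.2 (by nlinarith [hu.1, hu.2])).ne'
  · have hsq : 16 / (m n : ℝ) + 2 * (8 * 3 / k n) = η n * η n := by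
      rw [hη, Real.mul_self_sqrt (by positivity)]
      ring
    rw [hsq, mul_div_cancel_right₀ _ hηn.ne']
    ring

lemma tendsto_integral_comp_of_lipschitz {Ω : ℕ → Type*} [∀ n, MeasurableSpace (Ω n)]
    {P : ∀ n, Measure (Ω n)} [∀ n, IsProbabilityMeasure (P n)] {E : Type*} [PseudoEMetricSpace E]
    [MeasurableSpace E] [BorelSpace E] {Y : ∀ n, Ω n → E}
    (hY : ∀ n, Measurable (Y n)) {ν : Measure E} [IsProbabilityMeasure ν]
    (h : ∀ g : E → ℝ, (∃ C, ∀ x y, dist (g x) (g y) ≤ C) → (∃ L, LipschitzWith L g) →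
      Tendsto (fun n => ∫ x, g (Y n x) ∂(P n)) atTop (nhds (∫ y, g y ∂ν)))
    (f : BoundedContinuousFunction E ℝ) :
    Tendsto (fun n => ∫ x, f (Y n x) ∂(P n)) atTop (nhds (∫ y, f y ∂ν)) := by
  let law : ℕ → ProbabilityMeasure E := fun n =>
    ⟨(P n).map (Y n), Measure.isProbabilityMeasure_map (hY n).aemeasurable⟩
  have hlaw : ∀ (n : ℕ) (g : E → ℝ), Continuous g →
      ∫ y, g y ∂(law n : Measure E) = ∫ x, g (Y n x) ∂(P n) := fun n g hg =>
    integral_map (hY n).aemeasurable hg.measurable.aestronglyMeasurable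
  have hconv : Tendsto law atTop (nhds ⟨ν, inferInstance⟩) := by
    refine tendsto_iff_forall_lipschitz_integral_tendsto.2 fun g hC ⟨L, hL⟩ => ?_
    simp only [hlaw _ g hL.continuous]
    exact h g hC ⟨L, hL⟩
  have hf := ProbabilityMeasure.tendsto_iff_forall_integral_tendsto.1 hconv f
  simp only [hlaw _ f f.continuous] at hf
  exact hf

lemma tendsto_integral_watsonPair {p k : ℕ → ℕ} (hp4 : ∀ n, 4 ≤ p n)
    (hp : Tendsto p atTop atTop) (hk : Tendsto k atTop atTop) (hk0 : ∀ n, 0 < k n) {κ : ℕ → ℝ}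
    (hκ : ∀ n, 0 < κ n) {θ : (n : ℕ) → EuclideanSpace ℝ (Fin (p n))} (hθ : ∀ n, ‖θ n‖ = 1)
    (f : BoundedContinuousFunction (ℝ × ℝ) ℝ) :
    Tendsto (fun n => ∫ x, f (watsonPair (p n) (θ n) (κ n)
        fun i => (x i : EuclideanSpace ℝ (Fin (p n))))
        ∂(Measure.pi fun _ : Fin (k n) => fvml (p n) (θ n) (κ n))) atTop
      (nhds (∫ y, f y ∂((gaussianReal 0 1).prod (gaussianReal 0 1)))) := by
  have hP := fun n => isProbabilityMeasure_fvml (by have := hp4 n; omega) (θ n) (κ n)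
  have hmeas : ∀ n, Measurable fun x : Fin (k n) → sphere (0 : EuclideanSpace ℝ (Fin (p n))) 1 =>
      watsonPair (p n) (θ n) (κ n) fun i => (x i : EuclideanSpace ℝ (Fin (p n))) := fun n =>
    (measurable_watsonPair (p n) (θ n) (κ n) (k n)).comp (by fun_prop)
  exact tendsto_integral_comp_of_lipschitz hmeas (fun g ⟨C, hC⟩ ⟨L, hL⟩ =>
    tendsto_integral_watsonPair_of_lipschitz hp4 hp hk hk0 hκ hθ hC hL) f

theorem watson_and_Zn_jointly_asymptotically_standard_normal
    (p : ℕ → ℕ) (hp2 : ∀ n, 2 ≤ p n)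
    (hp : Tendsto (fun n => (p n : ℝ)) atTop atTop)
    (κ : ℕ → ℝ) (hκ : ∀ n, 0 < κ n)
    (θ₀ : (n : ℕ) → EuclideanSpace ℝ (Fin (p n))) (hθ₀ : ∀ n, ‖θ₀ n‖ = 1) :
    ∀ f : BoundedContinuousFunction (ℝ × ℝ) ℝ,
      Tendsto
        (fun n : ℕ =>
          ∫ x : Fin n → sphere (0 : EuclideanSpace ℝ (Fin (p n))) 1,
            (let Xbar : EuclideanSpace ℝ (Fin (p n)) :=
              (n : ℝ)⁻¹ • ∑ i, ((x i : EuclideanSpace ℝ (Fin (p n))));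
            f
              (((n : ℝ) * ((p n : ℝ) - 1) * ⟪Xbar, Xbar - ⟪θ₀ n, Xbar⟫ • θ₀ n⟫ /
                    (1 - (n : ℝ)⁻¹ *
                      ∑ i, ⟪((x i : EuclideanSpace ℝ (Fin (p n)))), θ₀ n⟫ ^ 2) -
                  ((p n : ℝ) - 1)) / Real.sqrt (2 * ((p n : ℝ) - 1)),
                Real.sqrt n * (⟪Xbar, θ₀ n⟫ - e1 (p n) (κ n)) /
                  Real.sqrt (etilde2 (p n) (κ n))))
            ∂(Measure.pi fun _ : Fin n => fvml (p n) (θ₀ n) (κ n)))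
        atTop
        (nhds (∫ y, f y ∂((gaussianReal 0 1).prod (gaussianReal 0 1)))) := by
  intro f
  have hpn : Tendsto p atTop atTop := tendsto_natCast_atTop_iff.1 hp
  obtain ⟨N, hN⟩ := eventually_atTop.1 (hpn.eventually_ge_atTop 4)
  have hk : Tendsto (fun n => n + (N + 1)) atTop atTop := tendsto_add_atTop_nat (N + 1)
  have h := tendsto_integral_watsonPair (p := fun n => p (n + (N + 1))) (k := fun n => n + (N + 1))
    (fun n => hN _ (by omega)) (hpn.comp hk) hk (fun n => by omega)
    (κ := fun n => κ (n + (N + 1))) (fun n => hκ _) (θ := fun n => θ₀ (n + (N + 1)))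
    (fun n => hθ₀ _) f
  exact (tendsto_add_atTop_iff_nat (N + 1)).1 h
end

section
/- Let (ν_n) be a sequence in (0,∞) diverging to ∞, and let (a_n), (b_n) be sequences in (0,∞) such that liminf_n a_n > 0, b_n/ν_n → ξ for some ξ ∈ [0,∞), and b_n⁶/(a_n⁴ ν_n⁵) → 0. Then for every K > 0, sup_{t ∈ [−K,K]} | a_n² log H_{ν_n}(b_n t/a_n) − ( b_n² t²/(4ν_n) − b_n⁴ t⁴/(32 ν_n³ a_n²) − ξ² t²/4 ) | → 0 as n → ∞. -/
open MeasureTheory intervalIntegral Filter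

/-- `H_ν(x) = (∫_{-1}^1 (1-t²)^{ν-1/2} e^{xt} dt) / (∫_{-1}^1 (1-t²)^{ν-1/2} dt)`. -/
noncomputable def Hfun (ν x : ℝ) : ℝ :=
  (∫ t in (-1 : ℝ)..1, (1 - t ^ 2) ^ (ν - 1 / 2) * Real.exp (x * t)) /
    (∫ t in (-1 : ℝ)..1, (1 - t ^ 2) ^ (ν - 1 / 2))

/-- The unnormalised integral `∫_{-1}^1 (1-t²)^p e^{xt} dt`. -/
noncomputable def gegenbauerLaplace (p x : ℝ) : ℝ :=
  ∫ t in (-1 : ℝ)..1, (1 - t ^ 2) ^ p * Real.exp (x * t)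

theorem continuous_one_sub_sq_rpow {p : ℝ} (hp : 0 ≤ p) :
    Continuous fun t : ℝ => (1 - t ^ 2) ^ p :=
  Continuous.rpow_const (by fun_prop) fun _ => Or.inr hp

theorem gegenbauerLaplace_pos {p : ℝ} (hp : 0 ≤ p) (x : ℝ) : 0 < gegenbauerLaplace p x := by
  have hc := continuous_one_sub_sq_rpow hp
  refine intervalIntegral.intervalIntegral_pos_of_pos_on ?_ ?_ (by norm_num)
  · exact Continuous.intervalIntegrable (by fun_prop) _ _
  · intro t ht
    have : 0 < 1 - t ^ 2 := by nlinarith [ht.1, ht.2]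
    positivity

theorem hasDerivAt_gegenbauerLaplace_integral {p : ℝ} (hp : 0 ≤ p) (x : ℝ) :
    HasDerivAt (gegenbauerLaplace p)
      (∫ t in (-1 : ℝ)..1, t * (1 - t ^ 2) ^ p * Real.exp (x * t)) x := by
  have hc := continuous_one_sub_sq_rpow hp
  refine (intervalIntegral.hasDerivAt_integral_of_dominated_loc_of_deriv_le
    (F := fun y t => (1 - t ^ 2) ^ p * Real.exp (y * t))
    (F' := fun y t => t * (1 - t ^ 2) ^ p * Real.exp (y * t))
    (bound := fun t => |t * (1 - t ^ 2) ^ p| * Real.exp ((|x| + 1) * |t|))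
    (Metric.ball_mem_nhds x one_pos) ?_ ?_ ?_ ?_ ?_ ?_).2
  · exact Eventually.of_forall fun y => Continuous.aestronglyMeasurable (by fun_prop)
  · exact Continuous.intervalIntegrable (by fun_prop) _ _
  · exact Continuous.aestronglyMeasurable (by fun_prop)
  · refine Eventually.of_forall fun t _ y hy => ?_
    rw [norm_mul, Real.norm_eq_abs, Real.norm_eq_abs, Real.abs_exp]
    have hy' : |y| ≤ |x| + 1 := by
      rw [Metric.mem_ball, Real.dist_eq] at hy
      linarith [abs_sub_abs_le_abs_sub y x]
    have hyt : y * t ≤ (|x| + 1) * |t| :=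
      (le_abs_self _).trans ((abs_mul y t).le.trans (by gcongr))
    gcongr
  · exact Continuous.intervalIntegrable (by fun_prop) _ _
  · refine Eventually.of_forall fun t _ y _ => ?_
    have h := (((hasDerivAt_id y).mul_const t).exp).const_mul ((1 - t ^ 2) ^ p)
    refine h.congr_deriv ?_
    simp only [id]
    ring

theorem hasDerivAt_one_sub_sq_rpow {p : ℝ} (hp : 0 ≤ p) (t : ℝ) :
    HasDerivAt (fun t : ℝ => (1 - t ^ 2) ^ (p + 1)) (-2 * (p + 1) * (t * (1 - t ^ 2) ^ p)) t := by
  have h := ((hasDerivAt_pow 2 t).const_sub 1).rpow_const (p := p + 1) (Or.inr (by linarith))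
  refine h.congr_deriv ?_
  simp only [add_sub_cancel_right]
  norm_num
  ring

theorem integral_mul_one_sub_sq_rpow_mul_exp {p : ℝ} (hp : 0 ≤ p) (x : ℝ) :
    ∫ t in (-1 : ℝ)..1, t * (1 - t ^ 2) ^ p * Real.exp (x * t) =
      x / (2 * (p + 1)) * gegenbauerLaplace (p + 1) x := by
  have hp1 : 0 ≤ p + 1 := by linarith
  have hc := continuous_one_sub_sq_rpow hp
  have hc1 := continuous_one_sub_sq_rpow hp1
  have hd (t : ℝ) : HasDerivAt (fun t : ℝ => (1 - t ^ 2) ^ (p + 1) * Real.exp (x * t))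
      (-2 * (p + 1) * (t * (1 - t ^ 2) ^ p * Real.exp (x * t)) +
        x * ((1 - t ^ 2) ^ (p + 1) * Real.exp (x * t))) t := by
    refine ((hasDerivAt_one_sub_sq_rpow hp t).mul
      ((hasDerivAt_id t).const_mul x).exp).congr_deriv ?_
    simp only [id]
    ring
  have h := intervalIntegral.integral_eq_sub_of_hasDerivAt (a := -1) (b := 1) (fun t _ => hd t)
    (Continuous.intervalIntegrable (by fun_prop) _ _)
  rw [intervalIntegral.integral_add (Continuous.intervalIntegrable (by fun_prop) _ _)
    (Continuous.intervalIntegrable (by fun_prop) _ _), intervalIntegral.integral_const_mul,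
    intervalIntegral.integral_const_mul] at h
  norm_num [Real.zero_rpow (show p + 1 ≠ 0 by linarith)] at h
  rw [gegenbauerLaplace]
  rw [div_mul_eq_mul_div, eq_div_iff (by positivity)]
  linarith

theorem hasDerivAt_gegenbauerLaplace {p : ℝ} (hp : 0 ≤ p) (x : ℝ) :
    HasDerivAt (gegenbauerLaplace p) (x / (2 * (p + 1)) * gegenbauerLaplace (p + 1) x) x :=
  integral_mul_one_sub_sq_rpow_mul_exp hp x ▸ hasDerivAt_gegenbauerLaplace_integral hp x

theorem gegenbauerLaplace_recurrence {p : ℝ} (hp : 0 ≤ p) (x : ℝ) :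
    (2 * p + 3) * gegenbauerLaplace (p + 1) x +
      x ^ 2 / (2 * (p + 2)) * gegenbauerLaplace (p + 2) x =
      2 * (p + 1) * gegenbauerLaplace p x := by
  have hp1 : 0 ≤ p + 1 := by linarith
  have hc := continuous_one_sub_sq_rpow hp
  have hc1 := continuous_one_sub_sq_rpow hp1
  have hd (t : ℝ) (ht : t ∈ Set.uIcc (-1 : ℝ) 1) :
      HasDerivAt (fun t : ℝ => t * (1 - t ^ 2) ^ (p + 1) * Real.exp (x * t))
      ((2 * p + 3) * ((1 - t ^ 2) ^ (p + 1) * Real.exp (x * t)) -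
        2 * (p + 1) * ((1 - t ^ 2) ^ p * Real.exp (x * t)) +
        x * (t * (1 - t ^ 2) ^ (p + 1) * Real.exp (x * t))) t := by
    rw [Set.uIcc_of_le (by norm_num)] at ht
    have h0 : 0 ≤ 1 - t ^ 2 := by nlinarith [ht.1, ht.2]
    have hs : (1 - t ^ 2) ^ (p + 1) = (1 - t ^ 2) ^ p * (1 - t ^ 2) := by
      rw [Real.rpow_add_of_nonneg h0 hp zero_le_one, Real.rpow_one]
    refine (((hasDerivAt_id t).mul (hasDerivAt_one_sub_sq_rpow hp t)).mul
      ((hasDerivAt_id t).const_mul x).exp).congr_deriv ?_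
    simp only [id, Pi.mul_apply, hs]
    ring
  have h := intervalIntegral.integral_eq_sub_of_hasDerivAt (a := -1) (b := 1) hd
    (Continuous.intervalIntegrable (by fun_prop) _ _)
  rw [intervalIntegral.integral_add (Continuous.intervalIntegrable (by fun_prop) _ _)
    (Continuous.intervalIntegrable (by fun_prop) _ _),
    intervalIntegral.integral_sub (Continuous.intervalIntegrable (by fun_prop) _ _)
    (Continuous.intervalIntegrable (by fun_prop) _ _), intervalIntegral.integral_const_mul,
    intervalIntegral.integral_const_mul, intervalIntegral.integral_const_mul,
    integral_mul_one_sub_sq_rpow_mul_exp hp1] at h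
  norm_num [Real.zero_rpow (show p + 1 ≠ 0 by linarith)] at h
  rw [show p + 1 + 1 = p + 2 by ring] at h
  change (2 * p + 3) * gegenbauerLaplace (p + 1) x - 2 * (p + 1) * gegenbauerLaplace p x + _ = 0
    at h
  rw [← sub_eq_zero, ← h]
  ring

/-- The ratio of consecutive integrals, normalised to equal `1` at `x = 0`. -/
noncomputable def gegenbauerRatio (p x : ℝ) : ℝ :=
  (2 * p + 3) / (2 * (p + 1)) * (gegenbauerLaplace (p + 1) x / gegenbauerLaplace p x)

theorem gegenbauerRatio_pos {p : ℝ} (hp : 0 ≤ p) (x : ℝ) : 0 < gegenbauerRatio p x := by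
  have h0 := gegenbauerLaplace_pos hp x
  have h1 := gegenbauerLaplace_pos (show 0 ≤ p + 1 by linarith) x
  unfold gegenbauerRatio
  positivity

theorem gegenbauerRatio_recurrence {p : ℝ} (hp : 0 ≤ p) (x : ℝ) :
    gegenbauerRatio p x *
      (1 + x ^ 2 / ((2 * p + 3) * (2 * p + 5)) * gegenbauerRatio (p + 1) x) = 1 := by
  have h0 := gegenbauerLaplace_pos hp x
  have h1 := gegenbauerLaplace_pos (show 0 ≤ p + 1 by linarith) x
  have h := gegenbauerLaplace_recurrence hp x
  unfold gegenbauerRatio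
  rw [show p + 1 + 1 = p + 2 by ring]
  generalize gegenbauerLaplace p x = A at *
  generalize gegenbauerLaplace (p + 1) x = B at *
  generalize gegenbauerLaplace (p + 2) x = C at *
  rw [show 2 * (p + 1) + 3 = 2 * p + 5 by ring]
  field_simp at h ⊢
  linear_combination h

theorem gegenbauerRatio_bounds {p : ℝ} (hp : 0 ≤ p) (x : ℝ) :
    0 ≤ gegenbauerRatio p x - (1 - x ^ 2 / ((2 * p + 3) * (2 * p + 5))) ∧
      gegenbauerRatio p x - (1 - x ^ 2 / ((2 * p + 3) * (2 * p + 5))) ≤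
        2 * x ^ 4 / (2 * p + 3) ^ 4 := by
  have lower {q : ℝ} (hq : 0 ≤ q) :
      gegenbauerRatio q x ≤ 1 ∧ 1 - x ^ 2 / ((2 * q + 3) * (2 * q + 5)) ≤ gegenbauerRatio q x := by
    have hr := gegenbauerRatio_recurrence hq x
    have h0 := gegenbauerRatio_pos hq x
    have h1 := gegenbauerRatio_pos (show 0 ≤ q + 1 by linarith) x
    have hw : 0 ≤ x ^ 2 / ((2 * q + 3) * (2 * q + 5)) := by positivity
    have hle {s : ℝ} (hs : 0 ≤ s) {v r : ℝ} (hr0 : 0 < r) (hv : 0 ≤ v)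
        (h : r * (1 + v * s) = 1) : r ≤ 1 := by
      nlinarith [mul_nonneg hr0.le (mul_nonneg hv hs)]
    have hr1 := hle h1.le h0 hw hr
    have hs1 := hle (gegenbauerRatio_pos (show 0 ≤ q + 1 + 1 by linarith) x).le h1
      (by positivity) (gegenbauerRatio_recurrence (show 0 ≤ q + 1 by linarith) x)
    refine ⟨hr1, ?_⟩
    nlinarith [mul_le_mul hr1 hs1 h1.le zero_le_one, mul_nonneg h0.le h1.le]
  obtain ⟨hr1, hr2⟩ := lower hp
  obtain ⟨hs1, hs2⟩ := lower (show 0 ≤ p + 1 by linarith)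
  refine ⟨sub_nonneg.2 hr2, ?_⟩
  have hr := gegenbauerRatio_recurrence hp x
  have h0 := gegenbauerRatio_pos hp x
  have h1 := gegenbauerRatio_pos (show 0 ≤ p + 1 by linarith) x
  set r := gegenbauerRatio p x
  set s := gegenbauerRatio (p + 1) x
  set w := x ^ 2 / ((2 * p + 3) * (2 * p + 5)) with hw
  set w' := x ^ 2 / ((2 * (p + 1) + 3) * (2 * (p + 1) + 5)) with hw'
  set m := x ^ 2 / (2 * p + 3) ^ 2 with hm
  have hw0 : 0 ≤ w := by positivity
  have hw0' : 0 ≤ w' := by positivity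
  have hwm : w ≤ m := by rw [hw, hm, sq (2 * p + 3)]; gcongr; linarith
  have hwm' : w' ≤ m := by rw [hw', hm, sq (2 * p + 3)]; gcongr <;> linarith
  have hrs : 1 - w' - w ≤ r * s := by
    nlinarith [mul_nonneg h0.le (sub_nonneg.2 hs2), mul_nonneg hw0' (sub_nonneg.2 hr1)]
  have hww : w * (w + w') ≤ m * (m + m) := by gcongr
  have hmm : 2 * x ^ 4 / (2 * p + 3) ^ 4 = m * (m + m) := by
    rw [hm]
    field_simp
    ring
  rw [hmm]
  nlinarith [mul_le_mul_of_nonneg_left hrs hw0]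

theorem abs_log_gegenbauerLaplace_sub_le {p : ℝ} (hp : 0 ≤ p) (x : ℝ) :
    |Real.log (gegenbauerLaplace p x / gegenbauerLaplace p 0) -
      (x ^ 2 / (2 * (2 * p + 3)) - x ^ 4 / (4 * (2 * p + 3) ^ 2 * (2 * p + 5)))| ≤
      2 * x ^ 6 / (2 * p + 3) ^ 5 := by
  have hJ := fun y => gegenbauerLaplace_pos hp y
  let G : ℝ → ℝ := fun y => Real.log (gegenbauerLaplace p y) -
    (y ^ 2 / (2 * (2 * p + 3)) - y ^ 4 / (4 * (2 * p + 3) ^ 2 * (2 * p + 5)))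
  have hG (y : ℝ) : HasDerivAt G (y / (2 * p + 3) *
      (gegenbauerRatio p y - (1 - y ^ 2 / ((2 * p + 3) * (2 * p + 5))))) y := by
    refine (((hasDerivAt_gegenbauerLaplace hp y).log (hJ y).ne').sub
      (((hasDerivAt_pow 2 y).div_const _).sub ((hasDerivAt_pow 4 y).div_const _))).congr_deriv ?_
    have := (hJ y).ne'
    unfold gegenbauerRatio
    norm_num
    field_simp
  have hbound (y : ℝ) (hy : y ∈ Set.Icc (-|x|) |x|) :
      ‖y / (2 * p + 3) * (gegenbauerRatio p y - (1 - y ^ 2 / ((2 * p + 3) * (2 * p + 5))))‖ ≤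
        |x| / (2 * p + 3) * (2 * |x| ^ 4 / (2 * p + 3) ^ 4) := by
    obtain ⟨h1, h2⟩ := gegenbauerRatio_bounds hp y
    have hy' : |y| ≤ |x| := abs_le.2 hy
    rw [norm_mul, Real.norm_of_nonneg h1, norm_div, Real.norm_eq_abs,
      Real.norm_of_nonneg (by positivity)]
    refine mul_le_mul (by gcongr) (h2.trans ?_) h1 (by positivity)
    rw [← Even.pow_abs (n := 4) (by decide) y]
    gcongr
  have h := (convex_Icc (-|x|) |x|).norm_image_sub_le_of_norm_hasDerivWithin_le
    (fun y _ => (hG y).hasDerivWithinAt) hbound (x := 0) (y := x) (by simp)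
    ⟨neg_abs_le x, le_abs_self x⟩
  rw [Real.log_div (hJ x).ne' (hJ 0).ne']
  convert h using 1
  · simp only [G, Real.norm_eq_abs]
    congr 1
    norm_num
    ring
  · rw [sub_zero, Real.norm_eq_abs, ← Even.pow_abs (n := 6) (by decide) x]
    field_simp

theorem Hfun_eq_gegenbauerLaplace_div (ν x : ℝ) :
    Hfun ν x = gegenbauerLaplace (ν - 1 / 2) x / gegenbauerLaplace (ν - 1 / 2) 0 := by
  simp [Hfun, gegenbauerLaplace]

/-- A second-order expansion of `log H_ν`, uniform in both variables. -/
theorem abs_log_Hfun_sub_le {ν : ℝ} (hν : 1 / 2 ≤ ν) (x : ℝ) :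
    |Real.log (Hfun ν x) -
      (x ^ 2 / (4 * (ν + 1)) - x ^ 4 / (32 * (ν + 1) ^ 2 * (ν + 2)))| ≤ x ^ 6 / ν ^ 5 := by
  have h := abs_log_gegenbauerLaplace_sub_le (show 0 ≤ ν - 1 / 2 by linarith) x
  rw [← Hfun_eq_gegenbauerLaplace_div, show 2 * (ν - 1 / 2) + 3 = 2 * (ν + 1) by ring,
    show 2 * (ν - 1 / 2) + 5 = 2 * (ν + 2) by ring] at h
  have hpoly : x ^ 2 / (2 * (2 * (ν + 1))) - x ^ 4 / (4 * (2 * (ν + 1)) ^ 2 * (2 * (ν + 2))) =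
      x ^ 2 / (4 * (ν + 1)) - x ^ 4 / (32 * (ν + 1) ^ 2 * (ν + 2)) := by
    congr 2 <;> ring
  rw [hpoly] at h
  refine h.trans ?_
  have hν0 : 0 < ν := by linarith
  have h6 : 0 ≤ x ^ 6 := Even.pow_nonneg (by decide) x
  calc 2 * x ^ 6 / (2 * (ν + 1)) ^ 5 = x ^ 6 / (16 * (ν + 1) ^ 5) := by field_simp; ring
    _ ≤ x ^ 6 / ν ^ 5 := by
      gcongr
      calc ν ^ 5 ≤ (ν + 1) ^ 5 := by gcongr; linarith
        _ ≤ 16 * (ν + 1) ^ 5 := by linarith [show 0 ≤ (ν + 1) ^ 5 by positivity]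

theorem inv_cube_sub_bounds {ν : ℝ} (hν : 0 < ν) :
    0 ≤ 1 / ν ^ 3 - 1 / ((ν + 1) ^ 2 * (ν + 2)) ∧
      1 / ν ^ 3 - 1 / ((ν + 1) ^ 2 * (ν + 2)) ≤ 4 / ν ^ 4 := by
  have h : 1 / ν ^ 3 - 1 / ((ν + 1) ^ 2 * (ν + 2)) =
      (4 * ν ^ 2 + 5 * ν + 2) / (ν ^ 3 * ((ν + 1) ^ 2 * (ν + 2))) := by
    field_simp
    ring
  rw [h]
  refine ⟨by positivity, ?_⟩
  rw [div_le_div_iff₀ (by positivity) (by positivity)]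
  have : 0 ≤ ν ^ 3 * (11 * ν ^ 2 + 18 * ν + 8) := by positivity
  linarith

/-- Pointwise bound for the error in the rescaled expansion. -/
theorem abs_rescaled_log_Hfun_sub_le {ν a b ξ t K : ℝ} (hν : 1 / 2 ≤ ν) (ha : 0 < a)
    (ht : |t| ≤ K) :
    |a ^ 2 * Real.log (Hfun ν (b * t / a)) -
        (b ^ 2 * t ^ 2 / (4 * ν) - b ^ 4 * t ^ 4 / (32 * ν ^ 3 * a ^ 2) - ξ ^ 2 * t ^ 2 / 4)| ≤
      K ^ 6 * (b ^ 6 / (a ^ 4 * ν ^ 5)) + K ^ 2 / 4 * |ξ ^ 2 - b ^ 2 / (ν * (ν + 1))| +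
        K ^ 4 / 8 * (b ^ 4 / (a ^ 2 * ν ^ 4)) := by
  have hν0 : 0 < ν := by linarith
  have h2 : t ^ 2 ≤ K ^ 2 := by rw [← sq_abs]; gcongr
  have h4 : t ^ 4 ≤ K ^ 4 := by rw [← Even.pow_abs (n := 4) (by decide)]; gcongr
  have h6 : t ^ 6 ≤ K ^ 6 := by rw [← Even.pow_abs (n := 6) (by decide)]; gcongr
  have hb4 : 0 ≤ b ^ 4 := Even.pow_nonneg (by decide) b
  have hb6 : 0 ≤ b ^ 6 := Even.pow_nonneg (by decide) b
  have ht4 : 0 ≤ t ^ 4 := Even.pow_nonneg (by decide) t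
  have hlog := abs_log_Hfun_sub_le hν (b * t / a)
  set L := Real.log (Hfun ν (b * t / a))
  set D := L - ((b * t / a) ^ 2 / (4 * (ν + 1)) -
    (b * t / a) ^ 4 / (32 * (ν + 1) ^ 2 * (ν + 2))) with hD
  obtain ⟨hi0, hi1⟩ := inv_cube_sub_bounds hν0
  set c := 1 / ν ^ 3 - 1 / ((ν + 1) ^ 2 * (ν + 2)) with hc
  have key : a ^ 2 * L - (b ^ 2 * t ^ 2 / (4 * ν) - b ^ 4 * t ^ 4 / (32 * ν ^ 3 * a ^ 2) -
      ξ ^ 2 * t ^ 2 / 4) = a ^ 2 * D + t ^ 2 / 4 * (ξ ^ 2 - b ^ 2 / (ν * (ν + 1))) +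
        t ^ 4 / 32 * (b ^ 4 / a ^ 2 * c) := by
    rw [hD, hc]
    field_simp
    ring
  rw [key]
  refine (abs_add_three _ _ _).trans (add_le_add_three ?_ ?_ ?_)
  · rw [abs_mul, abs_of_pos (by positivity : 0 < a ^ 2)]
    calc a ^ 2 * |D| ≤ a ^ 2 * ((b * t / a) ^ 6 / ν ^ 5) := by gcongr
      _ = t ^ 6 * (b ^ 6 / (a ^ 4 * ν ^ 5)) := by field_simp
      _ ≤ _ := by gcongr
  · rw [abs_mul, abs_of_nonneg (by positivity : 0 ≤ t ^ 2 / 4)]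
    gcongr
  · rw [abs_of_nonneg (by positivity)]
    calc t ^ 4 / 32 * (b ^ 4 / a ^ 2 * c) ≤ K ^ 4 / 32 * (b ^ 4 / a ^ 2 * (4 / ν ^ 4)) := by
          gcongr
      _ = _ := by field_simp; ring

theorem log_Hfun_expansion (ν a b : ℕ → ℝ)
    (hν0 : ∀ n, 0 < ν n) (hν : Tendsto ν atTop atTop)
    (ha0 : ∀ n, 0 < a n) (hb0 : ∀ n, 0 < b n)
    (hliminf : ∃ δ : ℝ, 0 < δ ∧ ∀ᶠ n in atTop, δ ≤ a n)
    (ξ : ℝ) (hξ : 0 ≤ ξ) (hbν : Tendsto (fun n => b n / ν n) atTop (nhds ξ))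
    (hsmall : Tendsto (fun n => (b n) ^ 6 / ((a n) ^ 4 * (ν n) ^ 5)) atTop (nhds 0)) :
    ∀ K > (0 : ℝ), ∀ ε > (0 : ℝ), ∀ᶠ n in atTop, ∀ t ∈ Set.Icc (-K) K,
      |(a n) ^ 2 * Real.log (Hfun (ν n) (b n * t / a n)) -
          ((b n) ^ 2 * t ^ 2 / (4 * ν n) -
            (b n) ^ 4 * t ^ 4 / (32 * (ν n) ^ 3 * (a n) ^ 2) -
            ξ ^ 2 * t ^ 2 / 4)| < ε := by
  intro K hK ε hε
  have hνinv : Tendsto (fun n => (ν n)⁻¹) atTop (nhds 0) := tendsto_inv_atTop_zero.comp hν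
  have hξ2 : Tendsto (fun n => (b n) ^ 2 / (ν n * (ν n + 1))) atTop (nhds (ξ ^ 2)) := by
    have h := (hbν.pow 2).div (hνinv.const_add 1) (by norm_num)
    rw [add_zero, div_one] at h
    refine h.congr fun n => ?_
    have := hν0 n
    simp only [Pi.div_apply]
    field_simp
  have hb4 : Tendsto (fun n => (b n) ^ 4 / ((a n) ^ 2 * (ν n) ^ 4)) atTop (nhds 0) := by
    have h := (hsmall.mul ((hbν.pow 2).mul hνinv)).sqrt
    rw [zero_mul, Real.sqrt_zero] at h
    refine h.congr fun n => ?_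
    have h1 := hν0 n
    have h2 := ha0 n
    rw [Real.sqrt_eq_iff_mul_self_eq (by have := hb0 n; positivity)
      (by have := hb0 n; positivity)]
    field_simp
  have herr : Tendsto (fun n => K ^ 6 * ((b n) ^ 6 / ((a n) ^ 4 * (ν n) ^ 5)) +
      K ^ 2 / 4 * |ξ ^ 2 - (b n) ^ 2 / (ν n * (ν n + 1))| +
      K ^ 4 / 8 * ((b n) ^ 4 / ((a n) ^ 2 * (ν n) ^ 4))) atTop (nhds 0) := by
    have h := ((hsmall.const_mul (K ^ 6)).add
      ((hξ2.const_sub (ξ ^ 2)).abs.const_mul (K ^ 2 / 4))).add (hb4.const_mul (K ^ 4 / 8))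
    simpa using h
  filter_upwards [herr.eventually_lt_const hε, hν.eventually_ge_atTop (1 / 2)] with n hn hνn t ht
  exact (abs_rescaled_log_Hfun_sub_le hνn (ha0 n) (abs_le.2 ht)).trans_lt hn
end

section
/- Let (p_n) be a sequence of integers with p_n ≥ 2 for all n, p_n → ∞, and p_n = o(n²). Let ξ > 0 and s ∈ ℝ, and set κ_n := p_n ξ/√n and κ_{n,s} := p_n (ξ + s/√p_n)/√n, assuming ξ + s/√p_n > 0 for all n. Then n [ log H_{p_n/2 − 1}(κ_n) − log H_{p_n/2 − 1}(κ_{n,s}) ] + s ξ √p_n → −s²/2 as n → ∞. -/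
open MeasureTheory intervalIntegral Filter

/-- `tiltedMoment a x k = ∫_{-1}^1 t^k (1-t²)^a e^{xt} dt`. -/
noncomputable def tiltedMoment (a x : ℝ) (k : ℕ) : ℝ :=
  ∫ t in (-1 : ℝ)..1, t ^ k * ((1 - t ^ 2) ^ a * Real.exp (x * t))

lemma continuous_weight {a : ℝ} (ha : 0 ≤ a) : Continuous fun t : ℝ => (1 - t ^ 2) ^ a :=
  Continuous.rpow_const (by fun_prop) fun _ => Or.inr ha

lemma continuous_tilted {a : ℝ} (ha : 0 ≤ a) (x : ℝ) (k : ℕ) :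
    Continuous fun t : ℝ => t ^ k * ((1 - t ^ 2) ^ a * Real.exp (x * t)) := by
  have := continuous_weight ha
  fun_prop

lemma tiltedMoment_zero_pos {a : ℝ} (ha : 0 ≤ a) (x : ℝ) : 0 < tiltedMoment a x 0 := by
  refine intervalIntegral_pos_of_pos_on ((continuous_tilted ha x 0).intervalIntegrable _ _)
    (fun t ht => ?_) (by norm_num)
  have : 0 < 1 - t ^ 2 := by nlinarith [ht.1, ht.2]
  positivity

lemma hasDerivAt_tiltedMoment_zero {a : ℝ} (ha : 0 ≤ a) (x : ℝ) :
    HasDerivAt (fun y => tiltedMoment a y 0) (tiltedMoment a x 1) x := by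
  have hw := continuous_weight ha
  refine (hasDerivAt_integral_of_dominated_loc_of_deriv_le (μ := volume)
    (F := fun y t => t ^ 0 * ((1 - t ^ 2) ^ a * Real.exp (y * t)))
    (F' := fun y t => t ^ 1 * ((1 - t ^ 2) ^ a * Real.exp (y * t)))
    (bound := fun _ => Real.exp (|x| + 1)) (Metric.ball_mem_nhds x one_pos)
    (Eventually.of_forall fun y => (continuous_tilted ha y 0).aestronglyMeasurable)
    ((continuous_tilted ha x 0).intervalIntegrable _ _)
    (continuous_tilted ha x 1).aestronglyMeasurable
    (Eventually.of_forall fun t ht y hy => ?_) (by simp)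
    (Eventually.of_forall fun t ht y hy => ?_)).2
  · rw [Set.uIoc_of_le (by norm_num)] at ht
    have h1 : |t| ≤ 1 := abs_le.2 ⟨ht.1.le, ht.2⟩
    have h0 : 0 ≤ 1 - t ^ 2 := by nlinarith [ht.1, ht.2]
    have h2 : (1 - t ^ 2) ^ a ≤ 1 := Real.rpow_le_one h0 (by nlinarith) ha
    have hy' : |y| ≤ |x| + 1 := by
      rw [Metric.mem_ball, Real.dist_eq] at hy
      linarith [abs_sub_abs_le_abs_sub y x]
    have h3 : y * t ≤ |x| + 1 := by
      calc y * t ≤ |y * t| := le_abs_self _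
        _ = |y| * |t| := abs_mul _ _
        _ ≤ |y| * 1 := by gcongr
        _ ≤ _ := by linarith
    have h4 : 0 ≤ (1 - t ^ 2) ^ a := Real.rpow_nonneg h0 a
    rw [Real.norm_eq_abs, pow_one, abs_mul, abs_mul, Real.abs_exp, abs_of_nonneg h4]
    calc |t| * ((1 - t ^ 2) ^ a * Real.exp (y * t))
        ≤ 1 * (1 * Real.exp (|x| + 1)) := by gcongr
      _ = _ := by ring
  · have := (((hasDerivAt_id y).mul_const t).exp.const_mul ((1 - t ^ 2) ^ a)).const_mul (t ^ 0)
    refine this.congr_deriv ?_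
    simp only [id]
    ring

/-- Integration by parts of `q(t) (1-t²)^{a+1} e^{xt}` for a differentiable factor `q`. -/
lemma integral_tilted_by_parts {a : ℝ} (ha : 0 ≤ a) (x : ℝ) {q q' : ℝ → ℝ}
    (hq : ∀ t, HasDerivAt q (q' t) t) (hq' : Continuous q') :
    ∫ t in (-1 : ℝ)..1, (q' t * (1 - t ^ 2) + q t * (x * (1 - t ^ 2) - 2 * (a + 1) * t)) *
      ((1 - t ^ 2) ^ a * Real.exp (x * t)) = 0 := by
  have hw := continuous_weight ha
  have hqc : Continuous q := continuous_iff_continuousAt.2 fun t => (hq t).continuousAt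
  rw [integral_eq_sub_of_hasDerivAt
    (f := fun t => q t * ((1 - t ^ 2) ^ (a + 1) * Real.exp (x * t)))]
  · simp [Real.zero_rpow (by linarith : a + 1 ≠ 0)]
  · intro t ht
    rw [Set.uIcc_of_le (by norm_num)] at ht
    have h0 : 0 ≤ 1 - t ^ 2 := by nlinarith [ht.1, ht.2]
    have h1 : HasDerivAt (fun t : ℝ => 1 - t ^ 2) (-(2 * t)) t := by
      simpa using (hasDerivAt_pow 2 t).const_sub 1
    have h2 := h1.rpow_const (p := a + 1) (Or.inr (by linarith))
    have h3 := ((hasDerivAt_id t).const_mul x).exp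
    refine ((hq t).mul (h2.mul h3)).congr_deriv ?_
    simp only [Pi.mul_apply, id, add_sub_cancel_right,
      Real.rpow_add_one' h0 (by linarith : a + 1 ≠ 0)]
    ring
  · exact Continuous.intervalIntegrable (by fun_prop) _ _

lemma tiltedMoment_one {a : ℝ} (ha : 0 ≤ a) (x : ℝ) :
    2 * (a + 1) * tiltedMoment a x 1 = x * (tiltedMoment a x 0 - tiltedMoment a x 2) := by
  have h := integral_tilted_by_parts ha x (q := fun _ => 1) (q' := fun _ => 0)
    (fun t => hasDerivAt_const t 1) continuous_const
  have hi := fun k => (continuous_tilted ha x k).intervalIntegrable (μ := volume) (-1) 1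
  have e : ∀ t : ℝ, (0 * (1 - t ^ 2) + 1 * (x * (1 - t ^ 2) - 2 * (a + 1) * t)) *
      ((1 - t ^ 2) ^ a * Real.exp (x * t)) =
      x * (t ^ 0 * ((1 - t ^ 2) ^ a * Real.exp (x * t)) -
        t ^ 2 * ((1 - t ^ 2) ^ a * Real.exp (x * t))) -
      2 * (a + 1) * (t ^ 1 * ((1 - t ^ 2) ^ a * Real.exp (x * t))) := fun t => by ring
  simp only [e] at h
  rw [integral_sub (((hi 0).sub (hi 2)).const_mul _) ((hi 1).const_mul _), intervalIntegral.integral_const_mul,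
    intervalIntegral.integral_const_mul, integral_sub (hi 0) (hi 2)] at h
  simp only [tiltedMoment]
  linarith

lemma tiltedMoment_two {a : ℝ} (ha : 0 ≤ a) (x : ℝ) :
    (2 * a + 3) * tiltedMoment a x 2 =
      tiltedMoment a x 0 + x * (tiltedMoment a x 1 - tiltedMoment a x 3) := by
  have h := integral_tilted_by_parts ha x (q := fun t => t) (q' := fun _ => 1)
    (fun t => hasDerivAt_id t) continuous_const
  have hi := fun k => (continuous_tilted ha x k).intervalIntegrable (μ := volume) (-1) 1
  have e : ∀ t : ℝ, (1 * (1 - t ^ 2) + t * (x * (1 - t ^ 2) - 2 * (a + 1) * t)) *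
      ((1 - t ^ 2) ^ a * Real.exp (x * t)) =
      t ^ 0 * ((1 - t ^ 2) ^ a * Real.exp (x * t)) +
      x * (t ^ 1 * ((1 - t ^ 2) ^ a * Real.exp (x * t)) -
        t ^ 3 * ((1 - t ^ 2) ^ a * Real.exp (x * t))) -
      (2 * a + 3) * (t ^ 2 * ((1 - t ^ 2) ^ a * Real.exp (x * t))) := fun t => by ring
  simp only [e] at h
  rw [integral_sub ((hi 0).add (((hi 1).sub (hi 3)).const_mul _)) ((hi 2).const_mul _),
    integral_add (hi 0) (((hi 1).sub (hi 3)).const_mul _), intervalIntegral.integral_const_mul,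
    intervalIntegral.integral_const_mul, integral_sub (hi 1) (hi 3)] at h
  simp only [tiltedMoment]
  linarith

lemma tiltedMoment_one_sub_three {a : ℝ} (ha : 0 ≤ a) (x : ℝ) :
    2 * (a + 2) * (tiltedMoment a x 1 - tiltedMoment a x 3) =
      x * ∫ t in (-1 : ℝ)..1, (1 - t ^ 2) ^ 2 * ((1 - t ^ 2) ^ a * Real.exp (x * t)) := by
  have hw := continuous_weight ha
  have h := integral_tilted_by_parts ha x (q := fun t => 1 - t ^ 2) (q' := fun t => -(2 * t))
    (fun t => by simpa using (hasDerivAt_pow 2 t).const_sub 1) (by fun_prop)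
  have hi := fun k => (continuous_tilted ha x k).intervalIntegrable (μ := volume) (-1) 1
  have hs : IntervalIntegrable
      (fun t : ℝ => (1 - t ^ 2) ^ 2 * ((1 - t ^ 2) ^ a * Real.exp (x * t))) volume (-1) 1 :=
    Continuous.intervalIntegrable (by fun_prop) _ _
  have e : ∀ t : ℝ,
      (-(2 * t) * (1 - t ^ 2) + (1 - t ^ 2) * (x * (1 - t ^ 2) - 2 * (a + 1) * t)) *
      ((1 - t ^ 2) ^ a * Real.exp (x * t)) =
      x * ((1 - t ^ 2) ^ 2 * ((1 - t ^ 2) ^ a * Real.exp (x * t))) -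
      2 * (a + 2) * (t ^ 1 * ((1 - t ^ 2) ^ a * Real.exp (x * t)) -
        t ^ 3 * ((1 - t ^ 2) ^ a * Real.exp (x * t))) := fun t => by ring
  simp only [e] at h
  rw [integral_sub (hs.const_mul _) (((hi 1).sub (hi 3)).const_mul _), intervalIntegral.integral_const_mul,
    intervalIntegral.integral_const_mul, integral_sub (hi 1) (hi 3)] at h
  simp only [tiltedMoment]
  linarith

lemma integral_sq_tilted_mem_Icc {a : ℝ} (ha : 0 ≤ a) (x : ℝ) :
    ∫ t in (-1 : ℝ)..1, (1 - t ^ 2) ^ 2 * ((1 - t ^ 2) ^ a * Real.exp (x * t)) ∈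
      Set.Icc 0 (tiltedMoment a x 0) := by
  have hw := continuous_weight ha
  have h0 : ∀ t ∈ Set.Icc (-1 : ℝ) 1, 0 ≤ 1 - t ^ 2 := fun t ht => by nlinarith [ht.1, ht.2]
  constructor
  · refine integral_nonneg (by norm_num) fun t ht => ?_
    have := h0 t ht
    positivity
  · refine integral_mono_on (by norm_num) (Continuous.intervalIntegrable (by fun_prop) _ _)
      ((continuous_tilted ha x 0).intervalIntegrable _ _) fun t ht => ?_
    have := h0 t ht
    rw [pow_zero]
    gcongr
    nlinarith

/-- The mean of the tilted density differs from `x / (2a+3)` by a cubic error. -/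
lemma abs_tiltedMoment_ratio_sub_le {a x : ℝ} (ha : 0 ≤ a) (hx : 0 ≤ x) :
    |tiltedMoment a x 1 / tiltedMoment a x 0 - x / (2 * a + 3)| ≤
      2 * x ^ 3 / (2 * a + 3) ^ 3 := by
  have hM := tiltedMoment_zero_pos ha x
  have h1 := tiltedMoment_one ha x
  have h2 := tiltedMoment_two ha x
  have h3 := tiltedMoment_one_sub_three ha x
  obtain ⟨hJ0, hJ1⟩ := integral_sq_tilted_mem_Icc ha x
  set J := ∫ t in (-1 : ℝ)..1, (1 - t ^ 2) ^ 2 * ((1 - t ^ 2) ^ a * Real.exp (x * t))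
  set M := tiltedMoment a x 0
  set D := tiltedMoment a x 1 - tiltedMoment a x 3
  have hD : D = x * J / (2 * (a + 2)) := by field_simp; linarith
  have hM2 : tiltedMoment a x 2 = (M + x * D) / (2 * a + 3) := by field_simp; linarith
  have hM1 : tiltedMoment a x 1 = x * (M - tiltedMoment a x 2) / (2 * (a + 1)) := by
    field_simp; linarith
  have key : tiltedMoment a x 1 / M - x / (2 * a + 3) =
      -(x ^ 3 / ((2 * a + 2) * (2 * a + 3) * (2 * a + 4)) * (J / M)) := by
    rw [hM1, hM2, hD]
    field_simp
    ring
  have hr : J / M ≤ 1 := (div_le_one hM).2 hJ1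
  rw [key, abs_neg, abs_of_nonneg (by positivity)]
  calc x ^ 3 / ((2 * a + 2) * (2 * a + 3) * (2 * a + 4)) * (J / M)
      ≤ x ^ 3 / ((2 * a + 2) * (2 * a + 3) * (2 * a + 4)) * 1 := by gcongr
    _ ≤ _ := by
      rw [mul_one, div_le_div_iff₀ (by positivity) (by positivity)]
      have : (2 * a + 3) ^ 3 ≤ 2 * ((2 * a + 2) * (2 * a + 3) * (2 * a + 4)) := by
        have : 0 ≤ a ^ 3 := by positivity
        nlinarith
      nlinarith [pow_nonneg hx 3]

lemma Hfun_eq_tiltedMoment (ν x : ℝ) :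
    Hfun ν x = tiltedMoment (ν - 1 / 2) x 0 / tiltedMoment (ν - 1 / 2) 0 0 := by
  simp [Hfun, tiltedMoment]

lemma hasDerivAt_log_Hfun {ν : ℝ} (hν : 1 / 2 ≤ ν) (x : ℝ) :
    HasDerivAt (fun y => Real.log (Hfun ν y))
      (tiltedMoment (ν - 1 / 2) x 1 / tiltedMoment (ν - 1 / 2) x 0) x := by
  have ha : 0 ≤ ν - 1 / 2 := by linarith
  have hM := fun y => tiltedMoment_zero_pos ha y
  have e : (fun y => Real.log (Hfun ν y)) = fun y =>
      Real.log (tiltedMoment (ν - 1 / 2) y 0) - Real.log (tiltedMoment (ν - 1 / 2) 0 0) := by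
    funext y
    rw [Hfun_eq_tiltedMoment, Real.log_div (hM y).ne' (hM 0).ne']
  rw [e]
  exact ((hasDerivAt_tiltedMoment_zero ha x).log (hM x).ne').sub_const _

/-- `log H_ν` is quadratic up to a quartic error, in Lipschitz form. -/
lemma abs_log_Hfun_sub_sub_le {ν B x y : ℝ} (hν : 1 / 2 ≤ ν) (hx : x ∈ Set.Icc 0 B)
    (hy : y ∈ Set.Icc 0 B) :
    |(Real.log (Hfun ν x) - Real.log (Hfun ν y)) - (x ^ 2 - y ^ 2) / (2 * (2 * ν + 2))| ≤
      2 * B ^ 3 / (2 * ν + 2) ^ 3 * |x - y| := by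
  have hd : ∀ z, HasDerivAt (fun z => Real.log (Hfun ν z) - z ^ 2 / (2 * (2 * ν + 2)))
      (tiltedMoment (ν - 1 / 2) z 1 / tiltedMoment (ν - 1 / 2) z 0 - z / (2 * ν + 2)) z := by
    intro z
    refine ((hasDerivAt_log_Hfun hν z).sub
      ((hasDerivAt_pow 2 z).div_const (2 * (2 * ν + 2)))).congr_deriv ?_
    have : 2 * ν + 2 ≠ 0 := by linarith
    congr 1
    push_cast
    field_simp
  have hb : ∀ z ∈ Set.Icc 0 B,
      ‖tiltedMoment (ν - 1 / 2) z 1 / tiltedMoment (ν - 1 / 2) z 0 - z / (2 * ν + 2)‖ ≤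
        2 * B ^ 3 / (2 * ν + 2) ^ 3 := by
    intro z hz
    have h := abs_tiltedMoment_ratio_sub_le (a := ν - 1 / 2) (by linarith) hz.1
    rw [show 2 * (ν - 1 / 2) + 3 = 2 * ν + 2 by ring] at h
    refine h.trans ?_
    have := hz.1
    have := hz.2
    have : 0 < 2 * ν + 2 := by linarith
    gcongr
  have := (convex_Icc 0 B).norm_image_sub_le_of_norm_hasDerivWithin_le
    (fun z _ => (hd z).hasDerivWithinAt) hb hy hx
  rw [Real.norm_eq_abs, Real.norm_eq_abs] at this
  convert this using 2
  ring

theorem log_Hfun_concentration_shift (p : ℕ → ℕ) (hp2 : ∀ n, 2 ≤ p n)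
    (hp : Tendsto (fun n => (p n : ℝ)) atTop atTop)
    (hpo : Tendsto (fun n => (p n : ℝ) / (n : ℝ) ^ 2) atTop (nhds 0))
    (ξ : ℝ) (hξ : 0 < ξ) (s : ℝ)
    (hpos : ∀ n, 0 < ξ + s / Real.sqrt (p n)) :
    Tendsto
      (fun n : ℕ =>
        (n : ℝ) *
            (Real.log (Hfun ((p n : ℝ) / 2 - 1) ((p n : ℝ) * ξ / Real.sqrt n)) -
              Real.log (Hfun ((p n : ℝ) / 2 - 1)
                ((p n : ℝ) * (ξ + s / Real.sqrt (p n)) / Real.sqrt n))) +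
          s * ξ * Real.sqrt (p n))
      atTop (nhds (-(s ^ 2) / 2)) := by
  have hlim : Tendsto (fun n : ℕ => 2 * (ξ + |s|) ^ 3 * |s| * Real.sqrt (p n / (n : ℝ) ^ 2))
      atTop (nhds 0) := by
    simpa using (hpo.sqrt).const_mul (2 * (ξ + |s|) ^ 3 * |s|)
  rw [tendsto_iff_norm_sub_tendsto_zero]
  refine squeeze_zero' (Eventually.of_forall fun _ => norm_nonneg _) ?_ hlim
  filter_upwards [hp.eventually_ge_atTop 3, eventually_ge_atTop 1] with n hpn hn
  have hn0 : (0 : ℝ) < n := by exact_mod_cast hn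
  have hP : (0 : ℝ) < p n := by linarith
  have hsp := hpos n
  rw [Real.sqrt_div hP.le, Real.sqrt_sq hn0.le]
  set r := Real.sqrt (p n) with hr
  set m := Real.sqrt n with hm
  have hr0 : 0 < r := Real.sqrt_pos.2 hP
  have hr1 : 1 ≤ r := Real.one_le_sqrt.2 (by linarith)
  have hm0 : 0 < m := Real.sqrt_pos.2 hn0
  have hrp : (p n : ℝ) = r ^ 2 := (Real.sq_sqrt hP.le).symm
  have hmn : (n : ℝ) = m ^ 2 := (Real.sq_sqrt hn0.le).symm
  have hsr : s / r ≤ |s| := (div_le_div_of_nonneg_right (le_abs_self s) hr0.le).trans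
    (div_le_self (abs_nonneg s) hr1)
  have h := abs_log_Hfun_sub_sub_le (ν := (p n : ℝ) / 2 - 1) (B := p n * (ξ + |s|) / m)
    (x := p n * ξ / m) (y := p n * (ξ + s / r) / m) (by linarith)
    ⟨by positivity, by gcongr; linarith [abs_nonneg s]⟩
    ⟨by positivity, by gcongr⟩
  set L := Real.log (Hfun ((p n : ℝ) / 2 - 1) (p n * ξ / m)) -
    Real.log (Hfun ((p n : ℝ) / 2 - 1) (p n * (ξ + s / r) / m))
  rw [show 2 * ((p n : ℝ) / 2 - 1) + 2 = p n by ring] at h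
  have hxy : |(p n : ℝ) * ξ / m - p n * (ξ + s / r) / m| = r * |s| / m := by
    rw [hrp, show r ^ 2 * ξ / m - r ^ 2 * (ξ + s / r) / m = -(r / m * s) by field_simp; ring,
      abs_neg, abs_mul, abs_of_pos (by positivity)]
    ring
  have hmain : (n : ℝ) * L + s * ξ * r - -(s ^ 2) / 2 = n * (L -
      ((p n * ξ / m) ^ 2 - (p n * (ξ + s / r) / m) ^ 2) / (2 * p n)) := by
    rw [hrp, hmn]
    field_simp
    ring
  rw [hxy] at h
  rw [hmain, Real.norm_eq_abs, abs_mul, abs_of_pos hn0]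
  refine (mul_le_mul_of_nonneg_left h hn0.le).trans_eq ?_
  rw [hrp, hmn]
  field_simp
end
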